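/- Let n ≥ 2 and r be integers with 2^{n−1} − 1 ≤ r ≤ 2^n − 2, and set N = r + n. Then a double cover of ℙ^N branched along a very general complex hypersurface of even degree d ≥ 2^{n+1} + 2n − 2 having multiplicity d − 2 along a fixed (r−1)-dimensional linear subspace is not stably rational. -/

import Mathlib

noncomputable section
open MvPolynomial

/-- The rational function field `ℂ(t₁, …, t_d)`. -/
abbrev RatFF (d : ℕ) : Type := FractionRing (MvPolynomial (Fin d) ℂ)

/-- An affine ℂ-algebra `R` (a chart, or an affine cone, of a variety `V`) has stably
rational fraction field: `Frac(R)(y₁,…,y_m) ≅ ℂ(t₁,…,t_d)` for some `m`, `d`.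
If `R` is the coordinate ring of the affine cone over a projective variety `V`
(so that `Frac R = ℂ(V)(t)` is stably birational to `ℂ(V)`), this holds if and only if
`V` is stably rational, i.e. `V × ℙᵐ` is birational to a projective space for some `m`. -/
def IsStablyRationalSpec (R : Type*) [CommRing R] [Algebra ℂ R] : Prop :=
  ∃ m d : ℕ, Nonempty (FractionRing (MvPolynomial (Fin m) R) ≃ₐ[ℂ] RatFF d)

/-- The fraction field of the affine ℂ-algebra `R` embeds into a purely transcendental
extension of `ℂ`.  If `R` is the coordinate ring of the affine cone over a projective
variety `V`, this holds if and only if `V` is unirational. -/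
def IsUnirationalSpec (R : Type*) [CommRing R] [Algebra ℂ R] : Prop :=
  ∃ d : ℕ, Nonempty (FractionRing R →ₐ[ℂ] RatFF d)

/-- `Z` is an algebraic (Zariski closed) subset of a parameter space `V` with coordinates
`coords`: it is the common zero locus of a set of polynomial functions in the coordinates. -/
def IsAlgSubsetOn {V : Type*} (coords : Set (V → ℂ)) (Z : Set V) : Prop :=
  ∃ S : Set (V → ℂ),
    S ⊆ ↑(Algebra.adjoin ℂ coords) ∧ Z = {v | ∀ f ∈ S, f v = 0}

/-- `P` holds for a very general point of the parameter space `V`: it holds away from a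
countable union of proper algebraic subsets. -/
def VeryGenerallyOn {V : Type*} (coords : Set (V → ℂ)) (P : V → Prop) : Prop :=
  ∃ Z : ℕ → Set V,
    (∀ m, IsAlgSubsetOn coords (Z m) ∧ Z m ≠ Set.univ) ∧ ∀ v, (∀ m, v ∉ Z m) → P v

noncomputable section
open MvPolynomial

/-- Homogeneous coordinate ring `ℂ[x₀,…,xₙ, y₀,…,y_{r-1}]` of `ℙᴺ` with `N = n + r`;
the fixed `(r-1)`-plane is `P = {x₀ = ⋯ = xₙ = 0}`. -/
abbrev DCAmb (n r : ℕ) := MvPolynomial (Fin (n+1) ⊕ Fin r) ℂ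

/-- The linear system of hypersurfaces `D = {F = 0} ⊂ ℙᴺ` (`N = n + r`) of degree `d`
with multiplicity at least `d - 2` along the `(r-1)`-plane `P = {x = 0}`. -/
def BranchSpace (n r d : ℕ) : Type :=
  {F : DCAmb n r // ∀ m : (Fin (n+1) ⊕ Fin r) →₀ ℕ, coeff m F ≠ 0 →
    (∑ i, m (Sum.inl i)) + (∑ j, m (Sum.inr j)) = d ∧ d - 2 ≤ ∑ i, m (Sum.inl i)}

/-- The coefficients, as coordinates on this linear system. -/
def branchCoords (n r d : ℕ) : Set (BranchSpace n r d → ℂ) :=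
  {f | ∃ m : (Fin (n+1) ⊕ Fin r) →₀ ℕ, f = fun F => coeff m F.1}

/-- The coordinate ring `ℂ[x, y, s]/(s² - F)` of the affine cone over the double cover
`X → ℙᴺ` branched along `D = {F = 0}` (`s` has weight `d/2`); the corresponding affine
variety is stably birational to `X`. -/
def DoubleCoverConeRing {n r d : ℕ} (F : BranchSpace n r d) : Type :=
  MvPolynomial ((Fin (n+1) ⊕ Fin r) ⊕ Fin 1) ℂ ⧸
    Ideal.span {X (Sum.inr 0) ^ 2 - rename Sum.inl F.1}

instance {n r d : ℕ} (F : BranchSpace n r d) : CommRing (DoubleCoverConeRing F) :=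
  Ideal.Quotient.commRing _
instance {n r d : ℕ} (F : BranchSpace n r d) : Algebra ℂ (DoubleCoverConeRing F) :=
  Ideal.Quotient.algebra ℂ

end
end

/-!
The proof degenerates to characteristic two and obstructs stable rationality by a determinant of
logarithmic derivatives.

*Degeneration.* A very general `F` has algebraically independent coefficients, so `ℂ` has a
valuation ring `V` of residue characteristic two over which `F` reduces to a prescribed member of
the linear system. The one used is `∑_j c_j(x) y_j² + b(x) y_p`, where modulo squares `c_j` is the
product of the `x_l / x_0` over `l ∈ I_j`, the `I_j` being distinct nonempty subsets of
`{1, …, n}`. There are `r + 1 ≤ 2 ^ n - 1` of them, so such subsets exist.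

*Curves.* If the double cover is stably rational, a birational parametrisation restricted to a
line `u ↦ t + c u` gives, after clearing denominators, a polynomial curve `u ↦ (x(u), y(u))` over
the coordinate ring of the cone on which `F` is a square, whose value `x(0)` is proportional to the
generic point and whose top coefficient is proportional to a constant vector `κ ∈ ℂ ^ (n + 1)`.

*Invariant.* In characteristic two the derivations `b ∂/∂x_j + (∂F/∂x_j) ∂/∂y_p` kill the special
form, hence extend to the function field `L` of the reduced double cover, killing `s`. For
`x ∈ L ^ (n + 1)` consider the determinant of the logarithmic derivatives of the ratios `x_i / x_0`
along these derivations. It is nonzero at the generic point and zero at constant points.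

*Edges.* For a curve over `L` on which the special form is a square, this determinant is a
rational function of `u`. At a finite place either all `x_i` have the same valuation and the
determinant is visibly integral, or the equation `s² = F`, in which squares are constants for every
derivation, yields a linear relation with a unit coefficient among the logarithmic derivatives,
which again forces integrality. So the determinant is a polynomial in `u`; if it is nonzero at
`u = 0`, it does not vanish at infinity, and the end coefficient vector of the curve is again
nondegenerate.

*Newton polygon.* Over `V` the curve is cut along its Newton polygon into edges, each of which
reduces to a curve over `L`, and nondegeneracy travels along them from the coefficient of `u ^ 0`
to the top coefficient. The former is generic and the latter constant, a contradiction.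
-/

/-! ### Logarithmic derivatives -/

section LogarithmicDerivative

variable {E : Type*} [Field E]

/-- The logarithmic derivative `D x / x`, with value `0` at `x = 0`. -/
def dlog (D : Derivation ℤ E E) (x : E) : E := D x / x

theorem mul_dlog (D : Derivation ℤ E E) (x : E) : x * dlog D x = D x := by
  rcases eq_or_ne x 0 with rfl | hx
  · rw [zero_mul, map_zero]
  · exact mul_div_cancel₀ _ hx

theorem dlog_zpow_mul (D : Derivation ℤ E E) {p y : E} (hp : p ≠ 0) (hy : y ≠ 0) (k : ℤ) :
    dlog D (p ^ k * y) = k * dlog D p + dlog D y := by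
  have hpk : p ^ k ≠ 0 := zpow_ne_zero k hp
  rw [dlog, dlog, dlog, D.leibniz, D.leibniz_zpow]
  simp only [smul_eq_mul, zsmul_eq_mul]
  rw [zpow_sub_one₀ hp]
  field_simp
  ring

theorem deriv_prod_eq_mul_sum_dlog {ι : Type*} (D : Derivation ℤ E E) (z : ι → E) (s : Finset ι) :
    D (∏ i ∈ s, z i) = (∏ i ∈ s, z i) * ∑ i ∈ s, dlog D (z i) := by
  classical
  induction s using Finset.induction_on with
  | empty => simp
  | insert a s ha ih =>
    rw [Finset.prod_insert ha, Finset.sum_insert ha, D.leibniz, ih, ← mul_dlog D (z a)]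
    simp only [smul_eq_mul]
    ring

theorem deriv_sq_of_charTwo {R : Type*} [CommRing R] [CharP R 2] (D : Derivation ℤ R R) (b : R) :
    D (b ^ 2) = 0 := by
  rw [D.leibniz_pow, ← Nat.cast_smul_eq_nsmul R, CharP.cast_eq_zero, zero_smul]

/-- Squares are constants in characteristic two, so they do not contribute. -/
theorem deriv_prod_mul_sq [CharP E 2] {ι : Type*} (D : Derivation ℤ E E) (z : ι → E)
    (s : Finset ι) (b : E) :
    D ((∏ i ∈ s, z i) * b ^ 2) = (∏ i ∈ s, z i) * b ^ 2 * ∑ i ∈ s, dlog D (z i) := by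
  rw [D.leibniz, deriv_sq_of_charTwo, deriv_prod_eq_mul_sum_dlog]
  simp only [smul_eq_mul]
  ring

variable {ι : Type*}

/-- The matrix of logarithmic derivatives of the family `z` along the derivations `D`. -/
def dlogMatrix {κ : Type*} (D : κ → Derivation ℤ E E) (z : ι → E) : Matrix ι κ E :=
  Matrix.of fun i j => dlog (D j) (z i)

theorem map_dlogMatrix {κ K : Type*} [Field K] (φ : E →+* K) {D : κ → Derivation ℤ E E}
    {D' : κ → Derivation ℤ K K} (hD : ∀ j x, D' j (φ x) = φ (D j x)) (z : ι → E) :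
    dlogMatrix D' (fun i => φ (z i)) = (dlogMatrix D z).map φ := by
  ext i j
  simp only [dlogMatrix, dlog, Matrix.of_apply, Matrix.map_apply, hD, map_div₀]

variable [Fintype ι] [DecidableEq ι]

theorem det_dlogMatrix_sub_smul (D : ι → Derivation ℤ E E) (z c : ι → E) {j₀ : ι}
    (hc : c j₀ = 0) :
    (dlogMatrix (fun j => D j - c j • D j₀) z).det = (dlogMatrix D z).det := by
  rw [← Matrix.det_transpose, ← Matrix.det_transpose (dlogMatrix D z)]
  refine Matrix.det_eq_of_forall_row_eq_smul_add_const (-c) j₀ (by simp [hc]) fun j i => ?_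
  simp only [dlogMatrix, dlog, Matrix.transpose_apply, Matrix.of_apply, Derivation.sub_apply,
    Derivation.smul_apply, smul_eq_mul, Pi.neg_apply]
  ring

theorem mul_det_dlogMatrix_eq_det_updateRow {D : ι → Derivation ℤ E E} {z θ ρ : ι → E}
    (h : ∀ j, ∑ i, θ i * dlog (D j) (z i) = ρ j) (i₀ : ι) :
    θ i₀ * (dlogMatrix D z).det = ((dlogMatrix D z).updateRow i₀ ρ).det := by
  have hρ : ρ = ∑ i, θ i • dlogMatrix D z i := by
    ext j
    rw [← h j, Finset.sum_apply]
    rfl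
  rw [hρ, Matrix.det_updateRow_sum, smul_eq_mul]

end LogarithmicDerivative

/-! ### Determinants of logarithmic derivatives and valuations -/

section ValuationDeterminant

variable {E : Type*} [Field E] {Γ₀ : Type*} [LinearOrderedCommGroupWithZero Γ₀]
  {v : Valuation E Γ₀} {ι : Type*}

theorem val_dlog_le_one {D : Derivation ℤ E E} (hD : ∀ x, v (D x) ≤ v x) (x : E) :
    v (dlog D x) ≤ 1 := by
  rw [dlog, map_div₀]
  exact div_le_one_of_le₀ (hD x) zero_le

theorem val_dlog_le_one_of_val_eq_one {D : Derivation ℤ E E} (hD : ∀ x, v x ≤ 1 → v (D x) ≤ 1)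
    {x : E} (hx : v x = 1) : v (dlog D x) ≤ 1 := by
  rw [dlog, map_div₀, hx, div_one]
  exact hD x hx.le

section Det

variable [Fintype ι] [DecidableEq ι]

theorem val_det_le_one {M : Matrix ι ι E} (hM : ∀ i j, v (M i j) ≤ 1) : v M.det ≤ 1 := by
  rw [Matrix.det_apply]
  refine v.map_sum_le fun σ _ => ?_
  rw [Units.smul_def, zsmul_eq_mul, map_mul, map_prod]
  exact mul_le_one' (intCast_mem v.integer _) (Finset.prod_le_one' fun i _ => hM _ _)

theorem val_det_dlogMatrix_eq_of_val_eq_one {D : ι → Derivation ℤ E E} {z θ ρ : ι → E}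
    (h : ∀ j, ∑ i, θ i * dlog (D j) (z i) = ρ j) {i₀ : ι} (hθ : v (θ i₀) = 1) :
    v (dlogMatrix D z).det = v ((dlogMatrix D z).updateRow i₀ ρ).det := by
  rw [← mul_det_dlogMatrix_eq_det_updateRow h i₀, map_mul, hθ, one_mul]

theorem val_det_updateRow_le {M : Matrix ι ι E} (hM : ∀ i j, v (M i j) ≤ 1) (i₀ : ι)
    {ρ : ι → E} {ε : E} (hρ : ∀ j, v (ρ j) ≤ v ε) : v (M.updateRow i₀ ρ).det ≤ v ε := by
  rcases eq_or_ne ε 0 with rfl | hε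
  · have hρ0 : ∀ j, ρ j = 0 := fun j => by
      rw [← v.zero_iff, ← le_zero_iff, ← v.map_zero]
      exact hρ j
    rw [Matrix.det_eq_zero_of_row_eq_zero i₀ fun j => by rw [Matrix.updateRow_self, hρ0]]
  · have hρε : ρ = ε • fun j => ρ j / ε := by
      ext j
      exact (mul_div_cancel₀ _ hε).symm
    rw [hρε, Matrix.det_updateRow_smul, map_mul]
    refine mul_le_of_le_one_right' (val_det_le_one fun i j => ?_)
    rcases eq_or_ne i i₀ with rfl | hi
    · rw [Matrix.updateRow_self, map_div₀]
      exact div_le_one_of_le₀ (hρ j) zero_le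
    · rw [Matrix.updateRow_ne hi]
      exact hM i j

/-- Multiply column `j₀` by `p` and divide row `i₀` by `p`. -/
theorem val_det_le_one_of_simple_pole {p : E} (hp : p ≠ 0) {M : Matrix ι ι E} {i₀ j₀ : ι}
    (h₀₀ : v (M i₀ j₀) ≤ 1) (hrow : ∀ j ≠ j₀, v (M i₀ j) ≤ v p)
    (hcol : ∀ i ≠ i₀, v (M i j₀) * v p ≤ 1)
    (hrest : ∀ i ≠ i₀, ∀ j ≠ j₀, v (M i j) ≤ 1) : v M.det ≤ 1 := by
  have hvp : v p ≠ 0 := v.ne_zero_iff.2 hp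
  have hscale : (Matrix.of fun i j => (if i = i₀ then p⁻¹ else 1) *
      (Matrix.of fun i j => (if j = j₀ then p else 1) * M i j) i j).det = M.det := by
    rw [Matrix.det_mul_column, Matrix.det_mul_row, Finset.prod_ite_eq', Finset.prod_ite_eq',
      if_pos (Finset.mem_univ _), if_pos (Finset.mem_univ _), inv_mul_cancel_left₀ hp]
  rw [← hscale]
  refine val_det_le_one fun i j => ?_
  simp only [Matrix.of_apply, map_mul]
  rcases eq_or_ne i i₀ with rfl | hi <;> rcases eq_or_ne j j₀ with rfl | hj
  · rw [if_pos rfl, if_pos rfl, map_inv₀, inv_mul_cancel_left₀ hvp]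
    exact h₀₀
  · rw [if_pos rfl, if_neg hj, map_one, one_mul, map_inv₀, ← div_eq_inv_mul]
    exact div_le_one_of_le₀ (hrow j hj) zero_le
  · rw [if_neg hi, if_pos rfl, map_one, one_mul, mul_comm]
    exact hcol i hi
  · rw [if_neg hi, if_neg hj, map_one, one_mul, one_mul]
    exact hrest i hi j hj

end Det

/-! ### Linear relations among logarithmic derivatives -/

/-- The logarithmic derivatives of the family `z` satisfy, simultaneously for all derivations, a
linear relation whose coefficient `θ i₀` is a unit. Since `ε` lies in the maximal ideal, the
right-hand side is small for derivations `D` with `v (D x) ≤ v x`. -/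
def HasUnitRelation [Fintype ι] (v : Valuation E Γ₀) (z : ι → E) : Prop :=
  ∃ (θ : ι → E) (i₀ : ι) (ε g : E), v (θ i₀) = 1 ∧ v ε < 1 ∧
    ∀ D : Derivation ℤ E E, ∑ i, θ i * dlog D (z i) = D ε - ε * dlog D g

theorem exists_two_units_of_val_sum_lt_one {J : Type*} {S : Finset J} {a : J → E}
    (hle : ∀ j ∈ S, v (a j) ≤ 1) (hunit : ∃ j ∈ S, v (a j) = 1) (hsum : v (∑ j ∈ S, a j) < 1) :
    ∃ j ∈ S, ∃ k ∈ S, j ≠ k ∧ v (a j) = 1 ∧ v (a k) = 1 := by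
  classical
  obtain ⟨j, hjS, hj⟩ := hunit
  by_contra! hcon
  have hrest : v (∑ l ∈ S.erase j, a l) < v (a j) := by
    rw [hj]
    refine v.map_sum_lt one_ne_zero fun l hl => ?_
    obtain ⟨hlj, hlS⟩ := Finset.mem_erase.1 hl
    exact (hle l hlS).lt_of_ne (hcon j hjS l hlS hlj.symm hj)
  rw [← Finset.add_sum_erase S a hjS, v.map_add_eq_of_lt_left hrest, hj] at hsum
  exact hsum.false

theorem sum_mul_dlog_eq [Fintype ι] [DecidableEq ι] {J : Type*} {z : ι → E} {g : E}
    {I : J → Finset ι} {a : J → E} {T : Finset J} {D : Derivation ℤ E E}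
    (ha : ∀ j ∈ T, D (a j) = a j * (dlog D g + ∑ i ∈ I j, dlog D (z i))) :
    ∑ i, (∑ j ∈ T with i ∈ I j, a j) * dlog D (z i) =
      D (∑ j ∈ T, a j) - (∑ j ∈ T, a j) * dlog D g := by
  have hexpand : D (∑ j ∈ T, a j) =
      ∑ j ∈ T, (a j * dlog D g + ∑ i, if i ∈ I j then a j * dlog D (z i) else 0) := by
    rw [map_sum]
    refine Finset.sum_congr rfl fun j hj => ?_
    rw [ha j hj, Finset.sum_ite_mem, Finset.univ_inter, ← Finset.mul_sum, ← mul_add]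
  rw [hexpand, Finset.sum_add_distrib, Finset.sum_comm, ← Finset.sum_mul, add_sub_cancel_left]
  refine Finset.sum_congr rfl fun i _ => ?_
  rw [Finset.sum_mul, Finset.sum_filter]

/-- In a minimal subfamily `T` that contains a unit and whose sum is not a unit, there are two units
`a j`, `a k`. If `i₀` belongs to exactly one of `I j` and `I k`, then the terms with `i₀ ∈ I l` form
a proper subfamily containing a unit, so by minimality their sum `θ i₀` is a unit. -/
theorem hasUnitRelation_of_val_sum_lt_one [Fintype ι] {J : Type*} {z : ι → E} {g : E}
    {I : J → Finset ι} (hI : Function.Injective I) {S : Finset J} {a : J → E}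
    (ha : ∀ j ∈ S, ∀ D : Derivation ℤ E E,
      D (a j) = a j * (dlog D g + ∑ i ∈ I j, dlog D (z i)))
    (hle : ∀ j ∈ S, v (a j) ≤ 1) (hunit : ∃ j ∈ S, v (a j) = 1) (hsum : v (∑ j ∈ S, a j) < 1) :
    HasUnitRelation v z := by
  classical
  obtain ⟨T, hTS, ⟨hTunit, hTsum⟩, hTmin⟩ := exists_minimal_le_of_wellFoundedLT
    (fun T : Finset J => (∃ j ∈ T, v (a j) = 1) ∧ v (∑ j ∈ T, a j) < 1) S ⟨hunit, hsum⟩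
  obtain ⟨j, hjT, k, hkT, hjk, hj, hk⟩ :=
    exists_two_units_of_val_sum_lt_one (fun j hj => hle j (hTS hj)) hTunit hTsum
  obtain ⟨i₀, hi₀⟩ : ∃ i, i ∈ symmDiff (I j) (I k) := by
    rw [← Finset.Nonempty, Finset.nonempty_iff_ne_empty, ← Finset.bot_eq_empty, Ne,
      symmDiff_eq_bot]
    exact hI.ne hjk
  rw [Finset.mem_symmDiff] at hi₀
  refine ⟨fun i => ∑ l ∈ T with i ∈ I l, a l, i₀, ∑ l ∈ T, a l, g, ?_, hTsum, fun D =>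
    sum_mul_dlog_eq fun l hl => ha l (hTS hl) D⟩
  have hθle : v (∑ l ∈ T with i₀ ∈ I l, a l) ≤ 1 :=
    v.map_sum_le fun l hl => hle l (hTS (Finset.mem_filter.1 hl).1)
  refine hθle.eq_of_not_lt fun hθlt => ?_
  have hθunit : ∃ l ∈ T.filter (i₀ ∈ I ·), v (a l) = 1 := by
    rcases hi₀ with h | h
    · exact ⟨j, Finset.mem_filter.2 ⟨hjT, h.1⟩, hj⟩
    · exact ⟨k, Finset.mem_filter.2 ⟨hkT, h.1⟩, hk⟩
  have hTle := hTmin ⟨hθunit, hθlt⟩ (Finset.filter_subset _ T)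
  rcases hi₀ with h | h
  · exact h.2 (Finset.mem_filter.1 (hTle hkT)).2
  · exact h.2 (Finset.mem_filter.1 (hTle hjT)).2

theorem hasUnitRelation_of_val_sum_lt [Fintype ι] {J : Type*} [Fintype J] {z : ι → E}
    {I : J → Finset ι} (hI : Function.Injective I) {a : J → E}
    (ha : ∀ j, ∀ D : Derivation ℤ E E, D (a j) = a j * ∑ i ∈ I j, dlog D (z i)) {m : J}
    (hm : ∀ j, v (a j) ≤ v (a m)) (hsum : v (∑ j, a j) < v (a m)) : HasUnitRelation v z := by
  have hpos : 0 < v (a m) := zero_le.trans_lt hsum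
  have ham : a m ≠ 0 := v.ne_zero_iff.1 hpos.ne'
  refine hasUnitRelation_of_val_sum_lt_one (g := (a m)⁻¹) hI (S := Finset.univ)
    (a := fun j => (a m)⁻¹ * a j) (fun j _ D => ?_) (fun j _ => ?_)
    ⟨m, Finset.mem_univ m, by rw [inv_mul_cancel₀ ham, map_one]⟩ ?_
  · rw [D.leibniz, ha, ← mul_dlog D (a m)⁻¹]
    simp only [smul_eq_mul]
    ring
  · rw [map_mul, map_inv₀, ← div_eq_inv_mul]
    exact div_le_one_of_le₀ (hm j) zero_le
  · rw [← Finset.mul_sum, map_mul, map_inv₀, ← div_eq_inv_mul]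
    exact (div_lt_one₀ hpos).2 hsum

theorem HasUnitRelation.val_det_dlogMatrix_lt_one [Fintype ι] [DecidableEq ι] {z : ι → E}
    (hz : HasUnitRelation v z) {D : ι → Derivation ℤ E E} (hD : ∀ j x, v (D j x) ≤ v x) :
    v (dlogMatrix D z).det < 1 := by
  obtain ⟨θ, i₀, ε, g, hθ, hε, hrel⟩ := hz
  rw [val_det_dlogMatrix_eq_of_val_eq_one (fun j => hrel (D j)) hθ]
  refine (val_det_updateRow_le (fun i j => val_dlog_le_one (hD j) (z i)) i₀ fun j => ?_).trans_lt hε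
  refine v.map_sub_le (hD j ε) ?_
  rw [map_mul]
  exact mul_le_of_le_one_right' (val_dlog_le_one (hD j) g)

section Discrete

variable [v.IsRankOneDiscrete] {p : E}

theorem exists_isUniformizer (v : Valuation E Γ₀) [v.IsRankOneDiscrete] :
    ∃ p, v.IsUniformizer p :=
  Valuation.IsRankOneDiscrete.generator_mem_range E v

theorem exists_val_eq_uniformizer_zpow (hp : v.IsUniformizer p) {x : E} (hx : x ≠ 0) :
    ∃ k : ℤ, v x = v p ^ k := by
  have hmem : v x ∈ Set.range v \ {0} := ⟨⟨x, rfl⟩, v.ne_zero_iff.2 hx⟩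
  rw [← Valuation.IsRankOneDiscrete.generator_zpowers_eq_range] at hmem
  obtain ⟨_, ⟨k, rfl⟩, hk⟩ := hmem
  exact ⟨k, by rw [← hk, hp.val, Units.val_zpow_eq_zpow_val]⟩

theorem val_le_uniformizer_of_lt_one (hp : v.IsUniformizer p) {x : E} (hx : v x < 1) :
    v x ≤ v p := by
  rcases eq_or_ne x 0 with rfl | hx0
  · rw [map_zero]
    exact zero_le
  · obtain ⟨k, hk⟩ := exists_val_eq_uniformizer_zpow hp hx0
    rw [hk, zpow_lt_one_iff_right_of_lt_one₀ hp.val_pos hp.val_lt_one] at hx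
    rw [hk]
    simpa using zpow_le_zpow_right_of_le_one₀ hp.val_pos hp.val_lt_one.le (show 1 ≤ k by lia)

/-- Writing `x = p ^ k * u` with `u` a unit reduces to the logarithmic derivative of `p`. -/
theorem val_dlog_le_of_val_dlog_uniformizer_le (hp : v.IsUniformizer p) {D : Derivation ℤ E E}
    (hD : ∀ x, v x ≤ 1 → v (D x) ≤ 1) {c : Γ₀} (hc : 1 ≤ c) (hDp : v (dlog D p) ≤ c) (x : E) :
    v (dlog D x) ≤ c := by
  rcases eq_or_ne x 0 with rfl | hx
  · rw [dlog, div_zero, map_zero]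
    exact zero_le
  obtain ⟨k, hk⟩ := exists_val_eq_uniformizer_zpow hp hx
  have hpk : p ^ k ≠ 0 := zpow_ne_zero k hp.ne_zero
  obtain ⟨u, rfl⟩ : ∃ u, x = p ^ k * u := ⟨x / p ^ k, (mul_div_cancel₀ x hpk).symm⟩
  have hu : v u = 1 := by
    rw [map_mul, ← map_zpow₀] at hk
    exact mul_left_cancel₀ (v.ne_zero_iff.2 hpk) (hk.trans (mul_one _).symm)
  rw [dlog_zpow_mul D hp.ne_zero (right_ne_zero_of_mul hx)]
  refine (v.map_add _ _).trans (max_le ?_ ((val_dlog_le_one_of_val_eq_one hD hu).trans hc))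
  rw [map_mul]
  exact (mul_le_of_le_one_left' (intCast_mem v.integer k)).trans hDp

theorem val_deriv_le_of_val_deriv_uniformizer_lt_one (hp : v.IsUniformizer p)
    {D : Derivation ℤ E E} (hD : ∀ x, v x ≤ 1 → v (D x) ≤ 1) (hDp : v (D p) < 1) (x : E) :
    v (D x) ≤ v x := by
  have hdlog : v (dlog D p) ≤ 1 := by
    rw [dlog, map_div₀]
    exact div_le_one_of_le₀ (val_le_uniformizer_of_lt_one hp hDp) zero_le
  rw [← mul_dlog D x, map_mul]
  exact mul_le_of_le_one_right' (val_dlog_le_of_val_dlog_uniformizer_le hp hD le_rfl hdlog x)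

theorem val_dlog_le_inv_uniformizer (hp : v.IsUniformizer p) {D : Derivation ℤ E E}
    (hD : ∀ x, v x ≤ 1 → v (D x) ≤ 1) (x : E) : v (dlog D x) ≤ (v p)⁻¹ := by
  refine val_dlog_le_of_val_dlog_uniformizer_le hp hD
    ((one_le_inv₀ hp.val_pos).2 hp.val_lt_one.le) ?_ x
  rw [dlog, map_div₀, div_eq_mul_inv]
  exact mul_le_of_le_one_left' (hD p hp.val_lt_one.le)

variable [Fintype ι] [DecidableEq ι] {z : ι → E} {D : ι → Derivation ℤ E E}

/-- Only the column `j₀` may have (simple) poles, and the row of the relation absorbs them. -/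
theorem HasUnitRelation.val_det_dlogMatrix_le_one_of_ne (hz : HasUnitRelation v z)
    (hD : ∀ j x, v x ≤ 1 → v (D j x) ≤ 1) {j₀ : ι} (hlog : ∀ j ≠ j₀, ∀ x, v (D j x) ≤ v x) :
    v (dlogMatrix D z).det ≤ 1 := by
  obtain ⟨p, hp⟩ := exists_isUniformizer v
  obtain ⟨θ, i₀, ε, g, hθ, hε, hrel⟩ := hz
  have hεp : v ε ≤ v p := val_le_uniformizer_of_lt_one hp hε
  rw [val_det_dlogMatrix_eq_of_val_eq_one (fun j => hrel (D j)) hθ]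
  refine val_det_le_one_of_simple_pole hp.ne_zero (i₀ := i₀) (j₀ := j₀) ?_ (fun j hj => ?_)
    (fun i hi => ?_) fun i hi j hj => ?_
  · rw [Matrix.updateRow_self]
    refine v.map_sub_le (hD _ _ hε.le) ?_
    rw [map_mul, ← mul_inv_cancel₀ hp.val_ne_zero]
    exact mul_le_mul' hεp (val_dlog_le_inv_uniformizer hp (hD j₀) g)
  · rw [Matrix.updateRow_self]
    refine (v.map_sub_le (hlog j hj ε) ?_).trans hεp
    rw [map_mul]
    exact mul_le_of_le_one_right' (val_dlog_le_one (hlog j hj) g)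
  · rw [Matrix.updateRow_ne hi, ← inv_mul_cancel₀ hp.val_ne_zero]
    exact mul_le_mul' (val_dlog_le_inv_uniformizer hp (hD j₀) (z i)) le_rfl
  · rw [Matrix.updateRow_ne hi]
    exact val_dlog_le_one (hlog j hj) (z i)

/-- Let `D j₀ p` have maximal valuation among the `D j p`. Column operations replace the other
derivations by ones that kill the uniformizer `p`. -/
theorem HasUnitRelation.val_det_dlogMatrix_le_one (hz : HasUnitRelation v z)
    (hD : ∀ j x, v x ≤ 1 → v (D j x) ≤ 1) : v (dlogMatrix D z).det ≤ 1 := by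
  obtain ⟨p, hp⟩ := exists_isUniformizer v
  have : Nonempty ι := ⟨hz.choose_spec.choose⟩
  obtain ⟨j₀, hj₀⟩ := Finite.exists_max fun j => v (D j p)
  let c : ι → E := fun j => if j = j₀ then 0 else D j p / D j₀ p
  have hc : ∀ j, v (c j) ≤ 1 := fun j => by
    dsimp only [c]
    split_ifs
    · exact v.map_zero.trans_le zero_le
    · rw [map_div₀]
      exact div_le_one_of_le₀ (hj₀ j) zero_le
  have hD' : ∀ j x, v x ≤ 1 → v ((D j - c j • D j₀) x) ≤ 1 := fun j x hx => by
    refine v.map_sub_le (hD j x hx) ?_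
    change v (c j * D j₀ x) ≤ 1
    rw [map_mul]
    exact mul_le_one' (hc j) (hD j₀ x hx)
  have hkill : ∀ j ≠ j₀, (D j - c j • D j₀) p = 0 := fun j hj => by
    rw [Derivation.sub_apply, Derivation.smul_apply, smul_eq_mul, sub_eq_zero]
    dsimp only [c]
    rw [if_neg hj, div_mul_cancel_of_imp]
    intro h
    rw [← v.zero_iff, ← le_zero_iff, ← v.map_zero, ← h]
    exact hj₀ j
  rw [← det_dlogMatrix_sub_smul D z c (if_pos rfl : c j₀ = 0)]
  refine hz.val_det_dlogMatrix_le_one_of_ne (j₀ := j₀) hD' fun j hj => ?_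
  refine val_deriv_le_of_val_deriv_uniformizer_lt_one hp (hD' j) ?_
  rw [hkill j hj, map_zero]
  exact zero_lt_one

end Discrete

end ValuationDeterminant

/-! ### The special quadratic form -/

/-- The first `n` affine coordinates `x_i / x_0` of a point with homogeneous coordinates `x`. -/
def affineCoord {n : ℕ} {K : Type*} [Field K] (x : Fin (n + 1) → K) (i : Fin n) : K :=
  x i.succ / x 0

/-- Numerical data of the special form `∑_o c_o(x) y_o² + b(x) y_p y_∞` over a field of
characteristic two. The variables `y` are indexed by `Option J`, where `∞ = none` is the variable
that is set to `1` to dehomogenise and `p : J` is the `pivot`. The coefficient `c_o` is homogeneous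
of degree `2 * halfDegree o`, and modulo squares it is the product of the `x_i / x_0` over
`i ∈ supp o`. -/
structure SpecialForm (n : ℕ) (J : Type*) where
  supp : Option J → Finset (Fin n)
  supp_injective : Function.Injective supp
  supp_nonempty : ∀ o, (supp o).Nonempty
  e : ℕ
  odd_e : Odd e
  le_e : n ≤ e
  halfDegree : Option J → ℕ
  le_halfDegree : ∀ o, n + 2 * e ≤ 2 * halfDegree o
  pivot : J

namespace SpecialForm

variable {n : ℕ} {J : Type*} (P : SpecialForm n J)

/-- The exponent of `x_0` in `c_o`. -/
def x0Exp (o : Option J) : ℕ := 2 * P.halfDegree o - (P.supp o).card - 2 * P.e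

theorem card_supp_le (o : Option J) : (P.supp o).card ≤ n :=
  (Finset.card_le_univ _).trans_eq (Fintype.card_fin n)

theorem x0Exp_add (o : Option J) :
    P.x0Exp o + (P.supp o).card + 2 * P.e = 2 * P.halfDegree o := by
  have h := P.le_halfDegree o
  have hcard := P.card_supp_le o
  unfold x0Exp
  lia

/-- The exponent of `x_0` in `b`. -/
def mixedExp : ℕ := P.halfDegree (some P.pivot) + P.halfDegree none - 2 * n

theorem mixedExp_add : P.mixedExp + 2 * n = P.halfDegree (some P.pivot) + P.halfDegree none := by
  have h₁ := P.le_halfDegree (some P.pivot)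
  have h₂ := P.le_halfDegree none
  have h₃ := P.le_e
  unfold mixedExp
  lia

theorem x0Exp_add_x0Exp_lt :
    P.x0Exp (some P.pivot) + P.x0Exp none < 2 * P.mixedExp := by
  have h₁ := P.x0Exp_add (some P.pivot)
  have h₂ := P.x0Exp_add none
  have h₃ := (P.supp_nonempty none).card_pos
  have h₄ := P.mixedExp_add
  have h₅ := P.le_e
  lia

section Form

variable {K : Type*} [CommSemiring K] (x : Fin (n + 1) → K)

/-- The coefficient `c_o` of `y_o²`. -/
def squareCoeff (o : Option J) : K :=
  (∏ l ∈ P.supp o, x l.succ) * x 0 ^ P.x0Exp o * ∑ i, x i ^ (2 * P.e)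

/-- The coefficient `b` of the mixed term. -/
def mixedCoeff : K := x 0 ^ P.mixedExp * (∏ i : Fin n, x i.succ) ^ 2

/-- The special form evaluated at `(x, y)`. -/
def form [Fintype J] (y : Option J → K) : K :=
  ∑ o, P.squareCoeff x o * y o ^ 2 + P.mixedCoeff x * y (some P.pivot) * y none

variable {x}

theorem map_squareCoeff {K' : Type*} [CommSemiring K'] (φ : K →+* K') (o : Option J) :
    φ (P.squareCoeff x o) = P.squareCoeff (fun i => φ (x i)) o := by
  simp [squareCoeff]

theorem map_mixedCoeff {K' : Type*} [CommSemiring K'] (φ : K →+* K') :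
    φ (P.mixedCoeff x) = P.mixedCoeff fun i => φ (x i) := by
  simp [mixedCoeff]

theorem map_form [Fintype J] {K' : Type*} [CommSemiring K'] (φ : K →+* K') (y : Option J → K) :
    φ (P.form x y) = P.form (fun i => φ (x i)) fun o => φ (y o) := by
  simp [form, map_squareCoeff, map_mixedCoeff]

theorem squareCoeff_smul (c : K) (o : Option J) :
    P.squareCoeff (c • x) o = (c ^ P.halfDegree o) ^ 2 * P.squareCoeff x o := by
  have hexp : (c ^ P.halfDegree o) ^ 2 =
      c ^ (P.supp o).card * c ^ P.x0Exp o * c ^ (2 * P.e) := by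
    rw [← pow_mul, mul_comm _ 2, ← P.x0Exp_add o]
    ring
  rw [hexp]
  simp only [squareCoeff, Pi.smul_apply, smul_eq_mul, mul_pow, Finset.prod_mul_distrib,
    Finset.prod_const, ← Finset.mul_sum]
  ring

theorem mixedCoeff_smul (c : K) : P.mixedCoeff (c • x) =
    c ^ P.halfDegree (some P.pivot) * c ^ P.halfDegree none * P.mixedCoeff x := by
  rw [← pow_add, ← P.mixedExp_add]
  simp only [mixedCoeff, Pi.smul_apply, smul_eq_mul, mul_pow, Finset.prod_mul_distrib,
    Finset.prod_const, Finset.card_univ, Fintype.card_fin]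
  ring

theorem form_smul [Fintype J] (c : K) (y : Option J → K) :
    P.form (c • x) y = P.form x fun o => c ^ P.halfDegree o * y o := by
  simp only [form, squareCoeff_smul, mixedCoeff_smul]
  congr 1
  · exact Finset.sum_congr rfl fun o _ => by ring
  · ring

end Form

end SpecialForm

/-! ### Nontrivial solutions of `s² = form x y` and unit relations -/

section Solution

variable {E : Type*} [Field E] {Γ₀ : Type*} [LinearOrderedCommGroupWithZero Γ₀]
  {v : Valuation E Γ₀} {n : ℕ}

theorem sum_pow_two_mul_of_charTwo {ι R : Type*} [CommRing R] [CharP R 2] (s : Finset ι)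
    (x : ι → R) (e : ℕ) : ∑ i ∈ s, x i ^ (2 * e) = (∑ i ∈ s, x i ^ e) ^ 2 := by
  simp only [sum_pow_char 2, ← pow_mul, mul_comm e 2]

theorem SpecialForm.squareCoeff_eq_prod_mul_sq {J : Type*} (P : SpecialForm n J) [CharP E 2]
    {x : Fin (n + 1) → E} (hx : x 0 ≠ 0) (o : Option J) :
    P.squareCoeff x o = (∏ l ∈ P.supp o, affineCoord x l) *
      (x 0 ^ (P.halfDegree o - P.e) * ∑ i, x i ^ P.e) ^ 2 := by
  have hexp : P.x0Exp o + (P.supp o).card = (P.halfDegree o - P.e) * 2 := by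
    have := P.x0Exp_add o
    lia
  simp only [squareCoeff, affineCoord, sum_pow_two_mul_of_charTwo, Finset.prod_div_distrib,
    Finset.prod_const, mul_pow]
  rw [← pow_mul, ← hexp, pow_add]
  field_simp

/-- Modulo squares, the powers `(x_i / x_0) ^ e` belong to the subsets `∅, {1}, …, {n}`. -/
theorem hasUnitRelation_of_val_sum_pow_lt [CharP E 2] {x : Fin (n + 1) → E} (hx : x 0 ≠ 0)
    {m : Fin (n + 1)} (hm : ∀ i, v (x i) ≤ v (x m)) {e : ℕ} (he : Odd e)
    (hsum : v (∑ i, x i ^ e) < v (x m) ^ e) : HasUnitRelation v (affineCoord x) := by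
  obtain ⟨f, rfl⟩ := he
  let I : Fin (n + 1) → Finset (Fin n) := Fin.cases ∅ fun i => {i}
  have hI : Function.Injective I := fun a b => by
    cases a using Fin.cases <;> cases b using Fin.cases <;> simp [I]
  have hterm : ∀ i, (x i / x 0) ^ (2 * f + 1) =
      (∏ l ∈ I i, affineCoord x l) * ((x i / x 0) ^ f) ^ 2 := fun i => by
    cases i using Fin.cases with
    | zero => simp [I, hx]
    | succ i =>
      simp only [I, Fin.cases_succ, Finset.prod_singleton, affineCoord]
      ring
  refine hasUnitRelation_of_val_sum_lt hI (a := fun i => (x i / x 0) ^ (2 * f + 1)) (m := m)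
    (fun i D => ?_) (fun i => ?_) ?_
  · simp only [hterm]
    exact deriv_prod_mul_sq D _ _ _
  · simp only [map_pow, map_div₀]
    exact pow_le_pow_left' (div_le_div_of_nonneg_right (hm i) zero_le) _
  · simp only [div_pow, ← Finset.sum_div, map_div₀, map_pow]
    gcongr
    exact pow_pos (zero_lt_iff.2 (v.ne_zero_iff.2 hx)) _

theorem mul_mul_lt_of_sq_lt_mul {a b c y z M : Γ₀} (hM : 0 < M) (hb : b ^ 2 < a * c)
    (hy : a * y ^ 2 ≤ M) (hz : c * z ^ 2 ≤ M) : b * y * z < M := by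
  rcases eq_or_ne (y * z) 0 with hyz | hyz
  · rwa [mul_assoc, hyz, mul_zero]
  refine lt_of_pow_lt_pow_left₀ 2 zero_le ?_
  calc (b * y * z) ^ 2 = b ^ 2 * (y * z) ^ 2 := by rw [mul_assoc, mul_pow]
    _ < a * c * (y * z) ^ 2 :=
      mul_lt_mul_of_pos_right hb (zero_lt_iff.2 (pow_ne_zero 2 hyz))
    _ = a * y ^ 2 * (c * z ^ 2) := by rw [mul_pow]; ac_rfl
    _ ≤ M * M := mul_le_mul' hy hz
    _ = M ^ 2 := (sq M).symm

namespace SpecialForm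

variable {J : Type*} (P : SpecialForm n J)

theorem val_mixedCoeff_sq_lt {x : Fin (n + 1) → E} (hx : ∀ i, x i ≠ 0) (hle : ∀ i, v (x i) ≤ 1)
    (hlt : ∃ i, v (x i) < 1) (hG : v (∑ i, x i ^ (2 * P.e)) = 1) :
    v (P.mixedCoeff x) ^ 2 <
      v (P.squareCoeff x (some P.pivot)) * v (P.squareCoeff x none) := by
  set w : Fin (n + 1) → Γ₀ := fun i => v (x i)
  set π : Γ₀ := ∏ i : Fin n, w i.succ
  have hw : ∀ i, 0 < w i := fun i => zero_lt_iff.2 (v.ne_zero_iff.2 (hx i))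
  have hsub : ∀ I : Finset (Fin n), π ≤ ∏ i ∈ I, w i.succ := fun I =>
    Finset.prod_le_prod_of_subset_of_le_one' (Finset.subset_univ I) fun i _ _ => hle _
  have hπ : 0 < π := zero_lt_iff.2 (Finset.prod_ne_zero_iff.2 fun i _ => (hw _).ne')
  have hπ_le : π ≤ 1 := Finset.prod_le_one' fun i _ => hle _
  have hprod_lt : w 0 * π < 1 := by
    obtain ⟨m, hm⟩ := hlt
    rw [← Fin.prod_univ_succ w, ← Finset.mul_prod_erase _ _ (Finset.mem_univ m)]
    exact (mul_le_of_le_one_right' (Finset.prod_le_one' fun i _ => hle i)).trans_lt hm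
  have hpow : w 0 ^ (2 * P.mixedExp) * π ^ 2 <
      w 0 ^ (P.x0Exp (some P.pivot) + P.x0Exp none) := by
    obtain ⟨t, ht⟩ := Nat.exists_eq_add_of_lt P.x0Exp_add_x0Exp_lt
    rw [ht, pow_succ, pow_add]
    calc _ = w 0 ^ (P.x0Exp (some P.pivot) + P.x0Exp none) * (w 0 * π * (w 0 ^ t * π)) := by
          rw [sq]; ac_rfl
      _ < _ := mul_lt_of_lt_one_right (pow_pos (hw 0) _) <|
          (mul_le_of_le_one_right' (mul_le_one' (pow_le_one' (hle 0) t) hπ_le)).trans_lt hprod_lt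
  calc v (P.mixedCoeff x) ^ 2 = w 0 ^ (2 * P.mixedExp) * π ^ 2 * (π * π) := by
        simp only [mixedCoeff, map_mul, map_pow, map_prod, mul_pow, ← pow_mul,
          mul_comm P.mixedExp 2, mul_assoc, w, π, ← sq]
    _ < w 0 ^ (P.x0Exp (some P.pivot) + P.x0Exp none) * (π * π) :=
        mul_lt_mul_of_pos_right hpow (mul_pos hπ hπ)
    _ ≤ w 0 ^ (P.x0Exp (some P.pivot) + P.x0Exp none) *
          ((∏ i ∈ P.supp (some P.pivot), w i.succ) * ∏ i ∈ P.supp none, w i.succ) :=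
        mul_le_mul' le_rfl (mul_le_mul' (hsub _) (hsub _))
    _ = _ := by
        simp only [squareCoeff, map_mul, map_pow, map_prod, hG, mul_one, pow_add, w]
        ac_rfl

/-- The subsets attached to the terms of `s² + ∑ c_o y_o²`, the square `s²` being indexed by
`none`. -/
def extSupp (o : Option (Option J)) : Finset (Fin n) := o.elim ∅ P.supp

theorem extSupp_injective : Function.Injective P.extSupp := by
  rintro (_ | a) (_ | b) h
  · rfl
  · exact absurd h.symm (P.supp_nonempty b).ne_empty
  · exact absurd h (P.supp_nonempty a).ne_empty
  · exact congrArg some (P.supp_injective h)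

/-- The terms of `s² + ∑ c_o y_o²`, the square `s²` being indexed by `none`. -/
def extTerm (x : Fin (n + 1) → E) (y : Option J → E) (s : E) (o : Option (Option J)) : E :=
  o.elim (s ^ 2) fun o => P.squareCoeff x o * y o ^ 2

variable {P} {x : Fin (n + 1) → E} {y : Option J → E} {s : E}

theorem deriv_extTerm [CharP E 2] (hx : x 0 ≠ 0) (D : Derivation ℤ E E) (o : Option (Option J)) :
    D (P.extTerm x y s o) =
      P.extTerm x y s o * ∑ i ∈ P.extSupp o, dlog D (affineCoord x i) := by
  rcases o with _ | o
  · simp only [extTerm, extSupp, Option.elim_none, deriv_sq_of_charTwo, Finset.sum_empty, mul_zero]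
  · simp only [extTerm, extSupp, Option.elim_some, P.squareCoeff_eq_prod_mul_sq hx]
    rw [mul_assoc, ← mul_pow]
    exact deriv_prod_mul_sq D _ _ _

variable [Fintype J]

theorem sum_extTerm [CharP E 2] (hs : s ^ 2 = P.form x y) :
    ∑ o, P.extTerm x y s o = P.mixedCoeff x * y (some P.pivot) * y none := by
  simp only [Fintype.sum_option, extTerm, Option.elim, hs, form]
  linear_combination CharTwo.add_self_eq_zero
    (P.squareCoeff x none * y none ^ 2 + ∑ j, P.squareCoeff x (some j) * y (some j) ^ 2)

/-- The sum of the terms of `s² + ∑ c_o y_o²` is the mixed term, which is smaller than the largest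
among them. -/
theorem hasUnitRelation_of_form_of_le_one [CharP E 2] (hx : ∀ i, x i ≠ 0)
    (hle : ∀ i, v (x i) ≤ 1) (hunit : ∃ i, v (x i) = 1) (hlt : ∃ i, v (x i) < 1)
    (hy : ∃ o, y o ≠ 0) (hs : s ^ 2 = P.form x y) : HasUnitRelation v (affineCoord x) := by
  have hGle : v (∑ i, x i ^ P.e) ≤ 1 :=
    v.map_sum_le fun i _ => (map_pow v _ _).trans_le (pow_le_one' (hle i) _)
  rcases hGle.lt_or_eq with hG | hG
  · obtain ⟨m, hm⟩ := hunit
    refine hasUnitRelation_of_val_sum_pow_lt (hx 0) (m := m) (fun i => ?_) P.odd_e ?_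
    · exact (hle i).trans_eq hm.symm
    · rwa [hm, one_pow]
  have hG2 : v (∑ i, x i ^ (2 * P.e)) = 1 := by
    rw [sum_pow_two_mul_of_charTwo, map_pow, hG, one_pow]
  have hcoeff : ∀ o, P.squareCoeff x o ≠ 0 := fun o =>
    mul_ne_zero (mul_ne_zero (Finset.prod_ne_zero_iff.2 fun i _ => hx _) (pow_ne_zero _ (hx 0)))
      (v.ne_zero_iff.1 (hG2.trans_ne one_ne_zero))
  obtain ⟨m, hm⟩ := Finite.exists_max fun o => v (P.extTerm x y s o)
  have hpos : 0 < v (P.extTerm x y s m) := by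
    obtain ⟨o, ho⟩ := hy
    refine (zero_lt_iff.2 (v.ne_zero_iff.2 ?_)).trans_le (hm (some o))
    exact mul_ne_zero (hcoeff o) (pow_ne_zero 2 ho)
  have hterm : ∀ o, v (P.squareCoeff x o) * v (y o) ^ 2 ≤ v (P.extTerm x y s m) := fun o => by
    rw [← map_pow, ← map_mul]
    exact hm (some o)
  refine hasUnitRelation_of_val_sum_lt P.extSupp_injective
    (fun o D => deriv_extTerm (hx 0) D o) hm ?_
  rw [sum_extTerm hs, map_mul, map_mul]
  exact mul_mul_lt_of_sq_lt_mul hpos (P.val_mixedCoeff_sq_lt hx hle hlt hG2) (hterm _) (hterm _)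

theorem hasUnitRelation_of_form [CharP E 2] (hx : ∀ i, x i ≠ 0) (hne : ∃ i j, v (x i) ≠ v (x j))
    (hy : ∃ o, y o ≠ 0) (hs : s ^ 2 = P.form x y) : HasUnitRelation v (affineCoord x) := by
  obtain ⟨m, hm⟩ := Finite.exists_max fun i => v (x i)
  have hpos : 0 < v (x m) := zero_lt_iff.2 (v.ne_zero_iff.2 (hx m))
  have hval : ∀ i, v (((x m)⁻¹ • x) i) = v (x i) / v (x m) := fun i => by
    rw [Pi.smul_apply, smul_eq_mul, map_mul, map_inv₀, div_eq_inv_mul]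
  have hscale : affineCoord ((x m)⁻¹ • x) = affineCoord x := by
    ext i
    exact mul_div_mul_left _ _ (inv_ne_zero (hx m))
  rw [← hscale]
  refine hasUnitRelation_of_form_of_le_one (P := P) (s := s)
    (y := fun o => x m ^ P.halfDegree o * y o)
    (fun i => mul_ne_zero (inv_ne_zero (hx m)) (hx i)) (fun i => ?_) ⟨m, ?_⟩ ?_ ?_ ?_
  · rw [hval]
    exact div_le_one_of_le₀ (hm i) zero_le
  · rw [hval, div_self hpos.ne']
  · by_contra! hall
    have hmax : ∀ i, v (x i) = v (x m) := fun i =>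
      (hm i).antisymm ((one_le_div₀ hpos).1 ((hall i).trans_eq (hval i)))
    obtain ⟨i, j, hij⟩ := hne
    exact hij ((hmax i).trans (hmax j).symm)
  · obtain ⟨o, ho⟩ := hy
    exact ⟨o, mul_ne_zero (pow_ne_zero _ (hx m)) ho⟩
  · rw [hs, ← P.form_smul, smul_inv_smul₀ (hx m)]

end SpecialForm

end Solution

/-! ### Derivations of fraction fields and of polynomial rings -/

section FractionField

variable {R A K : Type*} [CommRing R] [CommRing A] [Algebra R A] [Field K] [Algebra A K]
  [Algebra R K] [IsScalarTower R A K] [IsFractionRing A K]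

variable (K) in
/-- The extension of a derivation of a domain `A` to its fraction field, obtained by localizing the
corresponding linear form on `Ω[A⁄R]`. -/
noncomputable def fracDer (D : Derivation R A A) : Derivation R K K :=
  ((IsLocalizedModule.lift (nonZeroDivisors A) (KaehlerDifferential.map R R A K)
    (Algebra.linearMap A K ∘ₗ D.liftKaehlerDifferential)
    (IsLocalizedModule.map_units (Algebra.linearMap A K))).extendScalarsOfIsLocalization
      (nonZeroDivisors A) K).compDer (KaehlerDifferential.D R K)

@[simp]
theorem fracDer_algebraMap (D : Derivation R A A) (a : A) :
    fracDer K D (algebraMap A K a) = algebraMap A K (D a) := by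
  simpa [fracDer] using IsLocalizedModule.lift_apply (nonZeroDivisors A)
    (KaehlerDifferential.map R R A K) (Algebra.linearMap A K ∘ₗ D.liftKaehlerDifferential)
    (IsLocalizedModule.map_units (Algebra.linearMap A K)) (KaehlerDifferential.D R A a)

theorem derivation_div (D : Derivation R K K) (a : K) {b : K} (hb : b ≠ 0) :
    D (a / b) = (D a - a / b * D b) / b := by
  rw [D.leibniz_div]
  simp only [smul_eq_mul]
  field_simp

theorem val_fracDer_le {Γ₀ : Type*} [LinearOrderedCommGroupWithZero Γ₀] (v : Valuation K Γ₀)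
    (D : Derivation R A A) (hD : ∀ a, v (algebraMap A K (D a)) ≤ v (algebraMap A K a)) (x : K) :
    v (fracDer K D x) ≤ v x := by
  have := (algebraMap A K).domain_nontrivial
  obtain ⟨a, b, hb, rfl⟩ := IsFractionRing.div_surjective (A := A) x
  have hb0 := IsFractionRing.to_map_ne_zero_of_mem_nonZeroDivisors (K := K) hb
  rw [derivation_div _ _ hb0, fracDer_algebraMap, fracDer_algebraMap, map_div₀, map_div₀]
  refine div_le_div_of_nonneg_right (v.map_sub_le (hD a) ?_) zero_le
  calc v (algebraMap A K a / algebraMap A K b * algebraMap A K (D b))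
      ≤ v (algebraMap A K a / algebraMap A K b) * v (algebraMap A K b) := by
        rw [map_mul]; gcongr; exact hD b
    _ = v (algebraMap A K a) := by rw [← map_mul, div_mul_cancel₀ _ hb0]

theorem valuation_fracDer_le_one [IsDedekindDomain A] (p : IsDedekindDomain.HeightOneSpectrum A)
    (D : Derivation R A A) {x : K} (hx : p.valuation K x ≤ 1) :
    p.valuation K (fracDer K D x) ≤ 1 := by
  obtain ⟨a, b, hab⟩ := p.exists_primeCompl_mul_eq_of_integer x hx
  have hb : p.valuation K (algebraMap A K b) = 1 := p.valuation_eq_one_iff_notMem.2 b.2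
  have hb0 : algebraMap A K b ≠ 0 := (Valuation.ne_zero_iff (p.valuation K)).1 (by simp [hb])
  obtain rfl : x = algebraMap A K a / algebraMap A K b := (eq_div_iff hb0).2 hab
  rw [derivation_div _ _ hb0, fracDer_algebraMap, fracDer_algebraMap, map_div₀, hb, div_one]
  refine Valuation.map_sub_le _ (p.valuation_le_one _) ?_
  rw [map_mul]
  exact mul_le_one' hx (p.valuation_le_one _)

end FractionField

section PolynomialDerivation

open Polynomial

variable {A : Type*} [CommRing A] (D : Derivation ℤ A A)

/-- A derivation applied to the coefficients of a polynomial. -/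
noncomputable def polyDer : Derivation ℤ A[X] A[X] :=
  letI : Differential A := ⟨D⟩
  Differential.mapCoeffs

@[simp]
theorem coeff_polyDer (p : A[X]) (i : ℕ) : (polyDer D p).coeff i = D (p.coeff i) := rfl

@[simp]
theorem polyDer_C (c : A) : polyDer D (C c) = C (D c) := by
  let : Differential A := ⟨D⟩
  exact Differential.mapCoeffs_C c

theorem polyDer_X_pow_mul (k : ℕ) (p : A[X]) : polyDer D (X ^ k * p) = X ^ k * polyDer D p := by
  ext i
  rw [coeff_polyDer, coeff_X_pow_mul', coeff_X_pow_mul']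
  split_ifs
  · rw [coeff_polyDer]
  · exact map_zero D

theorem natDegree_polyDer_le (p : A[X]) : (polyDer D p).natDegree ≤ p.natDegree :=
  natDegree_le_iff_coeff_eq_zero.2 fun i hi => by
    rw [coeff_polyDer, coeff_eq_zero_of_natDegree_lt hi, map_zero]

end PolynomialDerivation

/-! ### Comparison of logarithmic determinants modulo the maximal ideal -/

section Comparison

variable {E : Type*} [Field E] {Γ₀ : Type*} [LinearOrderedCommGroupWithZero Γ₀]
  {v : Valuation E Γ₀}

theorem val_det_sub_det_lt_one {ι : Type*} [Fintype ι] [DecidableEq ι] {M N : Matrix ι ι E}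
    (hM : ∀ i j, v (M i j) ≤ 1) (hN : ∀ i j, v (N i j) ≤ 1) (h : ∀ i j, v (M i j - N i j) < 1) :
    v (M.det - N.det) < 1 := by
  let O := v.valuationSubring
  let M' : Matrix ι ι O := Matrix.of fun i j => ⟨M i j, hM i j⟩
  let N' : Matrix ι ι O := Matrix.of fun i j => ⟨N i j, hN i j⟩
  have hM' : M.det = algebraMap O E M'.det := by rw [RingHom.map_det]; rfl
  have hN' : N.det = algebraMap O E N'.det := by rw [RingHom.map_det]; rfl
  have hres : (IsLocalRing.residue O).mapMatrix M' = (IsLocalRing.residue O).mapMatrix N' := by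
    ext i j
    rw [RingHom.mapMatrix_apply, RingHom.mapMatrix_apply, Matrix.map_apply, Matrix.map_apply,
      ← sub_eq_zero, ← map_sub, IsLocalRing.residue_eq_zero_iff, Valuation.mem_maximalIdeal_iff]
    exact h i j
  rw [hM', hN', ← map_sub]
  change v ((M'.det - N'.det : O) : E) < 1
  rw [← Valuation.mem_maximalIdeal_iff, ← IsLocalRing.residue_eq_zero_iff]
  change IsLocalRing.residue O (M'.det - N'.det) = 0
  rw [map_sub, RingHom.map_det, RingHom.map_det, hres, sub_self]

theorem val_eq_one_of_val_sub_one_lt_one {a : E} (ha : v (a - 1) < 1) : v a = 1 :=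
  (v.map_eq_of_sub_lt (ha.trans_eq v.map_one.symm)).trans v.map_one

theorem val_div_sub_one_lt_one {a b : E} (ha : v (a - 1) < 1) (hb : v (b - 1) < 1) :
    v (a / b - 1) < 1 := by
  have hvb := val_eq_one_of_val_sub_one_lt_one hb
  have hb0 : b ≠ 0 := v.ne_zero_iff.1 (by simp [hvb])
  rw [div_sub_one hb0, map_div₀, hvb, div_one, ← sub_sub_sub_cancel_right a b 1]
  exact v.map_sub_lt ha hb

theorem val_dlog_sub_dlog_lt_one {D : Derivation ℤ E E} (hD : ∀ x, v (D x) ≤ v x) {y z : E}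
    (h : v (y / z - 1) < 1) : v (dlog D y - dlog D z) < 1 := by
  have hvu := val_eq_one_of_val_sub_one_lt_one h
  have hu : y / z ≠ 0 := v.ne_zero_iff.1 (by simp [hvu])
  have hz : z ≠ 0 := (div_ne_zero_iff.1 hu).2
  have hy : z ^ (1 : ℤ) * (y / z) = y := by rw [zpow_one, mul_div_cancel₀ _ hz]
  have hlog : dlog D y - dlog D z = D (y / z - 1) / (y / z) := by
    rw [← hy, dlog_zpow_mul D hz hu, hy, map_sub, D.map_one_eq_zero, sub_zero, dlog, dlog]
    ring
  rw [hlog, map_div₀, hvu, div_one]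
  exact (hD _).trans_lt h

variable {L : Type*} [Field L] {n : ℕ}

theorem val_dlog_affineCoord_sub_lt_one {D : Derivation ℤ E E} (hD : ∀ y, v (D y) ≤ v y)
    {x l : Fin (n + 1) → E} {t : E} (hl : ∀ i, v (l i) = 1) (hx : ∀ i, v (x i / t - l i) < 1)
    (i : Fin n) : v (dlog D (affineCoord x i) - dlog D (affineCoord l i)) < 1 := by
  have hl0 : ∀ i, l i ≠ 0 := fun i => v.ne_zero_iff.1 (by simp [hl])
  have hratio : ∀ i, v (x i / t / l i - 1) < 1 := fun i => by
    rw [div_sub_one (hl0 i), map_div₀, hl, div_one]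
    exact hx i
  have ht : t ≠ 0 := by
    rintro rfl
    simpa using hratio 0
  have hquot : affineCoord x i / affineCoord l i = x i.succ / t / l i.succ / (x 0 / t / l 0) := by
    rw [affineCoord, affineCoord]
    field_simp
  refine val_dlog_sub_dlog_lt_one hD ?_
  rw [hquot]
  exact val_div_sub_one_lt_one (hratio _) (hratio _)

/-- The hypothesis `hx` says that `x`, rescaled by `t`, reduces to `l` at the place `v`. -/
theorem val_det_dlogMatrix_sub_lt_one {φ : L →+* E} (hφ : ∀ a ≠ 0, v (φ a) = 1)
    {D : Fin n → Derivation ℤ L L} {D' : Fin n → Derivation ℤ E E}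
    (hDφ : ∀ j a, D' j (φ a) = φ (D j a)) (hD : ∀ j y, v (D' j y) ≤ v y)
    {x : Fin (n + 1) → E} {l : Fin (n + 1) → L} {t : E} (hl : ∀ i, l i ≠ 0)
    (hx : ∀ i, v (x i / t - φ (l i)) < 1) :
    v ((dlogMatrix D' (affineCoord x)).det - φ (dlogMatrix D (affineCoord l)).det) < 1 := by
  have hφl : (fun i => φ (affineCoord l i)) = affineCoord fun i => φ (l i) :=
    funext fun i => map_div₀ φ _ _
  rw [RingHom.map_det, RingHom.mapMatrix_apply, ← map_dlogMatrix φ hDφ, hφl]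
  exact val_det_sub_det_lt_one (fun i j => val_dlog_le_one (hD j) _)
    (fun i j => val_dlog_le_one (hD j) _)
    fun i j => val_dlog_affineCoord_sub_lt_one (hD j) (fun i => hφ _ (hl i)) hx i

end Comparison

/-! ### Curves over a field of characteristic two -/

section Adic

open IsDedekindDomain

theorem SpecialForm.valuation_det_dlogMatrix_le_one {A K : Type*} [CommRing A]
    [IsDedekindDomain A] [Field K] [Algebra A K] [IsFractionRing A K] [CharP K 2] {n : ℕ}
    {J : Type*} [Fintype J] {P : SpecialForm n J} (p : HeightOneSpectrum A)
    (D : Fin n → Derivation ℤ A A) {x : Fin (n + 1) → K} {y : Option J → K} {s : K}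
    (hx : ∀ i, x i ≠ 0) (hy : ∃ o, y o ≠ 0) (hs : s ^ 2 = P.form x y) :
    p.valuation K (dlogMatrix (fun j => fracDer K (D j)) (affineCoord x)).det ≤ 1 := by
  have hD : ∀ j z, p.valuation K z ≤ 1 → p.valuation K (fracDer K (D j) z) ≤ 1 :=
    fun j _ => valuation_fracDer_le_one p (D j)
  by_cases hne : ∃ i j, p.valuation K (x i) ≠ p.valuation K (x j)
  · exact (P.hasUnitRelation_of_form hx hne hy hs).val_det_dlogMatrix_le_one hD
  · push Not at hne
    refine val_det_le_one fun i j => val_dlog_le_one_of_val_eq_one (hD j) ?_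
    rw [affineCoord, map_div₀, hne i.succ 0, div_self]
    exact (Valuation.ne_zero_iff _).2 (hx 0)

end Adic

section PlacesOfTheLine

open Polynomial

variable {L K : Type*} [Field L] [Field K] [Algebra L[X] K]

local notation "ι" => algebraMap L[X] K

section Zero

variable [IsFractionRing L[X] K]

local notation "v₀" => IsDedekindDomain.HeightOneSpectrum.valuation K (idealX L)

theorem valuation_idealX_lt_one_iff (a : L[X]) : v₀ (ι a) < 1 ↔ X ∣ a := by
  rw [IsDedekindDomain.HeightOneSpectrum.valuation_lt_one_iff_mem]
  exact Ideal.mem_span_singleton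

theorem valuation_idealX_eq_one_of_not_dvd {a : L[X]} (ha : ¬ X ∣ a) : v₀ (ι a) = 1 :=
  (IsDedekindDomain.HeightOneSpectrum.valuation_le_one _ a).eq_of_not_lt fun h =>
    ha ((valuation_idealX_lt_one_iff a).1 h)

theorem valuation_idealX_C {a : L} (ha : a ≠ 0) : v₀ (ι (C a)) = 1 :=
  valuation_idealX_eq_one_of_not_dvd fun h => ha (by simpa using X_dvd_iff.1 h)

theorem valuation_idealX_fracDer_polyDer_le (D : Derivation ℤ L L) (y : K) :
    v₀ (fracDer K (polyDer D) y) ≤ v₀ y := by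
  refine val_fracDer_le _ _ (fun a => ?_) y
  rcases eq_or_ne a 0 with rfl | ha
  · simp
  obtain ⟨q, hq, hqX⟩ := exists_eq_pow_rootMultiplicity_mul_and_not_dvd a ha 0
  rw [C_0, sub_zero] at hq hqX
  rw [hq, polyDer_X_pow_mul, map_mul, map_mul, map_mul, map_mul,
    valuation_idealX_eq_one_of_not_dvd hqX]
  gcongr
  exact IsDedekindDomain.HeightOneSpectrum.valuation_le_one _ _

theorem valuation_idealX_div_X_pow_sub_lt_one {a : L[X]} {m : ℕ} (ha : X ^ m ∣ a) :
    v₀ (ι a / ι (X ^ m) - ι (C (a.coeff m))) < 1 := by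
  obtain ⟨q, rfl⟩ := ha
  have hX : ι (X ^ m) ≠ 0 := (map_ne_zero_iff _ (IsFractionRing.injective L[X] K)).2
    (pow_ne_zero m X_ne_zero)
  rw [map_mul, mul_div_cancel_left₀ _ hX, ← map_sub, valuation_idealX_lt_one_iff, X_dvd_iff]
  simp [coeff_X_pow_mul']

end Zero

section Infinity

variable {v : Valuation K (WithZero (Multiplicative ℤ))}

theorem val_infty_C
    (hv : ∀ a : L[X], a ≠ 0 → v (ι a) = WithZero.exp (a.natDegree : ℤ))
    {a : L} (ha : a ≠ 0) : v (ι (C a)) = 1 := by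
  rw [hv _ (C_ne_zero.2 ha), natDegree_C, Nat.cast_zero, WithZero.exp_zero]

theorem one_le_val_infty
    (hv : ∀ a : L[X], a ≠ 0 → v (ι a) = WithZero.exp (a.natDegree : ℤ))
    {a : L[X]} (ha : a ≠ 0) : 1 ≤ v (ι a) := by
  rw [hv _ ha, ← WithZero.exp_zero, WithZero.exp_le_exp]
  positivity

variable [IsFractionRing L[X] K]

theorem val_infty_fracDer_polyDer_le
    (hv : ∀ a : L[X], a ≠ 0 → v (ι a) = WithZero.exp (a.natDegree : ℤ))
    (D : Derivation ℤ L L) (y : K) :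
    v (fracDer K (polyDer D) y) ≤ v y := by
  refine val_fracDer_le _ _ (fun a => ?_) y
  by_cases hDa : polyDer D a = 0
  · rw [hDa, map_zero, map_zero]
    exact zero_le
  have ha : a ≠ 0 := fun h => hDa (by rw [h, map_zero])
  rw [hv _ hDa, hv _ ha, WithZero.exp_le_exp, Nat.cast_le]
  exact natDegree_polyDer_le D a

theorem val_infty_div_X_pow_sub_lt_one
    (hv : ∀ a : L[X], a ≠ 0 → v (ι a) = WithZero.exp (a.natDegree : ℤ))
    {a : L[X]} {m : ℕ} (ha : a.natDegree ≤ m) :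
    v (ι a / ι (X ^ m) - ι (C (a.coeff m))) < 1 := by
  have hXm : (X ^ m : L[X]) ≠ 0 := pow_ne_zero m X_ne_zero
  have hX : ι (X ^ m) ≠ 0 := (map_ne_zero_iff _ (IsFractionRing.injective L[X] K)).2 hXm
  have htail : ι a / ι (X ^ m) - ι (C (a.coeff m)) =
      ι (a - C (a.coeff m) * X ^ m) / ι (X ^ m) := by
    rw [map_sub, map_mul, sub_div, mul_div_cancel_right₀ _ hX]
  rw [htail, map_div₀, div_lt_one₀ (zero_lt_iff.2 (v.ne_zero_iff.2 hX))]
  by_cases h0 : a - C (a.coeff m) * X ^ m = 0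
  · rw [h0, map_zero, map_zero]
    exact zero_lt_iff.2 (v.ne_zero_iff.2 hX)
  rw [hv _ h0, hv _ hXm, natDegree_X_pow, WithZero.exp_lt_exp, Nat.cast_lt]
  refine lt_of_le_of_ne ((natDegree_sub_le_of_le ha (natDegree_C_mul_X_pow_le _ _)).trans
    (max_self m).le) fun hdeg => leadingCoeff_ne_zero.2 h0 ?_
  rw [leadingCoeff, hdeg]
  simp

end Infinity

end PlacesOfTheLine

section Edge

open Polynomial IsDedekindDomain

variable {L : Type*} [Field L] {n : ℕ}

/-- The vector `l` has nonzero coordinates and the logarithmic derivatives of its affine coordinates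
are independent. The condition only depends on `l` up to scaling; it is what the specialization of
curves along which a special form is a square preserves. -/
def DlogNondegenerate (D : Fin n → Derivation ℤ L L) (l : Fin (n + 1) → L) : Prop :=
  (∀ i, l i ≠ 0) ∧ (dlogMatrix D (affineCoord l)).det ≠ 0

theorem fracDer_polyDer_C (K : Type*) [Field K] [Algebra L[X] K] [IsFractionRing L[X] K]
    (D : Derivation ℤ L L) (a : L) :
    fracDer K (polyDer D) (algebraMap L[X] K (C a)) = algebraMap L[X] K (C (D a)) := by
  rw [fracDer_algebraMap, polyDer_C]

variable {J : Type*} [Fintype J] (P : SpecialForm n J) {D : Fin n → Derivation ℤ L L}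
  {x : Fin (n + 1) → L[X]} {y : Option J → L[X]} {s : L[X]} {m m' : ℕ}
  {K : Type*} [Field K] [Algebra L[X] K] [IsFractionRing L[X] K]

/-- The determinant of the logarithmic derivatives along the curve has no pole outside infinity, so
it is a polynomial; its value at zero is the determinant of the initial coefficients. -/
theorem SpecialForm.exists_ne_zero_algebraMap_eq_det [CharP K 2] (hx : ∀ i, x i ≠ 0)
    (hy : ∃ o, y o ≠ 0) (hs : s ^ 2 = P.form x y) (hm : ∀ i, X ^ m ∣ x i)
    (h : DlogNondegenerate D fun i => (x i).coeff m) :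
    ∃ w : L[X], w ≠ 0 ∧ algebraMap L[X] K w =
      (dlogMatrix (fun j => fracDer K (polyDer (D j)))
        (affineCoord fun i => algebraMap L[X] K (x i))).det := by
  have hinj : Function.Injective (algebraMap L[X] K) := IsFractionRing.injective L[X] K
  have hs' : algebraMap L[X] K s ^ 2 =
      P.form (fun i => algebraMap L[X] K (x i)) fun o => algebraMap L[X] K (y o) := by
    rw [← map_pow, hs, P.map_form]
  obtain ⟨w, hw⟩ : ∃ w : L[X], algebraMap L[X] K w =
      (dlogMatrix (fun j => fracDer K (polyDer (D j)))
        (affineCoord fun i => algebraMap L[X] K (x i))).det :=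
    HeightOneSpectrum.mem_integers_of_valuation_le_one K _ fun p =>
      P.valuation_det_dlogMatrix_le_one p (fun j => polyDer (D j))
        (fun i => (map_ne_zero_iff _ hinj).2 (hx i))
        (hy.imp fun o => (map_ne_zero_iff _ hinj).2) hs'
  refine ⟨w, ?_, hw⟩
  rintro rfl
  have hzero := val_det_dlogMatrix_sub_lt_one (φ := (algebraMap L[X] K).comp C)
    (fun a => valuation_idealX_C) (fun j => fracDer_polyDer_C K (D j))
    (fun j => valuation_idealX_fracDer_polyDer_le (D j)) h.1
    fun i => valuation_idealX_div_X_pow_sub_lt_one (hm i)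
  rw [← hw, map_zero, zero_sub, Valuation.map_neg] at hzero
  exact hzero.ne (valuation_idealX_C h.2)

/-- The polynomial of the previous lemma does not vanish at infinity. Its value there is the
determinant of the final coefficients, unless some of these coefficients vanish, which a relation
with unit coefficients excludes. The valuation `v` is that of the place at infinity. -/
theorem SpecialForm.dlogNondegenerate_coeff_of_val_infty [CharP K 2]
    (v : Valuation K (WithZero (Multiplicative ℤ)))
    (hv : ∀ a : L[X], a ≠ 0 → v (algebraMap L[X] K a) = WithZero.exp (a.natDegree : ℤ))
    (hy : ∃ o, y o ≠ 0) (hs : s ^ 2 = P.form x y)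
    (hm : ∀ i, X ^ m ∣ x i) (hm' : ∀ i, (x i).natDegree ≤ m')
    (h : DlogNondegenerate D fun i => (x i).coeff m) (h' : ∃ i, (x i).coeff m' ≠ 0) :
    DlogNondegenerate D fun i => (x i).coeff m' := by
  let ι : L[X] →+* K := algebraMap L[X] K
  have hι : Function.Injective ι := IsFractionRing.injective L[X] K
  have hx : ∀ i, x i ≠ 0 := fun i h0 => h.1 i (by simp [h0])
  have hιx : ∀ i, ι (x i) ≠ 0 := fun i => (map_ne_zero_iff ι hι).2 (hx i)
  have hιs : ι s ^ 2 = P.form (fun i => ι (x i)) fun o => ι (y o) := by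
    rw [← map_pow, hs, P.map_form]
  obtain ⟨w, hw0, hw⟩ := P.exists_ne_zero_algebraMap_eq_det (K := K) hx hy hs hm h
  have hdet := one_le_val_infty hv hw0
  rw [hw] at hdet
  have hD : ∀ j z, v (fracDer K (polyDer (D j)) z) ≤ v z :=
    fun j => val_infty_fracDer_polyDer_le hv (D j)
  have hinfty : ∀ i, v (ι (x i) / ι (X ^ m') - ι (C ((x i).coeff m'))) < 1 :=
    fun i => val_infty_div_X_pow_sub_lt_one hv (hm' i)
  have hcoeff : ∀ i, (x i).coeff m' ≠ 0 := by
    by_contra! ⟨i₁, hi₁⟩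
    obtain ⟨i₂, hi₂⟩ := h'
    refine hdet.not_gt ((P.hasUnitRelation_of_form hιx ⟨i₁, i₂, fun heq => ?_⟩
      (hy.imp fun o => (map_ne_zero_iff ι hι).2) hιs).val_det_dlogMatrix_lt_one hD)
    have h₁ := hinfty i₁
    rw [hi₁, map_zero, map_zero, sub_zero, map_div₀, heq, ← map_div₀] at h₁
    have h₂ := v.map_sub_lt h₁ (hinfty i₂)
    rw [sub_sub_cancel] at h₂
    exact h₂.ne (val_infty_C hv hi₂)
  refine ⟨hcoeff, fun hdet0 => hdet.not_gt ?_⟩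
  simpa only [hdet0, map_zero, sub_zero] using
    val_det_dlogMatrix_sub_lt_one (φ := ι.comp C) (fun a => val_infty_C hv)
      (fun j => fracDer_polyDer_C K (D j)) hD hcoeff hinfty

theorem SpecialForm.dlogNondegenerate_coeff [CharP L 2] (hy : ∃ o, y o ≠ 0)
    (hs : s ^ 2 = P.form x y) (hm : ∀ i, X ^ m ∣ x i) (hm' : ∀ i, (x i).natDegree ≤ m')
    (h : DlogNondegenerate D fun i => (x i).coeff m) (h' : ∃ i, (x i).coeff m' ≠ 0) :
    DlogNondegenerate D fun i => (x i).coeff m' := by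
  classical
  have : CharP (RatFunc L) 2 := charP_of_injective_ringHom (IsFractionRing.injective L[X] _) 2
  exact P.dlogNondegenerate_coeff_of_val_infty (RatFunc.inftyValuation L)
    (fun a ha => RatFunc.inftyValuation.polynomial L ha) hy hs hm hm' h h'

end Edge

/-! ### Homogenisation in the quadratic variables -/

section Homogenization
open MvPolynomial

variable {σ J A S : Type*} [Fintype σ] [Fintype J] [CommSemiring A] [CommSemiring S]

/-- The value at `(x, y)` of the monomial with exponent `m`, made quadratic in the second group of
variables by a power of the additional variable `y none`. -/
def homogMonomial (x : σ → S) (y : Option J → S) (m : σ ⊕ J →₀ ℕ) : S :=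
  (∏ i, x i ^ m (.inl i)) * (∏ j, y (some j) ^ m (.inr j)) * y none ^ (2 - ∑ j, m (.inr j))

/-- Evaluation of a polynomial, of degree at most two in the second group of variables, after it has
been homogenised with respect to these variables. -/
noncomputable def homogEval₂ (f : A →+* S) (x : σ → S) (y : Option J → S) :
    MvPolynomial (σ ⊕ J) A →+ S :=
  AddMonoidAlgebra.liftNC f.toAddMonoidHom fun m => homogMonomial x y m.toAdd

variable (f : A →+* S) (x : σ → S) (y : Option J → S) (F : MvPolynomial (σ ⊕ J) A)

theorem homogEval₂_monomial (m : σ ⊕ J →₀ ℕ) (a : A) :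
    homogEval₂ f x y (monomial m a) = f a * homogMonomial x y m :=
  AddMonoidAlgebra.liftNC_single _ _ _ _

theorem map_homogEval₂ {T : Type*} [CommSemiring T] (g : S →+* T) :
    g (homogEval₂ f x y F) = homogEval₂ (g.comp f) (fun i => g (x i)) (fun o => g (y o)) F := by
  induction F using MvPolynomial.induction_on' with
  | monomial m a => simp [homogEval₂_monomial, homogMonomial]
  | add F G hF hG => rw [map_add, map_add, map_add, hF, hG]

theorem homogEval₂_map {A' : Type*} [CommSemiring A'] (φ : A' →+* A)
    (F : MvPolynomial (σ ⊕ J) A') :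
    homogEval₂ f x y (map φ F) = homogEval₂ (f.comp φ) x y F := by
  induction F using MvPolynomial.induction_on' with
  | monomial m a => simp [homogEval₂_monomial]
  | add F G hF hG => rw [map_add, map_add, map_add, hF, hG]

theorem homogEval₂_of_eq_one (hy : y none = 1) :
    homogEval₂ f x y F = eval₂ f (Sum.elim x fun j => y (some j)) F := by
  induction F using MvPolynomial.induction_on' with
  | monomial m a =>
    rw [homogEval₂_monomial, eval₂_monomial, homogMonomial, hy, one_pow, mul_one,
      Finsupp.prod_fintype _ _ fun _ => pow_zero _, Fintype.prod_sum_type]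
    rfl
  | add F G hF hG => rw [map_add, eval₂_add, hF, hG]

theorem homogEval₂_rename_mul_monomial (G : MvPolynomial σ A) (b : J →₀ ℕ) :
    homogEval₂ f x y (rename .inl G * rename .inr (monomial b 1)) =
      eval₂ f x G * ((∏ j, y (some j) ^ b j) * y none ^ (2 - ∑ j, b j)) := by
  induction G using MvPolynomial.induction_on' with
  | add p q hp hq => rw [map_add, add_mul, map_add, hp, hq, eval₂_add, add_mul]
  | monomial u a =>
    have hl : ∀ i, (u.mapDomain .inl + b.mapDomain .inr : σ ⊕ J →₀ ℕ) (.inl i) = u i := by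
      simp [Finsupp.mapDomain_apply Sum.inl_injective, Finsupp.mapDomain_of_notMem_range]
    have hr : ∀ j, (u.mapDomain .inl + b.mapDomain .inr : σ ⊕ J →₀ ℕ) (.inr j) = b j := by
      simp [Finsupp.mapDomain_apply Sum.inr_injective, Finsupp.mapDomain_of_notMem_range]
    simp only [rename_monomial, monomial_mul, homogEval₂_monomial, eval₂_monomial, mul_one,
      homogMonomial, hl, hr, Finsupp.prod_fintype _ _ fun _ => pow_zero _, mul_assoc]

theorem homogEval₂_smul {h : ℕ} (hF : ∀ m, coeff m F ≠ 0 →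
      ∑ i, m (.inl i) + ∑ j, m (.inr j) = 2 * h ∧ ∑ j, m (.inr j) ≤ 2) (a b : S) :
    homogEval₂ f (fun i => a * x i) (fun o => b * o.elim 1 (fun _ => a) * y o) F =
      (a ^ h * b) ^ 2 * homogEval₂ f x y F := by
  rw [F.as_sum, map_sum, map_sum, Finset.mul_sum]
  refine Finset.sum_congr rfl fun m hm => ?_
  obtain ⟨hdeg, hquad⟩ := hF m (mem_support_iff.1 hm)
  have ha : (a ^ h) ^ 2 = a ^ (∑ i, m (.inl i)) * a ^ (∑ j, m (.inr j)) := by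
    rw [← pow_mul, ← pow_add, hdeg, mul_comm]
  have hb : b ^ 2 = b ^ (∑ j, m (.inr j)) * b ^ (2 - ∑ j, m (.inr j)) := by
    rw [← pow_add, Nat.add_sub_cancel' hquad]
  simp only [homogEval₂_monomial, homogMonomial, mul_pow, Finset.prod_mul_distrib,
    Finset.prod_pow_eq_pow_sum, Option.elim_none, Option.elim_some, mul_one, ha, hb]
  ring

end Homogenization

section SpecialPolynomial
open MvPolynomial

variable {n : ℕ} {J : Type*} [Fintype J] (P : SpecialForm n J)

/-- The special form with the last quadratic variable set to `1`. -/
noncomputable def SpecialForm.poly (k : Type*) [CommSemiring k] :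
    MvPolynomial (Fin (n + 1) ⊕ J) k :=
  P.form (fun i => X (.inl i)) fun o => o.elim 1 fun j => X (.inr j)

/-- The coefficients in `x` of the monomials of `y` are isolated, to be evaluated separately. -/
theorem SpecialForm.poly_eq_rename (k : Type*) [CommSemiring k] :
    P.poly k = rename .inl (P.squareCoeff X none) * rename .inr (monomial 0 1) +
      ∑ j, rename .inl (P.squareCoeff X (some j)) *
        rename .inr (monomial (Finsupp.single j 2) 1) +
      rename .inl (P.mixedCoeff X) *
        rename .inr (monomial (Finsupp.single P.pivot 1) 1) := by
  let x (i : Fin (n + 1)) : MvPolynomial (Fin (n + 1) ⊕ J) k := X (.inl i)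
  have hsq : ∀ o, rename .inl (P.squareCoeff X o) = P.squareCoeff x o :=
    fun o => by simp [squareCoeff, x]
  have hmixed : rename .inl (P.mixedCoeff X) = P.mixedCoeff x := by simp [mixedCoeff, x]
  simp only [poly, form, Fintype.sum_option, Option.elim_none, Option.elim_some, one_pow, mul_one,
    hsq, hmixed, rename_X, map_pow, map_one, monomial_zero', ← X_pow_eq_monomial, pow_one]
  rfl

theorem SpecialForm.homogEval₂_poly {k S : Type*} [CommSemiring k] [CommSemiring S] (f : k →+* S)
    (x : Fin (n + 1) → S) (y : Option J → S) : homogEval₂ f x y (P.poly k) = P.form x y := by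
  classical
  have hsq : ∀ o, eval₂ f x (P.squareCoeff X o) = P.squareCoeff x o := fun o => by
    simpa only [coe_eval₂Hom, eval₂_X] using P.map_squareCoeff (x := X) (eval₂Hom f x) o
  have hmixed : eval₂ f x (P.mixedCoeff X) = P.mixedCoeff x := by
    simpa only [coe_eval₂Hom, eval₂_X] using P.map_mixedCoeff (x := X) (eval₂Hom f x)
  have hprod : ∀ (j : J) (e : ℕ), ∏ i, y (some i) ^ Finsupp.single j e i = y (some j) ^ e :=
    fun j e => by simp [Finsupp.single_apply, pow_ite, Finset.prod_ite_eq]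
  have hsum : ∀ (j : J) (e : ℕ), ∑ i, Finsupp.single j e i = e :=
    fun j e => by simp [Finsupp.single_apply]
  simp only [poly_eq_rename, map_add, map_sum, homogEval₂_rename_mul_monomial, hsq, hmixed, hprod,
    hsum, form, Fintype.sum_option, Finsupp.coe_zero, Pi.zero_apply, pow_zero,
    Finset.prod_const_one, Finset.sum_const_zero]
  simp [mul_assoc]

end SpecialPolynomial

/-! ### Places and degenerations -/

section Place

variable {K : Type*} [Field K] {V : ValuationSubring K}
  {B O R : Type*} [CommRing B] [Algebra K B] [CommRing O] [Algebra V O] [CommRing R]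

/-- A reduction of the `K`-algebra `B` modulo the maximal ideal of `V`: a model `O` of `B` over `V`
with a map `ρ` to a ring over the residue field, such that every nonzero element of `B` becomes,
after multiplication by a constant, an element of `O` with nonzero reduction. -/
structure IsPlace (V : ValuationSubring K) [Algebra V O] (ι : O →+* B) (ρ : O →+* R) : Prop where
  injective : Function.Injective ι
  map_algebraMap : ∀ c : V, ι (algebraMap V O c) = algebraMap K B c
  reduction_eq_zero : ∀ c : V, V.valuation c < 1 → ρ (algebraMap V O c) = 0
  exists_smul : ∀ b ≠ 0, ∃ (c : K) (b' : O), ι b' = c • b ∧ ρ b' ≠ 0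

namespace IsPlace

variable {ι : O →+* B} {ρ : O →+* R}

theorem comp_injective (h : IsPlace V ι ρ) {R' : Type*} [CommRing R'] (f : R →+* R')
    (hf : Function.Injective f) : IsPlace V ι (f.comp ρ) where
  injective := h.injective
  map_algebraMap := h.map_algebraMap
  reduction_eq_zero c hc := by rw [RingHom.comp_apply, h.reduction_eq_zero c hc, map_zero]
  exists_smul b hb := by
    obtain ⟨c, b', hb', hρ⟩ := h.exists_smul b hb
    exact ⟨c, b', hb', (map_ne_zero_iff f hf).2 hρ⟩

theorem exists_residueMap (h : IsPlace V ι ρ) : ∃ φ : IsLocalRing.ResidueField V →+* R,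
    ρ.comp (algebraMap V O) = φ.comp (IsLocalRing.residue V) :=
  ⟨Ideal.Quotient.lift _ (ρ.comp (algebraMap V O)) fun c hc =>
    h.reduction_eq_zero c ((V.valuation_lt_one_iff c).1 hc), rfl⟩

theorem ne_zero_of_lift (h : IsPlace V ι ρ) {c : K} {b : B} {b' : O} (hb' : ι b' = c • b)
    (hρ : ρ b' ≠ 0) : c ≠ 0 := by
  rintro rfl
  rw [zero_smul, map_eq_zero_iff ι h.injective] at hb'
  exact hρ (by rw [hb', map_zero])

theorem exists_lift_smul (h : IsPlace V ι ρ) {u : K} (hu : V.valuation u ≤ 1) (b : O) :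
    ∃ b' : O, ι b' = u • ι b :=
  ⟨algebraMap V O ⟨u, (V.valuation_le_one_iff u).1 hu⟩ * b, by
    rw [map_mul, h.map_algebraMap, Algebra.smul_def]⟩

theorem reduction_lift_smul_eq_zero (h : IsPlace V ι ρ) {u : K} {b b' : O} (hb' : ι b' = u • ι b)
    (hu : V.valuation u ≤ 1) (hzero : V.valuation u < 1 ∨ ρ b = 0) : ρ b' = 0 := by
  have : b' = algebraMap V O ⟨u, (V.valuation_le_one_iff u).1 hu⟩ * b := h.injective <| by
    rw [hb', map_mul, h.map_algebraMap, Algebra.smul_def]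
  rcases hzero with hlt | hb
  · rw [this, map_mul, h.reduction_eq_zero ⟨u, _⟩ hlt, zero_mul]
  · rw [this, map_mul, hb, mul_zero]

theorem exists_smul_family (h : IsPlace V ι ρ) {T : Type*} [Finite T] (b : T → B)
    (hb : ∃ i, b i ≠ 0) :
    ∃ (c : K) (b' : T → O), (∀ i, ι (b' i) = c • b i) ∧ ∃ i, ρ (b' i) ≠ 0 := by
  choose! c b' hb' hρ using fun i (hi : b i ≠ 0) => h.exists_smul (b i) hi
  obtain ⟨i₀, hi₀, hmin⟩ :=
    Set.exists_min_image {i | b i ≠ 0} (fun i => V.valuation (c i)) (Set.toFinite _) hb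
  have hlift : ∀ i, ∃ z, ι z = c i₀ • b i := fun i => by
    by_cases hi : b i = 0
    · exact ⟨0, by rw [hi, map_zero, smul_zero]⟩
    · have hle : V.valuation (c i₀ / c i) ≤ 1 := by
        rw [map_div₀]
        exact div_le_one_of_le₀ (hmin i hi) zero_le
      obtain ⟨z, hz⟩ := h.exists_lift_smul hle (b' i)
      refine ⟨z, ?_⟩
      rw [hz, hb' i hi, smul_smul, div_mul_cancel₀ _ (h.ne_zero_of_lift (hb' i hi) (hρ i hi))]
  choose z hz using hlift
  have hz₀ : z i₀ = b' i₀ := h.injective (by rw [hz, hb' i₀ hi₀])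
  exact ⟨c i₀, z, hz, i₀, hz₀ ▸ hρ i₀ hi₀⟩

/-- Integral closedness of the model. -/
theorem exists_sqrt [IsDomain R] (h : IsPlace V ι ρ) {b : B} {g : O} (hb : b ^ 2 = ι g) :
    ∃ s : O, s ^ 2 = g := by
  suffices ∃ s : O, ι s = b by
    obtain ⟨s, hs⟩ := this
    exact ⟨s, h.injective (by rw [map_pow, hs, hb])⟩
  by_cases hb0 : b = 0
  · exact ⟨0, by rw [map_zero, hb0]⟩
  obtain ⟨c, b', hb', hρ⟩ := h.exists_smul b hb0
  have hc : 1 ≤ V.valuation c := by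
    by_contra! hlt
    have hsq : ι (b' ^ 2) = c ^ 2 • ι g := by rw [map_pow, hb', smul_pow, hb]
    have hlt2 : V.valuation (c ^ 2) < 1 := by
      rw [map_pow]
      exact pow_lt_one₀ zero_le hlt two_ne_zero
    have := h.reduction_lift_smul_eq_zero hsq hlt2.le (.inl hlt2)
    rw [map_pow] at this
    exact hρ (pow_eq_zero_iff two_ne_zero |>.1 this)
  have hinv : V.valuation c⁻¹ ≤ 1 := by
    rw [map_inv₀]
    exact inv_le_one_of_one_le₀ hc
  obtain ⟨s, hs⟩ := h.exists_lift_smul hinv b'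
  exact ⟨s, by rw [hs, hb', inv_smul_smul₀ (h.ne_zero_of_lift hb' hρ)]⟩

theorem isDomain [IsDomain R] (h : IsPlace V ι ρ) : IsDomain B := by
  have := ρ.domain_nontrivial
  have := h.injective.nontrivial
  have : NoZeroDivisors B := by
    refine ⟨fun {a b} hab => ?_⟩
    by_contra! ⟨ha, hb⟩
    obtain ⟨c, a', ha', hρa⟩ := h.exists_smul a ha
    obtain ⟨d, b', hb', hρb⟩ := h.exists_smul b hb
    have hmul : a' * b' = 0 := h.injective (by
      rw [map_mul, ha', hb', smul_mul_smul_comm, hab, smul_zero, map_zero])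
    exact mul_ne_zero hρa hρb (by rw [← map_mul, hmul, map_zero])
  exact NoZeroDivisors.to_isDomain B

theorem subtype_residue (V : ValuationSubring K) :
    IsPlace V V.subtype (IsLocalRing.residue V) where
  injective := Subtype.val_injective
  map_algebraMap _ := rfl
  reduction_eq_zero c hc := (IsLocalRing.residue_eq_zero_iff c).2 ((V.valuation_lt_one_iff c).2 hc)
  exists_smul b hb := ⟨b⁻¹, 1, by simp [hb], by simp⟩

/-- Reduction coefficient by coefficient (the Gauss extension). -/
theorem polynomial (h : IsPlace V ι ρ) :
    IsPlace V (Polynomial.mapRingHom ι) (Polynomial.mapRingHom ρ) where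
  injective := Polynomial.map_injective ι h.injective
  map_algebraMap c := by
    simp only [Polynomial.algebraMap_apply, Polynomial.coe_mapRingHom, Polynomial.map_C,
      h.map_algebraMap]
  reduction_eq_zero c hc := by
    simp only [Polynomial.algebraMap_apply, Polynomial.coe_mapRingHom, Polynomial.map_C,
      h.reduction_eq_zero c hc, Polynomial.C_0]
  exists_smul p hp := by
    obtain ⟨c, b', hb', i, hi⟩ := h.exists_smul_family (fun m : p.support => p.coeff m)
      ⟨⟨p.natDegree, Polynomial.natDegree_mem_support_of_nonzero hp⟩,
        Polynomial.leadingCoeff_ne_zero.2 hp⟩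
    refine ⟨c, ∑ m : p.support, Polynomial.monomial m (b' m), ?_, fun hzero => hi ?_⟩
    · simp only [map_sum, Polynomial.coe_mapRingHom, Polynomial.map_monomial, hb',
        ← Polynomial.smul_monomial, ← Finset.smul_sum]
      rw [Finset.sum_coe_sort p.support fun m => Polynomial.monomial m (p.coeff m),
        ← p.as_sum_support]
    · simpa [Polynomial.finsetSum_coeff, Polynomial.coeff_monomial, Subtype.coe_inj] using
        congrArg (fun q => q.coeff i) hzero

theorem mvPolynomial (h : IsPlace V ι ρ) (σ : Type*) :
    IsPlace V (MvPolynomial.map (σ := σ) ι) (MvPolynomial.map (σ := σ) ρ) where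
  injective := MvPolynomial.map_injective ι h.injective
  map_algebraMap c := by
    simp only [MvPolynomial.algebraMap_apply, MvPolynomial.map_C, h.map_algebraMap]
  reduction_eq_zero c hc := by
    simp only [MvPolynomial.algebraMap_apply, MvPolynomial.map_C, h.reduction_eq_zero c hc,
      map_zero]
  exists_smul p hp := by
    classical
    obtain ⟨m₀, hm₀⟩ := MvPolynomial.ne_zero_iff.1 hp
    obtain ⟨c, b', hb', i, hi⟩ := h.exists_smul_family (fun m : p.support => p.coeff m)
      ⟨⟨m₀, MvPolynomial.mem_support_iff.2 hm₀⟩, hm₀⟩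
    refine ⟨c, ∑ m : p.support, MvPolynomial.monomial m (b' m), ?_, fun hzero => hi ?_⟩
    · simp only [map_sum, MvPolynomial.map_monomial, hb', ← MvPolynomial.smul_monomial,
        ← Finset.smul_sum]
      rw [Finset.sum_coe_sort p.support fun m => MvPolynomial.monomial m (p.coeff m), ← p.as_sum]
    · simpa [MvPolynomial.coeff_sum, MvPolynomial.coeff_monomial, Subtype.coe_inj] using
        congrArg (MvPolynomial.coeff i) hzero

end IsPlace

end Place

section Quadratic

/-- The map `S[s]/(s² - F) → T[s]/(s² - G)` induced by a homomorphism `S → T` taking `F` to `G`. -/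
def quadraticMap {S T : Type*} [CommRing S] [CommRing T] (f : S →+* T) {F : S} {G : T}
    (h : f F = G) : QuadraticAlgebra S F 0 →+* QuadraticAlgebra T G 0 where
  toFun z := ⟨f z.re, f z.im⟩
  map_one' := QuadraticAlgebra.ext (map_one f) (map_zero f)
  map_zero' := QuadraticAlgebra.ext (map_zero f) (map_zero f)
  map_mul' x y := by ext <;> simp [h]
  map_add' x y := by ext <;> simp

theorem IsPlace.quadratic {K : Type*} [Field K] {V : ValuationSubring K} {B O R : Type*}
    [CommRing B] [Algebra K B] [CommRing O] [Algebra V O] [CommRing R] {ι : O →+* B} {ρ : O →+* R}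
    (h : IsPlace V ι ρ) {F : O} {G : B} {F' : R} (hι : ι F = G) (hρ : ρ F = F') :
    IsPlace V (quadraticMap ι hι) (quadraticMap ρ hρ) where
  injective _ _ hxy := QuadraticAlgebra.ext (h.injective (congrArg QuadraticAlgebra.re hxy))
    (h.injective (congrArg QuadraticAlgebra.im hxy))
  map_algebraMap c := QuadraticAlgebra.ext (h.map_algebraMap c) (map_zero ι)
  reduction_eq_zero c hc := QuadraticAlgebra.ext (h.reduction_eq_zero c hc) (map_zero ρ)
  exists_smul b hb := by
    obtain ⟨c, b', hb', hne⟩ := h.exists_smul_family ![b.re, b.im] (by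
      by_contra! hcon
      exact hb (QuadraticAlgebra.ext (hcon 0) (hcon 1)))
    refine ⟨c, ⟨b' 0, b' 1⟩, ?_, fun hzero => ?_⟩
    · ext
      · exact hb' 0
      · exact hb' 1
    · obtain ⟨h₀, h₁⟩ := QuadraticAlgebra.ext_iff.1 hzero
      obtain ⟨i, hi⟩ := hne
      fin_cases i
      · exact hi h₀
      · exact hi h₁

variable {R : Type*} [CommRing R] {F : R}

/-- A relation `p² = F q²` differentiates to `0 = δ F * q²`, so `F` is not a square in the fraction
field. -/
theorem isDomain_quadratic [IsDomain R] [CharP R 2] (δ : Derivation ℤ R R) (hδ : δ F ≠ 0) :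
    IsDomain (QuadraticAlgebra R F 0) := by
  have eq_zero_of_sq : ∀ p q : R, p ^ 2 = F * q ^ 2 → p = 0 ∧ q = 0 := fun p q h => by
    have hder : δ F * q ^ 2 = 0 := by
      have := congrArg δ h
      rwa [Derivation.leibniz, deriv_sq_of_charTwo, deriv_sq_of_charTwo, smul_zero, zero_add,
        smul_eq_mul, mul_comm, eq_comm] at this
    have hq : q = 0 := by simpa [hδ] using hder
    exact ⟨by simpa [hq] using h, hq⟩
  have norm_eq_zero : ∀ z : QuadraticAlgebra R F 0, QuadraticAlgebra.norm z = 0 → z = 0 :=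
    fun z hz => by
      rw [QuadraticAlgebra.norm_def] at hz
      obtain ⟨hre, him⟩ := eq_zero_of_sq z.re z.im (by linear_combination hz)
      exact QuadraticAlgebra.ext hre him
  have : Nontrivial (QuadraticAlgebra R F 0) :=
    ⟨⟨1, 0, fun h => one_ne_zero (congrArg QuadraticAlgebra.re h)⟩⟩
  have : NoZeroDivisors (QuadraticAlgebra R F 0) := ⟨fun {a b} hab => by
    have hnorm : QuadraticAlgebra.norm a * QuadraticAlgebra.norm b = 0 := by
      rw [← map_mul, hab, QuadraticAlgebra.norm_def]
      simp
    exact (mul_eq_zero.1 hnorm).imp (norm_eq_zero a) (norm_eq_zero b)⟩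
  exact NoZeroDivisors.to_isDomain _

/-- The extension to `R[s]/(s² - F)`, killing `s`, of a derivation which kills `F`. -/
def quadraticDer (δ : Derivation ℤ R R) (hδ : δ F = 0) :
    Derivation ℤ (QuadraticAlgebra R F 0) (QuadraticAlgebra R F 0) :=
  Derivation.mk'
    { toFun := fun z => ⟨δ z.re, δ z.im⟩
      map_add' := fun x y => by ext <;> simp
      map_smul' := fun c x => by ext <;> simp }
    fun x y => by
      ext
      · simp [hδ]
        ring
      · simp
        ring

end Quadratic

section Degeneration
open MvPolynomial

variable {n : ℕ} {J K : Type*} [Fintype J] [Field K]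

/-- A polynomial over a valuation ring `V` which reduces to the special polynomial `P.poly` over
the residue field. Homogenised with respect to the variables indexed by `J`, it is a quadratic
form in these variables, and of degree `2 * halfDegree` if each of them has degree `1`. -/
structure Degeneration (P : SpecialForm n J) (V : ValuationSubring K) where
  poly : MvPolynomial (Fin (n + 1) ⊕ J) V
  map_residue : map (IsLocalRing.residue V) poly = P.poly (IsLocalRing.ResidueField V)
  halfDegree : ℕ
  degree_eq : ∀ m, coeff m poly ≠ 0 →
    ∑ i, m (.inl i) + ∑ j, m (.inr j) = 2 * halfDegree ∧ ∑ j, m (.inr j) ≤ 2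

variable {P : SpecialForm n J} {V : ValuationSubring K}

/-- The value at `(x, y)` of the homogenised polynomial. -/
noncomputable def Degeneration.form (G : Degeneration P V) {B : Type*} [CommRing B] [Algebra K B]
    (x : Fin (n + 1) → B) (y : Option J → B) : B :=
  homogEval₂ ((algebraMap K B).comp V.subtype) x y G.poly

/-- The solution is rescaled so that `x` becomes `a • x` and the coordinates of `y` become integral
with nonzero reduction. -/
theorem IsPlace.exists_reduction {B O R : Type*} [CommRing B] [Algebra K B] [CommRing O]
    [Algebra V O] [CommRing R] [IsDomain R] {ι : O →+* B} {ρ : O →+* R} (h : IsPlace V ι ρ)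
    (G : Degeneration P V) {x : Fin (n + 1) → B} {y : Option J → B} {s : B}
    (hs : s ^ 2 = G.form x y) (hy : ∃ o, y o ≠ 0) {a : K} (ha : a ≠ 0) {x' : Fin (n + 1) → O}
    (hx' : ∀ i, ι (x' i) = a • x i) :
    ∃ (y' : Option J → R) (s' : R), (∃ o, y' o ≠ 0) ∧
      s' ^ 2 = P.form (fun i => ρ (x' i)) y' := by
  have hscale : ∀ o : Option J, o.elim 1 (fun _ => a) ≠ 0 := fun o => by cases o <;> simp [ha]
  obtain ⟨c, y', hy', hne⟩ := h.exists_smul_family (fun o => o.elim 1 (fun _ => a) • y o)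
    (hy.imp fun o ho => smul_ne_zero (hscale o) ho)
  let g := homogEval₂ (algebraMap V O) x' y' G.poly
  have hg : (algebraMap K B (a ^ G.halfDegree * c) * s) ^ 2 = ι g := by
    have hsmul := homogEval₂_smul ((algebraMap K B).comp V.subtype) x y G.poly G.degree_eq
      (algebraMap K B a) (algebraMap K B c)
    rw [← map_pow, ← map_mul] at hsmul
    rw [mul_pow, hs, Degeneration.form, ← hsmul, map_homogEval₂,
      show ι.comp (algebraMap V O) = (algebraMap K B).comp V.subtype from
        RingHom.ext h.map_algebraMap]
    congr 2
    · exact funext fun i => by rw [hx', Algebra.smul_def]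
    · exact funext fun o => by cases o <;> simp [hy', Algebra.smul_def, mul_assoc]
  obtain ⟨s', hs'⟩ := h.exists_sqrt hg
  obtain ⟨φ, hφ⟩ := h.exists_residueMap
  refine ⟨fun o => ρ (y' o), ρ s', hne, ?_⟩
  rw [← map_pow, hs', map_homogEval₂, hφ, ← homogEval₂_map, G.map_residue, P.homogEval₂_poly]

end Degeneration

/-! ### Newton polygons of polynomial curves -/

section NewtonPolygon

variable {Γ : Type*} [LinearOrderedCommGroupWithZero Γ] {ν : ℕ → Γ}

theorem mul_pow_add_le_mul_pow_iff {s : Γ} (hs : s ≠ 0) (a b : Γ) (m k : ℕ) :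
    a * s ^ (m + k) ≤ b * s ^ m ↔ a * s ^ k ≤ b := by
  rw [add_comm, pow_add, ← mul_assoc, mul_le_mul_iff_left₀ (pow_pos (zero_lt_iff.2 hs) m)]

/-- For coefficients with absolute values `ν`, the terms of maximal absolute value at a point of
absolute value `r` range from degree `m` to degree `m'`. -/
structure IsNewtonEdge (ν : ℕ → Γ) (r : Γ) (m m' : ℕ) : Prop where
  ne_zero : r ≠ 0
  eq : ν m' * r ^ m' = ν m * r ^ m
  lt_of_lt : ∀ j < m, ν j * r ^ j < ν m * r ^ m
  le : ∀ j, ν j * r ^ j ≤ ν m * r ^ m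
  lt_of_gt : ∀ j > m', ν j * r ^ j < ν m * r ^ m

/-- The last term of maximal absolute value at a point of absolute value `r` has degree `m`. The
vertex in degree `0` is seen at `r = 0`, since `0 ^ 0 = 1`. -/
structure IsNewtonVertex (ν : ℕ → Γ) (r : Γ) (m : ℕ) : Prop where
  le : ∀ j, ν j * r ^ j ≤ ν m * r ^ m
  lt_of_gt : ∀ j > m, ν j * r ^ j < ν m * r ^ m

theorem IsNewtonEdge.isNewtonVertex {r : Γ} {m m' : ℕ} (h : IsNewtonEdge ν r m m') :
    IsNewtonVertex ν r m' where
  le j := (h.le j).trans_eq h.eq.symm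
  lt_of_gt j hj := (h.lt_of_gt j hj).trans_eq h.eq.symm

theorem isNewtonVertex_zero (h : ν 0 ≠ 0) : IsNewtonVertex ν 0 0 := by
  have hlt : ∀ j > 0, ν j * 0 ^ j < ν 0 * 0 ^ 0 := fun j hj => by
    simpa [zero_pow hj.ne', zero_lt_iff] using h
  refine ⟨fun j => ?_, hlt⟩
  rcases j.eq_zero_or_pos with rfl | hj
  · exact le_rfl
  · exact (hlt j hj).le

/-- The slope `r` is the smallest one at which a term of degree greater than `m` becomes as large as
the term of degree `m`, and `m + k₁` is the last degree in which this happens. -/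
theorem exists_min_slope (hroot : ∀ k ≠ 0, ∀ g : Γ, ∃ r, r ^ k = g) {m M : ℕ} (hνm : ν m ≠ 0)
    (hmM : m < M) (hM : ν M ≠ 0) (hν : ∀ j > M, ν j = 0) :
    ∃ (r : Γ) (k₁ : ℕ), k₁ ≠ 0 ∧ ν (m + k₁) * r ^ k₁ = ν m ∧
      (∀ k ≠ 0, ν (m + k) * r ^ k ≤ ν m) ∧ ∀ k > k₁, ν (m + k) * r ^ k < ν m := by
  let S : Set ℕ := {k | k ≠ 0 ∧ ν (m + k) ≠ 0}
  have hfin : S.Finite := (Set.finite_Iic M).subset fun k hk => not_lt.1 fun hlt =>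
    hk.2 (hν (m + k) (hlt.trans_le (Nat.le_add_left k m)))
  have hslope : ∀ k ∈ S, ∃ t, ν (m + k) * t ^ k = ν m := fun k hk => by
    obtain ⟨t, ht⟩ := hroot k hk.1 (ν m / ν (m + k))
    exact ⟨t, by rw [ht, mul_div_cancel₀ _ hk.2]⟩
  choose! t ht using hslope
  obtain ⟨k₀, hk₀, hmin⟩ := Set.exists_min_image S t hfin
    ⟨M - m, by lia, by rwa [Nat.add_sub_cancel' hmM.le]⟩
  have hle : ∀ k ≠ 0, ν (m + k) * t k₀ ^ k ≤ ν m := fun k hk => by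
    by_cases hνk : ν (m + k) = 0
    · rw [hνk, zero_mul]
      exact zero_le
    · exact (mul_le_mul_right (pow_le_pow_left' (hmin k ⟨hk, hνk⟩) k) _).trans_eq (ht k ⟨hk, hνk⟩)
  obtain ⟨k₁, ⟨hk₁, heq⟩, hmax⟩ := Set.exists_max_image {k ∈ S | ν (m + k) * t k₀ ^ k = ν m} id
    (hfin.subset fun k hk => hk.1) ⟨k₀, hk₀, ht k₀ hk₀⟩
  refine ⟨t k₀, k₁, hk₁.1, heq, hle, fun k hk => ?_⟩
  have hk0 : k ≠ 0 := (k₁.zero_le.trans_lt hk).ne'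
  refine lt_of_le_of_ne (hle k hk0) fun he => hk.not_ge (hmax k ⟨⟨hk0, fun h0 => hνm ?_⟩, he⟩)
  rw [← he, h0, zero_mul]

namespace IsNewtonVertex

variable {γ r : Γ} {m : ℕ}

theorem mul_pow_ne_zero (h : IsNewtonVertex ν γ m) : ν m * γ ^ m ≠ 0 :=
  (zero_le.trans_lt (h.lt_of_gt (m + 1) m.lt_succ_self)).ne'

theorem mul_pow_lt_of_lt (h : IsNewtonVertex ν γ m) (hr : γ < r) {j : ℕ} (hj : j < m) :
    ν j * r ^ j < ν m * r ^ m := by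
  obtain ⟨k, rfl⟩ := Nat.exists_eq_add_of_lt hj
  obtain ⟨hν, hγ⟩ := mul_ne_zero_iff.1 h.mul_pow_ne_zero
  rw [add_assoc j k 1] at *
  have hr0 : r ≠ 0 := (zero_le.trans_lt hr).ne'
  have hγ0 : γ ≠ 0 := (pow_ne_zero_iff (by lia)).1 hγ
  rw [← not_le, mul_pow_add_le_mul_pow_iff hr0, not_le]
  have hle : ν j ≤ ν (j + (k + 1)) * γ ^ (k + 1) := by
    have := h.le j
    rwa [pow_add, mul_comm (γ ^ j), ← mul_assoc,
      mul_le_mul_iff_left₀ (pow_pos (zero_lt_iff.2 hγ0) j)] at this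
  exact hle.trans_lt (mul_lt_mul_of_pos_left (pow_lt_pow_left₀ hr zero_le k.succ_ne_zero)
    (zero_lt_iff.2 hν))

theorem exists_isNewtonEdge (h : IsNewtonVertex ν γ m)
    (hroot : ∀ k ≠ 0, ∀ g : Γ, ∃ r, r ^ k = g) {M : ℕ} (hmM : m < M) (hM : ν M ≠ 0)
    (hν : ∀ j > M, ν j = 0) : ∃ r, ∃ m' > m, IsNewtonEdge ν r m m' := by
  obtain ⟨hνm, -⟩ := mul_ne_zero_iff.1 h.mul_pow_ne_zero
  obtain ⟨r, k₁, hk₁, heq, hright, hlast⟩ := exists_min_slope hroot hνm hmM hM hν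
  have hr0 : r ≠ 0 := fun h0 => hνm (by rw [← heq, h0, zero_pow hk₁, mul_zero])
  have hpow : ∀ k s, ν (m + k) * s ^ (m + k) = ν (m + k) * s ^ k * s ^ m := fun k s => by
    rw [add_comm, pow_add, mul_assoc]
  have hγ : γ < r := by
    by_contra! hle
    refine (h.lt_of_gt (m + k₁) (Nat.lt_add_of_pos_right (Nat.pos_of_ne_zero hk₁))).not_ge ?_
    rw [hpow, ← heq]
    gcongr
  have hpos : 0 < r ^ m := pow_pos (zero_lt_iff.2 hr0) m
  refine ⟨r, m + k₁, Nat.lt_add_of_pos_right (Nat.pos_of_ne_zero hk₁), hr0, ?_,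
    fun j hj => h.mul_pow_lt_of_lt hγ hj, fun j => ?_, fun j hj => ?_⟩
  · rw [hpow, heq]
  · rcases lt_trichotomy j m with hj | rfl | hj
    · exact (h.mul_pow_lt_of_lt hγ hj).le
    · exact le_rfl
    · obtain ⟨k, rfl⟩ := Nat.exists_eq_add_of_lt hj
      rw [add_assoc m k 1, hpow]
      exact mul_le_mul_left (hright (k + 1) k.succ_ne_zero) _
  · obtain ⟨k, rfl⟩ := Nat.exists_eq_add_of_le ((Nat.le_add_right m k₁).trans hj.le)
    rw [hpow, mul_lt_mul_iff_left₀ hpos]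
    exact hlast k (Nat.lt_of_add_lt_add_left hj)

end IsNewtonVertex

/-- Traversing the Newton polygon edge by edge. -/
theorem newtonPolygon_induction (hroot : ∀ k ≠ 0, ∀ g : Γ, ∃ r, r ^ k = g) {M : ℕ}
    (h0 : ν 0 ≠ 0) (hM : ν M ≠ 0) (hν : ∀ j > M, ν j = 0) {p : ℕ → Prop} (hp : p 0)
    (hedge : ∀ r m m', IsNewtonEdge ν r m m' → p m → p m') : p M := by
  suffices ∀ m γ, IsNewtonVertex ν γ m → p m → p M from this 0 0 (isNewtonVertex_zero h0) hp
  intro m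
  induction hk : M - m using Nat.strong_induction_on generalizing m with
  | _ k ih =>
  intro γ hm hpm
  rcases lt_trichotomy m M with hlt | rfl | hgt
  · obtain ⟨r, m', hm', hr⟩ := hm.exists_isNewtonEdge hroot hlt hM hν
    exact ih (M - m') (by lia) m' rfl r hr.isNewtonVertex (hedge r m m' hr hpm)
  · exact hpm
  · exact absurd (hν m hgt) (left_ne_zero_of_mul hm.mul_pow_ne_zero)

end NewtonPolygon

section GaussNorm

variable {K : Type*} [Field K] {V : ValuationSubring K}
  {B O R : Type*} [CommRing B] [Algebra K B] [CommRing O] [Algebra V O] [CommRing R]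
  {ι : O →+* B} {ρ : O →+* R} {T : Type*} {b : T → B} {g : V.ValueGroup}

/-- The absolute value `g` of the vector `b`: it is zero if `b = 0`, and otherwise `c • b` is
integral with nonzero reduction for a constant `c` of absolute value `g⁻¹`. -/
def IsGaussNorm (V : ValuationSubring K) (ι : O →+* B) (ρ : O →+* R) (b : T → B)
    (g : V.ValueGroup) : Prop :=
  (b = 0 ∧ g = 0) ∨ ∃ (c : K) (b' : T → O), (∀ i, ι (b' i) = c • b i) ∧ (∃ i, ρ (b' i) ≠ 0) ∧
    V.valuation c * g = 1

theorem IsPlace.reduction_eq_zero_of_lifts (h : IsPlace V ι ρ) {a c : K} {b : B} {z z' : O}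
    (hz : ι z = a • b) (hz' : ι z' = c • b) (hle : V.valuation a ≤ V.valuation c)
    (hzero : V.valuation a < V.valuation c ∨ ρ z' = 0) : ρ z = 0 := by
  by_cases hc : c = 0
  · have ha : a = 0 := by simpa [hc] using hle
    rw [h.injective (hz.trans (by rw [ha, zero_smul, map_zero] : a • b = ι 0)), map_zero]
  · have hcV : 0 < V.valuation c := zero_lt_iff.2 (V.valuation.ne_zero_iff.2 hc)
    refine h.reduction_lift_smul_eq_zero (u := a / c) (b := z') ?_ ?_ (hzero.imp_left fun hlt => ?_)
    · rw [hz, hz', smul_smul, div_mul_cancel₀ _ hc]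
    · rwa [map_div₀, div_le_one₀ hcV]
    · rwa [map_div₀, div_lt_one₀ hcV]

theorem IsPlace.exists_isGaussNorm (h : IsPlace V ι ρ) [Finite T] (b : T → B) :
    ∃ g, IsGaussNorm V ι ρ b g := by
  by_cases hb : b = 0
  · exact ⟨0, .inl ⟨hb, rfl⟩⟩
  obtain ⟨c, b', hb', i, hi⟩ := h.exists_smul_family b (Function.ne_iff.1 hb)
  exact ⟨(V.valuation c)⁻¹, .inr ⟨c, b', hb', ⟨i, hi⟩,
    mul_inv_cancel₀ (V.valuation.ne_zero_iff.2 (h.ne_zero_of_lift (hb' i) hi))⟩⟩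

namespace IsGaussNorm

theorem eq_zero_iff (hg : IsGaussNorm V ι ρ b g) (h : IsPlace V ι ρ) : g = 0 ↔ b = 0 := by
  obtain ⟨hb, hg⟩ | ⟨c, b', hb', ⟨i, hi⟩, hc⟩ := hg
  · exact iff_of_true hg hb
  · refine iff_of_false (right_ne_zero_of_mul_eq_one hc) fun hb => hi ?_
    have : b' i = 0 := h.injective (by rw [hb', hb, Pi.zero_apply, smul_zero, map_zero])
    rw [this, map_zero]

theorem exists_lift (hg : IsGaussNorm V ι ρ b g) (h : IsPlace V ι ρ) {a : K}
    (ha : V.valuation a * g ≤ 1) (i : T) : ∃ z, ι z = a • b i := by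
  obtain ⟨rfl, -⟩ | ⟨c, b', hb', ⟨j, hj⟩, hc⟩ := hg
  · exact ⟨0, by rw [map_zero, Pi.zero_apply, smul_zero]⟩
  · have hle : V.valuation (a / c) ≤ 1 := by
      rwa [map_div₀, eq_inv_of_mul_eq_one_left hc, div_inv_eq_mul]
    obtain ⟨z, hz⟩ := h.exists_lift_smul hle (b' i)
    exact ⟨z, by rw [hz, hb', smul_smul, div_mul_cancel₀ _ (h.ne_zero_of_lift (hb' j) hj)]⟩

theorem exists_reduction_ne_zero_iff (hg : IsGaussNorm V ι ρ b g) (h : IsPlace V ι ρ) {a : K}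
    {b' : T → O} (hb' : ∀ i, ι (b' i) = a • b i) :
    (∃ i, ρ (b' i) ≠ 0) ↔ V.valuation a * g = 1 := by
  obtain ⟨rfl, rfl⟩ | ⟨c, b'', hb'', ⟨j, hj⟩, hc⟩ := hg
  · have hzero : ∀ i, b' i = 0 := fun i => h.injective (by simp [hb'])
    simp [hzero]
  have hg : g = (V.valuation c)⁻¹ := eq_inv_of_mul_eq_one_right hc
  have hcV : V.valuation c ≠ 0 := V.valuation.ne_zero_iff.2 (h.ne_zero_of_lift (hb'' j) hj)
  rw [hg, mul_inv_eq_one₀ hcV]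
  constructor
  · rintro ⟨i, hi⟩
    refine le_antisymm ?_ ?_
    · by_contra! hlt
      exact hj (h.reduction_eq_zero_of_lifts (hb'' j) (hb' j) hlt.le (.inl hlt))
    · by_contra! hlt
      exact hi (h.reduction_eq_zero_of_lifts (hb' i) (hb'' i) hlt.le (.inl hlt))
  · intro heq
    by_contra! hzero
    exact hj (h.reduction_eq_zero_of_lifts (hb'' j) (hb' j) heq.ge (.inr (hzero j)))

end IsGaussNorm

end GaussNorm

section EdgeStep
open Polynomial

variable {K : Type*} [Field K] {V : ValuationSubring K}
  {B O L : Type*} [CommRing B] [Algebra K B] [CommRing O] [Algebra V O] [Field L]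
  {ι : O →+* B} {ρ : O →+* L} {n : ℕ} {J : Type*} [Fintype J] {P : SpecialForm n J}

theorem Degeneration.map_form (G : Degeneration P V) {B' : Type*} [CommRing B'] [Algebra K B']
    (g : B →ₐ[K] B') (x : Fin (n + 1) → B) (y : Option J → B) :
    g (G.form x y) = G.form (fun i => g (x i)) fun o => g (y o) := by
  rw [← AlgHom.coe_toRingHom, form, map_homogEval₂, ← RingHom.comp_assoc, g.comp_algebraMap]
  rfl

theorem coeff_smul_comp_C_mul_X (p : B[X]) (a t : K) (j : ℕ) :
    (a • p.comp (C (algebraMap K B t) * X)).coeff j = (a * t ^ j) • p.coeff j := by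
  rw [coeff_smul, comp_C_mul_X_coeff, ← map_pow, mul_comm, ← Algebra.smul_def, smul_smul]

theorem IsPlace.exists_lift_smul_comp (h : IsPlace V ι ρ) {T : Type*} {x : T → B[X]}
    {ν : ℕ → V.ValueGroup} (hν : ∀ j, IsGaussNorm V ι ρ (fun i => (x i).coeff j) (ν j)) {a t : K}
    (hle : ∀ j, V.valuation (a * t ^ j) * ν j ≤ 1) :
    ∃ x' : T → O[X], (∀ i, (x' i).map ι = a • (x i).comp (C (algebraMap K B t) * X)) ∧
      ∀ j i, ι ((x' i).coeff j) = (a * t ^ j) • (x i).coeff j := by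
  have hlift : ∀ i, ∃ q : O[X], q.map ι = a • (x i).comp (C (algebraMap K B t) * X) := fun i =>
    (mem_lifts _).1 <| (lifts_iff_coeff_lifts _).2 fun j => by
      rw [coeff_smul_comp_C_mul_X]
      exact (hν j).exists_lift h (hle j) i
  choose x' hx' using hlift
  exact ⟨x', hx', fun j i => by rw [← coeff_map, hx', coeff_smul_comp_C_mul_X]⟩

/-- After a scaling by a constant, `b` is integral with nondegenerate reduction. -/
def ScaledNondegenerate (K : Type*) [Field K] [Algebra K B] (ι : O →+* B) (ρ : O →+* L)
    (D : Fin n → Derivation ℤ L L) (b : Fin (n + 1) → B) : Prop :=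
  ∃ (c : K) (b' : Fin (n + 1) → O), (∀ i, ι (b' i) = c • b i) ∧
    DlogNondegenerate D fun i => ρ (b' i)

/-- The substitution `u ↦ t u` and scaling by `a` make the reduction of `x` live in the degrees
`m, …, m'`. -/
theorem DlogNondegenerate.of_rescaled [CharP L 2] (h : IsPlace V ι ρ) (G : Degeneration P V)
    {D : Fin n → Derivation ℤ L L} {x : Fin (n + 1) → B[X]} {y : Option J → B[X]} {s : B[X]}
    (hy : ∃ o, y o ≠ 0) (hs : s ^ 2 = G.form x y) {a t : K} (ha : a ≠ 0) (ht : t ≠ 0)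
    {x' : Fin (n + 1) → O[X]}
    (hx' : ∀ i, (x' i).map ι = a • (x i).comp (C (algebraMap K B t) * X)) {m m' : ℕ}
    (hm : ∀ i, ∀ j < m, ρ ((x' i).coeff j) = 0) (hm' : ∀ i, ∀ j > m', ρ ((x' i).coeff j) = 0)
    (hnd : DlogNondegenerate D fun i => ρ ((x' i).coeff m))
    (hne : ∃ i, ρ ((x' i).coeff m') ≠ 0) :
    DlogNondegenerate D fun i => ρ ((x' i).coeff m') := by
  let g : B[X] →ₐ[K] B[X] := (aeval (C (algebraMap K B t) * X)).restrictScalars K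
  have hg : ∀ p : B[X], p ≠ 0 → g p ≠ 0 := fun p hp => by
    have hunit : IsUnit (algebraMap K B t) := (IsUnit.mk0 t ht).map _
    exact (comp_C_mul_X_eq_zero_iff hunit.mem_nonZeroDivisors).not.2 hp
  obtain ⟨y', s', hy', hs'⟩ := h.polynomial.exists_reduction G (x := fun i => g (x i))
    (y := fun o => g (y o)) (s := g s) (by rw [← map_pow, hs, G.map_form])
    (hy.imp fun o ho => hg _ ho) ha hx'
  simp only [← coeff_map] at hm hm' hnd hne ⊢
  exact P.dlogNondegenerate_coeff hy' hs' (fun i => X_pow_dvd_iff.2 (hm i))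
    (fun i => natDegree_le_iff_coeff_eq_zero.2 (hm' i)) hnd hne

variable [CharP L 2] {D : Fin n → Derivation ℤ L L} {x : Fin (n + 1) → B[X]} {y : Option J → B[X]}
  {s : B[X]} {ν : ℕ → V.ValueGroup}

theorem ScaledNondegenerate.of_isNewtonEdge (h : IsPlace V ι ρ) (G : Degeneration P V)
    (hy : ∃ o, y o ≠ 0) (hs : s ^ 2 = G.form x y)
    (hν : ∀ j, IsGaussNorm V ι ρ (fun i => (x i).coeff j) (ν j)) {r : V.ValueGroup} {m m' : ℕ}
    (hr : IsNewtonEdge ν r m m') (hm : ScaledNondegenerate K ι ρ D fun i => (x i).coeff m) :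
    ScaledNondegenerate K ι ρ D fun i => (x i).coeff m' := by
  obtain ⟨c, b, hb, hnd⟩ := hm
  obtain ⟨τ, rfl⟩ := V.valuation_surjective r
  have hτ : τ ≠ 0 := V.valuation.ne_zero_iff.1 hr.ne_zero
  have hc : V.valuation c * ν m = 1 := ((hν m).exists_reduction_ne_zero_iff h hb).1 ⟨0, hnd.1 0⟩
  let a : K := c / τ ^ m
  have ha : a ≠ 0 := div_ne_zero (h.ne_zero_of_lift (hb 0) (hnd.1 0)) (pow_ne_zero m hτ)
  have hval : ∀ j, V.valuation (a * τ ^ j) * ν j = V.valuation a * (ν j * V.valuation τ ^ j) :=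
    fun j => by rw [map_mul, map_pow, mul_assoc, mul_comm (ν j)]
  have ham : a * τ ^ m = c := div_mul_cancel₀ c (pow_ne_zero m hτ)
  have hone : V.valuation a * (ν m * V.valuation τ ^ m) = 1 := by rw [← hval, ham, hc]
  have hle : ∀ j, V.valuation (a * τ ^ j) * ν j ≤ 1 := fun j => by
    rw [hval, ← hone]
    exact mul_le_mul_right (hr.le j) _
  obtain ⟨x', hx', hcoeff⟩ := h.exists_lift_smul_comp hν hle
  have hred : ∀ j, (∃ i, ρ ((x' i).coeff j) ≠ 0) ↔
      V.valuation a * (ν j * V.valuation τ ^ j) = 1 := fun j => by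
    rw [(hν j).exists_reduction_ne_zero_iff h (hcoeff j), hval]
  have hzero : ∀ j, ν j * V.valuation τ ^ j < ν m * V.valuation τ ^ m →
      ∀ i, ρ ((x' i).coeff j) = 0 := fun j hlt => by
    by_contra! hne
    refine hlt.ne ((mul_right_inj' (V.valuation.ne_zero_iff.2 ha)).1 ?_)
    rw [(hred j).1 hne, hone]
  have hxm : ∀ i, (x' i).coeff m = b i := fun i => h.injective (by rw [hcoeff, ham, hb])
  refine ⟨a * τ ^ m', fun i => (x' i).coeff m', hcoeff m', ?_⟩
  exact .of_rescaled h G hy hs ha hτ hx' (fun i j hj => hzero j (hr.lt_of_lt j hj) i)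
    (fun i j hj => hzero j (hr.lt_of_gt j hj) i) (by simpa only [hxm] using hnd)
    ((hred m').2 (by rw [hr.eq, hone]))

theorem ScaledNondegenerate.coeff_of_coeff_zero [IsAlgClosed K] (h : IsPlace V ι ρ)
    (G : Degeneration P V) (hy : ∃ o, y o ≠ 0) (hs : s ^ 2 = G.form x y) {M : ℕ}
    (hM : ∀ i, (x i).natDegree ≤ M) (hMne : ∃ i, (x i).coeff M ≠ 0)
    (h0 : ScaledNondegenerate K ι ρ D fun i => (x i).coeff 0) :
    ScaledNondegenerate K ι ρ D fun i => (x i).coeff M := by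
  choose ν hν using fun j => h.exists_isGaussNorm fun i => (x i).coeff j
  have hroot : ∀ k ≠ 0, ∀ g : V.ValueGroup, ∃ r, r ^ k = g := fun k hk g => by
    obtain ⟨a, rfl⟩ := V.valuation_surjective g
    obtain ⟨z, hz⟩ := IsAlgClosed.exists_pow_nat_eq a (Nat.pos_of_ne_zero hk)
    exact ⟨V.valuation z, by rw [← map_pow, hz]⟩
  refine newtonPolygon_induction hroot ?_ ?_ ?_ (p := fun j => ScaledNondegenerate K ι ρ D fun i =>
    (x i).coeff j) h0 fun r m m' hr hm => hm.of_isNewtonEdge h G hy hs hν hr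
  · obtain ⟨c, b, hb, hnd⟩ := h0
    exact right_ne_zero_of_mul_eq_one
      (((hν 0).exists_reduction_ne_zero_iff h hb).1 ⟨0, hnd.1 0⟩)
  · exact ((hν M).eq_zero_iff h).not.2 fun hzero => hMne.elim fun i hi => hi (congrFun hzero i)
  · exact fun j hj => ((hν j).eq_zero_iff h).2 <| funext fun i =>
      coeff_eq_zero_of_natDegree_lt ((hM i).trans_lt hj)

end EdgeStep

/-! ### Derivations killing the special form -/

section SpecialFormDerivation
open MvPolynomial

/-- Restriction of scalars to `ℤ`, the base ring used here for all derivations. -/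
def intDerivation {R A : Type*} [CommRing R] [CommRing A] [Algebra R A] (δ : Derivation R A A) :
    Derivation ℤ A A :=
  δ.restrictScalars ℤ

theorem intDerivation_apply {R A : Type*} [CommRing R] [CommRing A] [Algebra R A]
    (δ : Derivation R A A) (a : A) : intDerivation δ a = δ a := rfl

namespace SpecialForm

variable {n : ℕ} {J : Type*} (P : SpecialForm n J)

theorem mixedCoeff_X_ne_zero (k : Type*) [Field k] :
    P.mixedCoeff (fun i => (X (Sum.inl i) : MvPolynomial (Fin (n + 1) ⊕ J) k)) ≠ 0 :=
  mul_ne_zero (pow_ne_zero _ (X_ne_zero _))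
    (pow_ne_zero _ (Finset.prod_ne_zero_iff.2 fun _ _ => X_ne_zero _))

variable [Fintype J]

section CharTwo

variable {R : Type*} [CommRing R] [CharP R 2]

theorem deriv_form (δ : Derivation ℤ R R) {x : Fin (n + 1) → R} (hx : ∀ i, δ (x i) = 0)
    (y : Option J → R) : δ (P.form x y) =
      P.mixedCoeff x * (y (some P.pivot) * δ (y none) + y none * δ (y (some P.pivot))) := by
  have hadjoin : ∀ a ∈ Algebra.adjoin ℤ (Set.range x), δ a = 0 :=
    Derivation.eqOn_adjoin (D2 := 0) (Set.forall_mem_range.2 hx)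
  have hmem : ∀ i, x i ∈ Algebra.adjoin ℤ (Set.range x) := fun i =>
    Algebra.subset_adjoin (Set.mem_range_self i)
  have hsq : ∀ o, δ (P.squareCoeff x o) = 0 := fun o => hadjoin _ <|
    mul_mem (mul_mem (prod_mem fun i _ => hmem _) (pow_mem (hmem _) _))
      (sum_mem fun i _ => pow_mem (hmem _) _)
  have hmixed : δ (P.mixedCoeff x) = 0 := hadjoin _ <|
    mul_mem (pow_mem (hmem _) _) (pow_mem (prod_mem fun i _ => hmem _) _)
  rw [form, map_add, map_sum, Finset.sum_eq_zero fun o _ => by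
    rw [δ.leibniz, hsq, deriv_sq_of_charTwo, smul_zero, smul_zero, add_zero]]
  simp only [δ.leibniz, hmixed, smul_eq_mul]
  ring

end CharTwo

variable (k : Type*) [Field k]

/-- The derivation `b ∂/∂x_j + (∂F/∂x_j) ∂/∂y_p`, where `F` is the special polynomial and `b` the
coefficient of its mixed term `y_p`. In characteristic two `b = ∂F/∂y_p`, so it kills `F`. -/
noncomputable def der (j : Fin n) :
    Derivation ℤ (MvPolynomial (Fin (n + 1) ⊕ J) k) (MvPolynomial (Fin (n + 1) ⊕ J) k) :=
  let b : MvPolynomial (Fin (n + 1) ⊕ J) k := P.mixedCoeff fun i => X (Sum.inl i)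
  intDerivation (b • pderiv (Sum.inl j.succ) +
    pderiv (Sum.inl j.succ) (P.poly k) • pderiv (Sum.inr P.pivot))

theorem der_apply (j : Fin n) (F : MvPolynomial (Fin (n + 1) ⊕ J) k) :
    P.der k j F = P.mixedCoeff (fun i => X (Sum.inl i)) * pderiv (Sum.inl j.succ) F +
      pderiv (Sum.inl j.succ) (P.poly k) * pderiv (Sum.inr P.pivot) F := rfl

theorem der_X_inl (j : Fin n) (i : Fin (n + 1)) : P.der k j (X (Sum.inl i)) =
    if i = j.succ then P.mixedCoeff (fun i => X (Sum.inl i)) else 0 := by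
  classical
  rw [der_apply, pderiv_X_of_ne (show (Sum.inl i : Fin (n + 1) ⊕ J) ≠ Sum.inr P.pivot by simp),
    mul_zero, add_zero, pderiv_X]
  simp [Pi.single_apply]

theorem der_C (j : Fin n) (c : k) : P.der k j (C c) = 0 := by
  rw [der_apply, pderiv_C, pderiv_C, mul_zero, mul_zero, add_zero]

/-- The matrix is diagonal, with entries `b / x_i`. -/
theorem dlogNondegenerate_X {L : Type*} [Field L] {φ : MvPolynomial (Fin (n + 1) ⊕ J) k →+* L}
    (hφ : Function.Injective φ) {D : Fin n → Derivation ℤ L L}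
    (hD : ∀ j F, D j (φ F) = φ (P.der k j F)) :
    DlogNondegenerate D fun i => φ (X (Sum.inl i)) := by
  have hX : ∀ i, φ (X (Sum.inl i)) ≠ 0 := fun i => (map_ne_zero_iff φ hφ).2 (X_ne_zero _)
  have hdiag : dlogMatrix D (affineCoord fun i => φ (X (Sum.inl i))) =
      Matrix.diagonal fun i =>
        φ (P.mixedCoeff fun i => X (Sum.inl i)) / φ (X (Sum.inl i.succ)) := by
    ext i j
    rw [dlogMatrix, Matrix.of_apply, dlog, affineCoord, derivation_div _ _ (hX 0), hD, hD,
      der_X_inl, der_X_inl, if_neg (Fin.succ_ne_zero j).symm, map_zero, mul_zero, sub_zero,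
      div_div_div_cancel_right₀ (hX 0), Matrix.diagonal_apply]
    simp only [Fin.succ_inj]
    split_ifs
    · rfl
    · rw [map_zero, zero_div]
  refine ⟨hX, ?_⟩
  rw [hdiag, Matrix.det_diagonal]
  exact Finset.prod_ne_zero_iff.2 fun i _ =>
    div_ne_zero ((map_ne_zero_iff φ hφ).2 (P.mixedCoeff_X_ne_zero k)) (hX _)

variable [CharP k 2]

theorem pderiv_pivot_poly :
    pderiv (Sum.inr P.pivot) (P.poly k) = P.mixedCoeff fun i => X (Sum.inl i) := by
  have := P.deriv_form (intDerivation (pderiv (R := k) (Sum.inr P.pivot)))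
    (x := fun i => X (Sum.inl i)) (fun i => pderiv_X_of_ne (by simp))
    fun o => o.elim 1 fun j => X (.inr j)
  simpa [intDerivation_apply, poly] using this

theorem der_poly (j : Fin n) : P.der k j (P.poly k) = 0 := by
  rw [der_apply, pderiv_pivot_poly, mul_comm, CharTwo.add_self_eq_zero]

end SpecialForm

end SpecialFormDerivation

section ConstantPoints
open Polynomial

variable {K : Type*} [Field K] {V : ValuationSubring K} {B O L : Type*} [CommRing B] [Algebra K B]
  [CommRing O] [Algebra V O] [Field L] {n : ℕ} {ι : O →+* B} {ρ : O →+* L}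
  {D : Fin n → Derivation ℤ L L}

theorem DlogNondegenerate.scaled_mul [IsDomain B] (h : IsPlace V ι ρ) {x : Fin (n + 1) → O}
    (hx : DlogNondegenerate D fun i => ρ (x i)) {g : B} (hg : g ≠ 0) :
    ScaledNondegenerate K ι ρ D fun i => g * ι (x i) := by
  obtain ⟨c, g', hg', hρ⟩ := h.exists_smul g hg
  refine ⟨c, fun i => g' * x i, fun i => by rw [map_mul, hg', smul_mul_assoc], fun i => ?_, ?_⟩
  · simp only [map_mul]
    exact mul_ne_zero hρ (hx.1 i)
  · have : affineCoord (fun i => ρ (g' * x i)) = affineCoord fun i => ρ (x i) :=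
      funext fun i => by simp only [affineCoord, map_mul, mul_div_mul_left _ _ hρ]
    rw [this]
    exact hx.2

/-- One of `α / β` and `β / α` lies in `V`. -/
theorem IsPlace.deriv_div_eq_zero (h : IsPlace V ι ρ) {δ : Derivation ℤ L L}
    (hδ : ∀ c : V, δ (ρ (algebraMap V O c)) = 0) {g : B} {α β : K} {a b : O}
    (ha : ι a = g * algebraMap K B α) (hb : ι b = g * algebraMap K B β) (hρa : ρ a ≠ 0)
    (hρb : ρ b ≠ 0) : δ (ρ a / ρ b) = 0 := by
  have hquot : ∀ {α β : K} {a b : O}, ι a = g * algebraMap K B α → ι b = g * algebraMap K B β →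
      ρ b ≠ 0 → α / β ∈ V → δ (ρ a / ρ b) = 0 := by
    intro α β a b ha hb hρb hmem
    have hβ : β ≠ 0 := by
      rintro rfl
      rw [map_zero, mul_zero, map_eq_zero_iff ι h.injective] at hb
      exact hρb (by rw [hb, map_zero])
    have hab : a = algebraMap V O ⟨α / β, hmem⟩ * b := h.injective <| by
      rw [map_mul, h.map_algebraMap, ha, hb, mul_left_comm, ← map_mul, div_mul_cancel₀ α hβ]
    rw [hab, map_mul, mul_div_cancel_right₀ _ hρb, hδ]
  rcases V.mem_or_inv_mem (α / β) with hmem | hmem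
  · exact hquot ha hb hρb hmem
  · rw [inv_div] at hmem
    rw [← inv_div, δ.leibniz_inv, hquot hb ha hρa hmem, smul_zero]

theorem IsPlace.not_scaledNondegenerate_mul_const (h : IsPlace V ι ρ) (hn : 0 < n)
    (hD : ∀ j (c : V), D j (ρ (algebraMap V O c)) = 0) (g : B) (κ : Fin (n + 1) → K) :
    ¬ ScaledNondegenerate K ι ρ D fun i => g * algebraMap K B (κ i) := by
  rintro ⟨c, b, hb, hne, hdet⟩
  have hb' : ∀ i, ι (b i) = c • g * algebraMap K B (κ i) := fun i => by
    rw [hb, smul_mul_assoc]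
  have hzero : dlogMatrix D (affineCoord fun i => ρ (b i)) = 0 := by
    ext i j
    rw [dlogMatrix, Matrix.of_apply, dlog, affineCoord,
      h.deriv_div_eq_zero (hD j) (hb' i.succ) (hb' 0) (hne _) (hne _), zero_div, Matrix.zero_apply]
  have : Nonempty (Fin n) := ⟨⟨0, hn⟩⟩
  exact hdet (by rw [hzero, Matrix.det_zero])

end ConstantPoints

/-! ### No curve joins the generic point to a constant point -/

section GenericPoint
open MvPolynomial

/-- The coordinate ring `A[x][s]/(s² - F)` of the affine double cover branched along `F = 0`. -/
abbrev DoubleCoverRing {σ A : Type*} [CommRing A] (F : MvPolynomial σ A) : Type _ :=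
  QuadraticAlgebra (MvPolynomial σ A) F 0

theorem algebraMap_doubleCoverRing_injective {σ A : Type*} [CommRing A] (F : MvPolynomial σ A) :
    Function.Injective (algebraMap (MvPolynomial σ A) (DoubleCoverRing F)) :=
  fun _ _ h => congrArg QuadraticAlgebra.re h

variable {n : ℕ} {J : Type*} [Fintype J] {P : SpecialForm n J}

theorem SpecialForm.isDomain_doubleCoverRing (P : SpecialForm n J) (k : Type*) [Field k]
    [CharP k 2] : IsDomain (DoubleCoverRing (P.poly k)) :=
  isDomain_quadratic (intDerivation (pderiv (R := k) (Sum.inr P.pivot))) <| by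
    rw [intDerivation_apply, pderiv_pivot_poly]
    exact P.mixedCoeff_X_ne_zero k

variable {K : Type*} [Field K] {V : ValuationSubring K}

namespace Degeneration

theorem isPlace_doubleCoverRing (G : Degeneration P V) :
    IsPlace V (quadraticMap (map V.subtype) (F := G.poly) rfl)
      (quadraticMap (map (IsLocalRing.residue V)) G.map_residue) :=
  ((IsPlace.subtype_residue V).mvPolynomial _).quadratic rfl G.map_residue

variable [CharP (IsLocalRing.ResidueField V) 2]

theorem isDomain_doubleCoverRing (G : Degeneration P V) :
    IsDomain (DoubleCoverRing (map V.subtype G.poly)) :=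
  have := P.isDomain_doubleCoverRing (IsLocalRing.ResidueField V)
  G.isPlace_doubleCoverRing.isDomain

/-- The derivations `P.der` extend to the function field `L` of the reduced double cover. -/
theorem exists_isPlace (G : Degeneration P V) (L : Type*) [Field L]
    [Algebra (DoubleCoverRing (P.poly (IsLocalRing.ResidueField V))) L]
    [IsFractionRing (DoubleCoverRing (P.poly (IsLocalRing.ResidueField V))) L] :
    ∃ (ρ : DoubleCoverRing G.poly →+* L) (D : Fin n → Derivation ℤ L L),
      CharP L 2 ∧ IsPlace V (quadraticMap (map V.subtype) (F := G.poly) rfl) ρ ∧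
      (∀ j (c : V), D j (ρ (algebraMap V _ c)) = 0) ∧
      DlogNondegenerate D fun i =>
        ρ (algebraMap (MvPolynomial (Fin (n + 1) ⊕ J) V) _ (X (Sum.inl i))) := by
  let k := IsLocalRing.ResidueField V
  let φ : MvPolynomial (Fin (n + 1) ⊕ J) k →+* L :=
    (algebraMap (DoubleCoverRing (P.poly k)) L).comp (algebraMap _ _)
  have hφ : Function.Injective φ :=
    (IsFractionRing.injective (DoubleCoverRing (P.poly k)) L).comp
      (algebraMap_doubleCoverRing_injective _)
  let D (j : Fin n) : Derivation ℤ L L := fracDer L (quadraticDer (P.der k j) (P.der_poly k j))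
  have hD : ∀ j F, D j (φ F) = φ (P.der k j F) := fun j F =>
    (fracDer_algebraMap _ _).trans <| congrArg _ <|
      QuadraticAlgebra.ext rfl (map_zero (P.der k j))
  let ρ : DoubleCoverRing G.poly →+* L := (algebraMap (DoubleCoverRing (P.poly k)) L).comp
    (quadraticMap (map (IsLocalRing.residue V)) G.map_residue)
  have hρ : ∀ F, ρ (algebraMap (MvPolynomial (Fin (n + 1) ⊕ J) V) _ F) =
      φ (map (IsLocalRing.residue V) F) := fun F =>
    congrArg (algebraMap (DoubleCoverRing (P.poly k)) L) <|
      QuadraticAlgebra.ext rfl (map_zero (map (IsLocalRing.residue V)))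
  refine ⟨ρ, D, charP_of_injective_ringHom (φ.comp C).injective 2,
    G.isPlace_doubleCoverRing.comp_injective _ (IsFractionRing.injective _ L), fun j c => ?_, ?_⟩
  · have hc : algebraMap V (DoubleCoverRing G.poly) c =
        algebraMap (MvPolynomial (Fin (n + 1) ⊕ J) V) _ (C c) := rfl
    rw [hc, hρ, hD, map_C, P.der_C, map_zero]
  · simp only [hρ, map_X]
    exact P.dlogNondegenerate_X k hφ hD

/-- The curve starts at the generic point for `u = 0` and ends at `κ` for `u = ∞`. -/
theorem coeff_ne_mul_const [IsAlgClosed K] (G : Degeneration P V) (hn : 0 < n)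
    {x : Fin (n + 1) → Polynomial (DoubleCoverRing (map V.subtype G.poly))}
    {y : Option J → Polynomial (DoubleCoverRing (map V.subtype G.poly))}
    {s : Polynomial (DoubleCoverRing (map V.subtype G.poly))} (hy : ∃ o, y o ≠ 0)
    (hs : s ^ 2 = G.form x y) {M : ℕ} (hM : ∀ i, (x i).natDegree ≤ M)
    (hMne : ∃ i, (x i).coeff M ≠ 0) {H : DoubleCoverRing (map V.subtype G.poly)} (hH : H ≠ 0)
    (h0 : ∀ i, (x i).coeff 0 = H * algebraMap (MvPolynomial (Fin (n + 1) ⊕ J) K) _ (X (Sum.inl i)))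
    (g : DoubleCoverRing (map V.subtype G.poly)) (κ : Fin (n + 1) → K) :
    ¬ ∀ i, (x i).coeff M = g * algebraMap K _ (κ i) := by
  intro hκ
  have := G.isDomain_doubleCoverRing
  have := P.isDomain_doubleCoverRing (IsLocalRing.ResidueField V)
  obtain ⟨ρ, D, _, hρ, hD, hX⟩ := G.exists_isPlace
    (FractionRing (DoubleCoverRing (P.poly (IsLocalRing.ResidueField V))))
  have hstart :
      ScaledNondegenerate K (quadraticMap (map V.subtype) rfl) ρ D fun i => (x i).coeff 0 := by
    convert hX.scaled_mul hρ hH using 2 with i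
    rw [h0]
    congr 1
    exact QuadraticAlgebra.ext (map_X _ _).symm (map_zero (map V.subtype)).symm
  have hend := hstart.coeff_of_coeff_zero hρ G hy hs hM hMne
  simp only [hκ] at hend
  exact hρ.not_scaledNondegenerate_mul_const hn hD g κ hend

end Degeneration

end GenericPoint

/-! ### The special form in the linear system -/

section Bidegree
open MvPolynomial

variable {n : ℕ} {J : Type*}

/-- The weights giving the bidegree of a polynomial in the two groups of variables. -/
def bidegree : Fin (n + 1) ⊕ J → ℕ × ℕ := Sum.elim (fun _ => (1, 0)) fun _ => (0, 1)

theorem weight_bidegree [Fintype J] (m : Fin (n + 1) ⊕ J →₀ ℕ) :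
    Finsupp.weight bidegree m = (∑ i, m (.inl i), ∑ j, m (.inr j)) := by
  rw [Finsupp.weight_apply, Finsupp.sum_fintype _ _ (by simp), Fintype.sum_sum_type]
  simp [bidegree, Prod.ext_iff, Prod.fst_sum, Prod.snd_sum]

namespace SpecialForm

variable (P : SpecialForm n J) (k : Type*) [CommSemiring k]

theorem isWeightedHomogeneous_squareCoeff (o : Option J) :
    IsWeightedHomogeneous bidegree
      (P.squareCoeff (fun i => (X (Sum.inl i) : MvPolynomial (Fin (n + 1) ⊕ J) k)) o)
      (2 * P.halfDegree o, 0) := by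
  have hX (i : Fin (n + 1)) : IsWeightedHomogeneous bidegree
      (X (Sum.inl i) : MvPolynomial (Fin (n + 1) ⊕ J) k) (1, 0) := isWeightedHomogeneous_X _ _ _
  convert ((IsWeightedHomogeneous.prod (P.supp o) (fun l => X (Sum.inl l.succ)) _
    fun l _ => hX l.succ).mul ((hX 0).pow (P.x0Exp o))).mul
    (IsWeightedHomogeneous.sum Finset.univ _ _ fun i _ => (hX i).pow (2 * P.e)) using 1
  · rfl
  · simp [← P.x0Exp_add o, add_comm (P.x0Exp o)]

theorem isWeightedHomogeneous_mixedCoeff :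
    IsWeightedHomogeneous bidegree
      (P.mixedCoeff fun i => (X (Sum.inl i) : MvPolynomial (Fin (n + 1) ⊕ J) k))
      (P.halfDegree (some P.pivot) + P.halfDegree none, 0) := by
  have hX (i : Fin (n + 1)) : IsWeightedHomogeneous bidegree
      (X (Sum.inl i) : MvPolynomial (Fin (n + 1) ⊕ J) k) (1, 0) := isWeightedHomogeneous_X _ _ _
  convert ((hX 0).pow P.mixedExp).mul ((IsWeightedHomogeneous.prod Finset.univ
    (fun l : Fin n => X (Sum.inl l.succ)) _ fun l _ => hX l.succ).pow 2) using 1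
  · rfl
  · simp [← P.mixedExp_add]

theorem degree_eq_of_coeff_poly_ne_zero [Fintype J] {q : ℕ} (hnone : P.halfDegree none = q)
    (hsome : ∀ j, P.halfDegree (some j) + 1 = q) {m : Fin (n + 1) ⊕ J →₀ ℕ}
    (hm : coeff m (P.poly k) ≠ 0) :
    ∑ i, m (.inl i) + ∑ j, m (.inr j) = 2 * q ∧ ∑ j, m (.inr j) ≤ 2 := by
  let S : Set (Fin (n + 1) ⊕ J →₀ ℕ) :=
    {m | ∑ i, m (.inl i) + ∑ j, m (.inr j) = 2 * q ∧ ∑ j, m (.inr j) ≤ 2}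
  have hmem : ∀ {F : MvPolynomial (Fin (n + 1) ⊕ J) k} {a b : ℕ},
      IsWeightedHomogeneous bidegree F (a, b) → a + b = 2 * q → b ≤ 2 →
      F ∈ restrictSupport k S := by
    intro F a b hF hab hb m hm
    have := hF (mem_support_iff.1 hm)
    rw [weight_bidegree, Prod.mk.injEq] at this
    rw [Set.mem_ofPred_eq, this.1, this.2]
    exact ⟨hab, hb⟩
  have hX (j : J) : IsWeightedHomogeneous bidegree
      (X (Sum.inr j) : MvPolynomial (Fin (n + 1) ⊕ J) k) (0, 1) := isWeightedHomogeneous_X _ _ _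
  refine (add_mem (sum_mem fun o _ => ?_) ?_ : P.poly k ∈ restrictSupport k S)
    (mem_support_iff.2 hm)
  · rcases o with _ | j
    · simp only [Option.elim_none, one_pow, mul_one]
      exact hmem (P.isWeightedHomogeneous_squareCoeff k none) (by rw [hnone]; rfl) (by lia)
    · exact hmem ((P.isWeightedHomogeneous_squareCoeff k (some j)).mul ((hX j).pow 2))
        (by have := hsome j; simp; lia) (by simp)
  · simp only [Option.elim_none, Option.elim_some, mul_one]
    exact hmem ((P.isWeightedHomogeneous_mixedCoeff k).mul (hX P.pivot))
      (by have := hsome P.pivot; simp; lia) (by simp)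

theorem map_poly [Fintype J] {k k' : Type*} [CommSemiring k] [CommSemiring k'] (φ : k →+* k') :
    map φ (P.poly k) = P.poly k' := by
  rw [poly, map_form, poly]
  congr 1
  · simp only [map_X]
  · funext o
    cases o <;> simp

end SpecialForm

end Bidegree

theorem exists_injective_nonempty {ι α : Type*} [Fintype ι] [Fintype α]
    (h : Fintype.card ι < 2 ^ Fintype.card α) :
    ∃ s : ι → Finset α, Function.Injective s ∧ ∀ i, (s i).Nonempty := by
  classical
  have hcard : Fintype.card {s : Finset α // s ≠ ∅} = 2 ^ Fintype.card α - 1 := by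
    rw [Fintype.card_subtype_compl]
    simp
  obtain ⟨f⟩ := Function.Embedding.nonempty_of_card_le (α := ι) (β := {s : Finset α // s ≠ ∅})
    (by lia)
  exact ⟨fun i => (f i).1, Subtype.val_injective.comp f.injective,
    fun i => Finset.nonempty_iff_ne_empty.2 (f i).2⟩

theorem SpecialForm.exists_halfDegree_eq {n : ℕ} {J : Type*} [Fintype J] (p : J)
    (hcard : Fintype.card J + 1 < 2 ^ n) {q : ℕ} (hq : 3 * n + 4 ≤ 2 * q) :
    ∃ P : SpecialForm n J, P.halfDegree none = q ∧ ∀ j, P.halfDegree (some j) + 1 = q := by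
  obtain ⟨s, hs, hne⟩ := exists_injective_nonempty (ι := Option J) (α := Fin n) (by simpa)
  refine ⟨{
    supp := s
    supp_injective := hs
    supp_nonempty := hne
    e := 2 * (n / 2) + 1
    odd_e := odd_two_mul_add_one _
    le_e := by lia
    halfDegree := fun o => o.elim q fun _ => q - 1
    le_halfDegree := by rintro (_ | j) <;> simp only [Option.elim_none, Option.elim_some] <;> lia
    pivot := p }, rfl, fun j => ?_⟩
  simp only [Option.elim_some]
  lia

/-! ### Very general members of the linear system -/

section VeryGeneral
open MvPolynomial

/-- The exponents of the monomials spanning the linear system. -/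
abbrev BranchExponent (n r d : ℕ) : Type :=
  {m : Fin (n + 1) ⊕ Fin r →₀ ℕ //
    (∑ i, m (Sum.inl i)) + (∑ j, m (Sum.inr j)) = d ∧ d - 2 ≤ ∑ i, m (Sum.inl i)}

variable {n r d : ℕ}

instance : Finite (BranchExponent n r d) := by
  refine Set.Finite.to_subtype ((Finsupp.finite_of_degree_le d).subset fun m hm => ?_)
  rw [Set.mem_ofPred_eq, Finsupp.degree_eq_sum, Fintype.sum_sum_type, hm.1]

noncomputable instance : Fintype (BranchExponent n r d) := Fintype.ofFinite _

/-- The member of the linear system with given coefficients, over an arbitrary ring. -/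
noncomputable def branchPoly {R : Type*} [CommSemiring R] (v : BranchExponent n r d → R) :
    MvPolynomial (Fin (n + 1) ⊕ Fin r) R :=
  ∑ m, monomial m.1 (v m)

section BranchPoly

variable {R S : Type*} [CommSemiring R] [CommSemiring S] (v : BranchExponent n r d → R)

theorem coeff_branchPoly (m : BranchExponent n r d) : coeff m.1 (branchPoly v) = v m := by
  classical
  rw [branchPoly, coeff_sum, Finset.sum_eq_single m, coeff_monomial, if_pos rfl]
  · exact fun m' _ hm' => by rw [coeff_monomial, if_neg fun h => hm' (Subtype.ext h)]
  · exact fun h => absurd (Finset.mem_univ m) h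

theorem exists_of_coeff_branchPoly_ne_zero {m : Fin (n + 1) ⊕ Fin r →₀ ℕ}
    (hm : coeff m (branchPoly v) ≠ 0) : ∃ m' : BranchExponent n r d, m'.1 = m := by
  classical
  rw [branchPoly, coeff_sum] at hm
  obtain ⟨m', -, hm'⟩ := Finset.exists_ne_zero_of_sum_ne_zero hm
  exact ⟨m', by_contra fun h => hm' (by rw [coeff_monomial, if_neg h])⟩

theorem map_branchPoly (φ : R →+* S) :
    map φ (branchPoly v) = branchPoly fun m => φ (v m) := by
  simp only [branchPoly, map_sum, map_monomial]

theorem branchPoly_coeff {F : MvPolynomial (Fin (n + 1) ⊕ Fin r) R}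
    (hF : ∀ m, coeff m F ≠ 0 →
      (∑ i, m (Sum.inl i)) + (∑ j, m (Sum.inr j)) = d ∧ d - 2 ≤ ∑ i, m (Sum.inl i)) :
    branchPoly (fun m : BranchExponent n r d => coeff m.1 F) = F := by
  ext m
  by_cases hm : (∑ i, m (Sum.inl i)) + (∑ j, m (Sum.inr j)) = d ∧ d - 2 ≤ ∑ i, m (Sum.inl i)
  · exact coeff_branchPoly _ ⟨m, hm⟩
  · rw [not_not.1 (mt (hF m) hm)]
    by_contra h
    obtain ⟨m', rfl⟩ := exists_of_coeff_branchPoly_ne_zero _ h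
    exact hm m'.2

end BranchPoly

/-- Evaluation of integer polynomials at the coefficients of `F`; it is injective if and only if
these coefficients are algebraically independent. -/
noncomputable def evalCoeff (F : BranchSpace n r d) : MvPolynomial (BranchExponent n r d) ℤ →+* ℂ :=
  eval₂Hom (Int.castRingHom ℂ) fun m => coeff m.1 F.1

theorem isAlgSubsetOn_evalCoeff_eq_zero (p : MvPolynomial (BranchExponent n r d) ℤ) :
    IsAlgSubsetOn (branchCoords n r d) {F | evalCoeff F p = 0} := by
  refine ⟨{fun F => evalCoeff F p}, Set.singleton_subset_iff.2 ?_, by ext; simp⟩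
  rw [SetLike.mem_coe]
  induction p using MvPolynomial.induction_on with
  | C a =>
    have hconst : (fun F : BranchSpace n r d => evalCoeff F (C a)) = algebraMap ℂ _ (a : ℂ) := by
      funext F
      simp [evalCoeff]
    rw [hconst]
    exact Subalgebra.algebraMap_mem _ _
  | add p q hp hq =>
    simp only [map_add]
    exact add_mem hp hq
  | mul_X p m hp =>
    simp only [map_mul]
    exact mul_mem hp (Algebra.subset_adjoin ⟨m.1, funext fun F => eval₂_X _ _ _⟩)

theorem exists_evalCoeff_ne_zero {p : MvPolynomial (BranchExponent n r d) ℤ} (hp : p ≠ 0) :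
    ∃ F : BranchSpace n r d, evalCoeff F p ≠ 0 := by
  obtain ⟨v, hv⟩ : ∃ v, eval v (map (Int.castRingHom ℂ) p) ≠ 0 := by
    by_contra! h
    refine hp (map_injective (Int.castRingHom ℂ) Int.cast_injective ?_)
    exact (MvPolynomial.funext fun v => by rw [h, map_zero]).trans (map_zero _).symm
  refine ⟨⟨branchPoly v, fun m hm => ?_⟩, ?_⟩
  · obtain ⟨m', rfl⟩ := exists_of_coeff_branchPoly_ne_zero v hm
    exact m'.2
  · simpa only [evalCoeff, coeff_branchPoly, eval_map, coe_eval₂Hom] using hv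

/-- There are only countably many algebraic relations over `ℤ` for the coefficients to satisfy. -/
theorem veryGenerallyOn_of_injective_evalCoeff {Q : BranchSpace n r d → Prop}
    (h : ∀ F, Function.Injective (evalCoeff F) → Q F) :
    VeryGenerallyOn (branchCoords n r d) Q := by
  have : Countable (MvPolynomial (BranchExponent n r d) ℤ) :=
    Cardinal.mk_le_aleph0_iff.1 (cardinalMk_le_max.trans (by simp))
  have : Nonempty {p : MvPolynomial (BranchExponent n r d) ℤ // p ≠ 0} := ⟨⟨1, one_ne_zero⟩⟩
  obtain ⟨p, hp⟩ := exists_surjective_nat {p : MvPolynomial (BranchExponent n r d) ℤ // p ≠ 0}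
  refine ⟨fun i => {F | evalCoeff F (p i).1 = 0},
    fun i => ⟨isAlgSubsetOn_evalCoeff_eq_zero _, fun huniv => ?_⟩,
    fun F hF => h F ((injective_iff_map_eq_zero _).2 fun f hf => ?_)⟩
  · obtain ⟨F, hF⟩ := exists_evalCoeff_ne_zero (p i).2
    exact hF (huniv.ge (Set.mem_univ F))
  · by_contra hf0
    obtain ⟨i, hi⟩ := hp ⟨f, hf0⟩
    exact hF i (by rw [Set.mem_ofPred_eq, hi, hf])

/-- A valuation ring containing the image of `f` and dominating it at the kernel of `ψ`. -/
theorem exists_valuationSubring_of_ringHom {A K k : Type*} [CommRing A] [Field K] [CommRing k]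
    [Nontrivial k] {f : A →+* K} (hf : Function.Injective f) (ψ : A →+* k) :
    ∃ (V : ValuationSubring K) (g : A →+* V), V.subtype.comp g = f ∧
      ∀ a, ψ a = 0 → IsLocalRing.residue V (g a) = 0 := by
  let e : A ≃+* f.range := RingEquiv.ofBijective f.rangeRestrict
    ⟨fun a b h => hf (congrArg Subtype.val h), f.rangeRestrict_surjective⟩
  obtain ⟨V, hfV, hV⟩ :=
    (RingHom.ker (ψ.comp e.symm.toRingHom)).image_subset_nonunits_valuationSubring
      (RingHom.ker_ne_top _)
  refine ⟨V, f.codRestrict V.toSubring fun a => hfV ⟨a, rfl⟩, rfl, fun a ha => ?_⟩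
  rw [IsLocalRing.residue_eq_zero_iff, ← V.coe_mem_nonunits_iff]
  refine hV ⟨e a, ?_, rfl⟩
  change ψ (e.symm (e a)) = 0
  rw [e.symm_apply_apply, ha]

/-- The valuation ring reduces the coefficients of `F` to those of the special form modulo `2`. -/
theorem exists_degeneration {F : BranchSpace n r d} (hF : Function.Injective (evalCoeff F))
    {P : SpecialForm n (Fin r)} {q : ℕ} (hd : d = 2 * q) (hnone : P.halfDegree none = q)
    (hsome : ∀ j, P.halfDegree (some j) + 1 = q) :
    ∃ (V : ValuationSubring ℂ) (G : Degeneration P V),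
      CharP (IsLocalRing.ResidueField V) 2 ∧ map V.subtype G.poly = F.1 := by
  have hP : ∀ m, coeff m (P.poly ℤ) ≠ 0 →
      (∑ i, m (Sum.inl i)) + (∑ j, m (Sum.inr j)) = d ∧ d - 2 ≤ ∑ i, m (Sum.inl i) := by
    intro m hm
    have := P.degree_eq_of_coeff_poly_ne_zero ℤ hnone hsome hm
    lia
  let ψ : MvPolynomial (BranchExponent n r d) ℤ →+* ZMod 2 :=
    eval₂Hom (Int.castRingHom _) fun m => ((coeff m.1 (P.poly ℤ) : ℤ) : ZMod 2)
  obtain ⟨V, g, hg, hres⟩ := exists_valuationSubring_of_ringHom hF ψ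
  have hchar : CharP (IsLocalRing.ResidueField V) 2 :=
    CharTwo.of_one_ne_zero_of_two_eq_zero one_ne_zero <| by
      simpa only [map_ofNat] using hres 2 (by rw [map_ofNat]; rfl)
  have hX : ∀ m, IsLocalRing.residue V (g (X m)) = (coeff m.1 (P.poly ℤ) : ℤ) := fun m => by
    have h := hres (X m - ((coeff m.1 (P.poly ℤ) : ℤ) : MvPolynomial (BranchExponent n r d) ℤ)) (by
      rw [map_sub, map_intCast, sub_eq_zero, eval₂Hom_X'])
    rwa [map_sub, map_sub, map_intCast, map_intCast, sub_eq_zero] at h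
  refine ⟨V, {
    poly := branchPoly fun m => g (X m)
    map_residue := ?_
    halfDegree := q
    degree_eq := fun m hm => ?_ }, hchar, ?_⟩
  · rw [map_branchPoly, ← P.map_poly (Int.castRingHom _), ← branchPoly_coeff hP, map_branchPoly]
    exact congrArg branchPoly (funext hX)
  · obtain ⟨m', rfl⟩ := exists_of_coeff_branchPoly_ne_zero _ hm
    have := m'.2
    lia
  · rw [map_branchPoly]
    conv_rhs => rw [← branchPoly_coeff F.2]
    congr 1
    funext m
    exact (RingHom.congr_fun hg (X m)).trans (eval₂_X _ _ _)

end VeryGeneral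

/-! ### Polynomial curves from stable rationality -/

theorem coeff_prod_sum_of_natDegree_le {ι A : Type*} [CommRing A] {s : Finset ι}
    {f : ι → Polynomial A} {N : ι → ℕ} (h : ∀ i ∈ s, (f i).natDegree ≤ N i) :
    (∏ i ∈ s, f i).coeff (∑ i ∈ s, N i) = ∏ i ∈ s, (f i).coeff (N i) := by
  classical
  induction s using Finset.induction_on with
  | empty => simp
  | insert a s ha ih =>
    have hs := fun i hi => h i (Finset.mem_insert_of_mem hi)
    rw [Finset.prod_insert ha, Finset.sum_insert ha, Finset.prod_insert ha,
      Polynomial.coeff_mul_add_eq_of_natDegree_le (h a (Finset.mem_insert_self _ _))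
        ((Polynomial.natDegree_prod_le _ _).trans (Finset.sum_le_sum hs)), ih hs]

section RestrictLine
open MvPolynomial

variable {k E σ : Type*} [CommRing k] [CommRing E] [Algebra k E]

/-- Restriction of polynomials to the line `u ↦ t + c u`. -/
noncomputable def restrictLine (t : σ → E) (c : σ → k) : MvPolynomial σ k →ₐ[k] Polynomial E :=
  aeval fun l => Polynomial.C (algebraMap k E (c l)) * Polynomial.X + Polynomial.C (t l)

variable (t : σ → E) (c : σ → k)

theorem coeff_zero_restrictLine (p : MvPolynomial σ k) :
    (restrictLine t c p).coeff 0 = aeval t p := by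
  have h : ((Polynomial.aeval (0 : E)).restrictScalars k).comp (restrictLine t c) = aeval t :=
    algHom_ext fun l => by simp [restrictLine]
  rw [Polynomial.coeff_zero_eq_aeval_zero]
  exact DFunLike.congr_fun h p

theorem restrictLine_monomial (m : σ →₀ ℕ) (a : k) :
    restrictLine t c (monomial m a) = Polynomial.C (algebraMap k E a) * ∏ l ∈ m.support,
      (Polynomial.C (algebraMap k E (c l)) * Polynomial.X + Polynomial.C (t l)) ^ m l := by
  rw [restrictLine, aeval_monomial, Polynomial.algebraMap_apply, Finsupp.prod]

theorem natDegree_line_pow_le (l : σ) (e : ℕ) :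
    ((Polynomial.C (algebraMap k E (c l)) * Polynomial.X + Polynomial.C (t l)) ^ e).natDegree ≤
      e := by
  simpa only [mul_one] using
    Polynomial.natDegree_pow_le_of_le e (Polynomial.natDegree_linear_le (R := E))

theorem natDegree_restrictLine_monomial_le (m : σ →₀ ℕ) (a : k) :
    (restrictLine t c (monomial m a)).natDegree ≤ m.degree := by
  rw [restrictLine_monomial, Finsupp.degree_apply]
  exact (Polynomial.natDegree_C_mul_le _ _).trans <| (Polynomial.natDegree_prod_le _ _).trans <|
    Finset.sum_le_sum fun l _ => natDegree_line_pow_le t c l (m l)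

theorem coeff_degree_restrictLine_monomial (m : σ →₀ ℕ) (a : k) :
    (restrictLine t c (monomial m a)).coeff m.degree =
      algebraMap k E (eval c (monomial m a)) := by
  have hpow (l : σ) : ((Polynomial.C (algebraMap k E (c l)) * Polynomial.X +
      Polynomial.C (t l)) ^ m l).coeff (m l) = algebraMap k E (c l ^ m l) := by
    have := Polynomial.coeff_pow_of_natDegree_le (m := m l)
      (Polynomial.natDegree_linear_le (a := algebraMap k E (c l)) (b := t l))
    rw [mul_one] at this
    rw [this]
    simp
  rw [restrictLine_monomial, Polynomial.coeff_C_mul, Finsupp.degree_apply,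
    coeff_prod_sum_of_natDegree_le fun l _ => natDegree_line_pow_le t c l (m l),
    eval_monomial, Finsupp.prod, map_mul, map_prod]
  simp only [hpow]

variable {p : MvPolynomial σ k} {M : ℕ}

theorem natDegree_restrictLine_le (hM : p.totalDegree ≤ M) :
    (restrictLine t c p).natDegree ≤ M := by
  rw [p.as_sum, map_sum]
  exact Polynomial.natDegree_sum_le_of_forall_le _ _ fun m hm =>
    (natDegree_restrictLine_monomial_le t c m _).trans ((le_totalDegree hm).trans hM)

theorem coeff_restrictLine (hM : p.totalDegree ≤ M) :
    (restrictLine t c p).coeff M = algebraMap k E (eval c (homogeneousComponent M p)) := by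
  conv_lhs => rw [p.as_sum]
  rw [map_sum, Polynomial.finsetSum_coeff, homogeneousComponent_apply, map_sum, map_sum,
    Finset.sum_filter]
  refine Finset.sum_congr rfl fun m hm => ?_
  split_ifs with h
  · rw [← h, coeff_degree_restrictLine_monomial]
  · exact Polynomial.coeff_eq_zero_of_natDegree_lt <|
      (natDegree_restrictLine_monomial_le t c m _).trans_lt <|
        lt_of_le_of_ne ((le_totalDegree hm).trans hM) h

theorem homogeneousComponent_totalDegree_ne_zero (hp : p ≠ 0) :
    homogeneousComponent p.totalDegree p ≠ 0 := by
  obtain ⟨m, hm, hdeg⟩ := Finset.exists_mem_eq_sup p.support (support_nonempty.2 hp)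
    fun m => m.sum fun _ e => e
  refine ne_zero_iff.2 ⟨m, ?_⟩
  rw [coeff_homogeneousComponent, if_pos (by rw [totalDegree, hdeg]; rfl)]
  exact mem_support_iff.1 hm

/-- The constant vector `κ` of the top homogeneous parts at a suitable direction `c`. -/
theorem exists_eval_homogeneousComponent_ne_zero [IsDomain k] [Infinite k] {T : Type*} [Finite T]
    {p : T → MvPolynomial σ k} (hp : ∃ i, p i ≠ 0) :
    ∃ (M : ℕ) (c : σ → k), (∀ i, (p i).totalDegree ≤ M) ∧
      ∃ i, eval c (homogeneousComponent M (p i)) ≠ 0 := by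
  obtain ⟨i₀, hi₀, hmax⟩ := Set.exists_max_image {i | p i ≠ 0} (fun i => (p i).totalDegree)
    (Set.toFinite _) hp
  obtain ⟨c, hc⟩ : ∃ c, eval c (homogeneousComponent (p i₀).totalDegree (p i₀)) ≠ 0 := by
    by_contra! h
    exact homogeneousComponent_totalDegree_ne_zero hi₀ (funext fun v => by rw [h, map_zero])
  refine ⟨_, c, fun i => ?_, i₀, hc⟩
  by_cases h : p i = 0
  · rw [h, totalDegree_zero]
    exact Nat.zero_le _
  · exact hmax i h

end RestrictLine

section SquareCurve
open MvPolynomial (aeval comp_aeval_apply)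

theorem aeval_mul_of_isHomogeneous {k A τ : Type*} [CommSemiring k] [CommSemiring A] [Algebra k A]
    {F : MvPolynomial τ k} {N : ℕ} (hF : F.IsHomogeneous N) (a : A) (x : τ → A) :
    aeval (fun i => a * x i) F = a ^ N * aeval x F := by
  simp only [MvPolynomial.aeval_def, MvPolynomial.eval₂_eq, Finset.mul_sum, mul_pow,
    Finset.prod_mul_distrib, Finset.prod_pow_eq_pow_sum]
  refine Finset.sum_congr rfl fun m hm => ?_
  rw [hF.degree_eq_sum_deg_support hm, ← Finsupp.degree_apply]
  ring

variable {k : Type*} [CommRing k]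

theorem exists_sq_eq_aeval_of_isFractionRing {A K τ : Type*} [CommRing A] [IsDomain A]
    [IsIntegrallyClosed A] [Field K] [Algebra A K] [IsFractionRing A K] [Algebra k A] [Algebra k K]
    [IsScalarTower k A K] [Finite τ] {F : MvPolynomial τ k} {q : ℕ} (hF : F.IsHomogeneous (2 * q))
    {x : τ → K} {s : K} (hs : s ^ 2 = aeval x F) :
    ∃ (b : A) (p : τ → A) (σ : A), b ≠ 0 ∧ σ ^ 2 = aeval p F ∧
      ∀ a, algebraMap A K (p a) = algebraMap A K b * x a := by
  obtain ⟨b, hb⟩ := IsLocalization.exist_integer_multiples_of_finite (nonZeroDivisors A) x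
  choose p hp using hb
  simp only [Algebra.smul_def] at hp
  have hsq : (algebraMap A K b ^ q * s) ^ 2 = algebraMap A K (aeval p F) := by
    rw [← MvPolynomial.aeval_algebraMap_apply,
      show algebraMap A K ∘ p = fun a => algebraMap A K b * x a from funext hp,
      aeval_mul_of_isHomogeneous hF, ← hs]
    ring
  obtain ⟨σ, hσ⟩ := IsIntegrallyClosed.exists_algebraMap_eq_of_isIntegral_pow (R := A) two_pos
    (hsq ▸ isIntegral_algebraMap)
  refine ⟨b, p, σ, nonZeroDivisors.ne_zero b.2, IsFractionRing.injective A K ?_, hp⟩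
  rw [map_pow, hσ, hsq]

/-- A polynomial curve over the `k`-algebra `A` on which `F` is a square. Its first coordinates,
those indexed by `σ`, run from a multiple `start • x` of the given point at `u = 0` to a multiple of
a constant vector `direction` at `u = ∞`, that is, in the coefficients of `u ^ degree`. -/
structure SquareCurve {σ J A : Type*} [CommRing A] [Algebra k A] (F : MvPolynomial (σ ⊕ J) k)
    (x : σ ⊕ J → A) where
  coord : σ ⊕ J → Polynomial A
  sqrt : Polynomial A
  sqrt_sq : sqrt ^ 2 = aeval coord F
  degree : ℕ
  natDegree_le : ∀ i, (coord (Sum.inl i)).natDegree ≤ degree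
  start : A
  start_ne_zero : start ≠ 0
  coeff_zero : ∀ i, (coord (Sum.inl i)).coeff 0 = start * x (Sum.inl i)
  scale : A
  scale_ne_zero : scale ≠ 0
  direction : σ → k
  exists_direction_ne_zero : ∃ i, direction i ≠ 0
  coeff_degree : ∀ i, (coord (Sum.inl i)).coeff degree = scale * algebraMap k A (direction i)

variable {σ J : Type*} {F : MvPolynomial (σ ⊕ J) k}

/-- The image of a curve under a homomorphism `φ` which does not kill its scalars. -/
noncomputable def SquareCurve.map {A B : Type*} [CommRing A] [Algebra k A] [CommRing B]
    [Algebra k B] {x : σ ⊕ J → A} (C : SquareCurve F x) (φ : A →ₐ[k] B) (hstart : φ C.start ≠ 0)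
    (hscale : φ C.scale ≠ 0) {y : σ ⊕ J → B} (hxy : ∀ a, φ (x a) = y a) : SquareCurve F y where
  coord a := Polynomial.mapAlgHom φ (C.coord a)
  sqrt := Polynomial.mapAlgHom φ C.sqrt
  sqrt_sq := by rw [← map_pow, C.sqrt_sq, comp_aeval_apply]
  degree := C.degree
  natDegree_le i := Polynomial.natDegree_map_le.trans (C.natDegree_le i)
  start := φ C.start
  start_ne_zero := hstart
  coeff_zero i := by
    rw [Polynomial.coe_mapAlgHom, Polynomial.coeff_map, C.coeff_zero, ← hxy]
    exact map_mul φ _ _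
  scale := φ C.scale
  scale_ne_zero := hscale
  direction := C.direction
  exists_direction_ne_zero := C.exists_direction_ne_zero
  coeff_degree i := by
    rw [Polynomial.coe_mapAlgHom, Polynomial.coeff_map, C.coeff_degree, ← φ.commutes]
    exact map_mul φ _ _

theorem exists_common_denominator_polynomial {ι A E : Type*} [Finite ι] [CommRing A] [CommRing E]
    [Algebra A E] (S : Submonoid A) [IsLocalization S E] (f : ι → Polynomial E) :
    ∃ b ∈ S, ∃ g : ι → Polynomial A,
      ∀ i, (g i).map (algebraMap A E) = Polynomial.C (algebraMap A E b) * f i := by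
  let := Polynomial.algebra A E
  have := Polynomial.isLocalization S E
  obtain ⟨⟨_, b, hb, rfl⟩, hbf⟩ :=
    IsLocalization.exist_integer_multiples_of_finite (S.map Polynomial.C) f
  choose g hg using hbf
  exact ⟨b, hb, g, fun i => (hg i).trans <| by rw [Algebra.smul_def]; simp⟩

theorem sq_C_pow_mul_eq_aeval {τ A E : Type*} {F : MvPolynomial τ k} [CommRing A] [CommRing E]
    [Algebra A E] [Algebra k A] [Algebra k E] [IsScalarTower k A E] {q : ℕ}
    (hF : F.IsHomogeneous (2 * (q + 1))) (hinj : Function.Injective (algebraMap A E))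
    {x : τ → Polynomial E} {s : Polynomial E} (hs : s ^ 2 = aeval x F) {b : A}
    {f : τ → Polynomial A} {g : Polynomial A}
    (hf : ∀ a, (f a).map (algebraMap A E) = Polynomial.C (algebraMap A E b) * x a)
    (hg : g.map (algebraMap A E) = Polynomial.C (algebraMap A E b) * s) :
    (Polynomial.C b ^ q * g) ^ 2 = aeval f F := by
  have hmap := comp_aeval_apply f (Polynomial.mapAlgHom (IsScalarTower.toAlgHom k A E)) F
  refine Polynomial.map_injective _ hinj (Eq.trans ?_ hmap.symm)
  change _ = aeval (fun a => (f a).map (algebraMap A E)) F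
  simp only [hf]
  rw [aeval_mul_of_isHomogeneous hF, ← hs, Polynomial.map_pow, Polynomial.map_mul, hg,
    Polynomial.map_pow, Polynomial.map_C]
  ring

theorem SquareCurve.exists_of_isFractionRing [Finite σ] [Finite J] {A E : Type*} [CommRing A]
    [IsDomain A] [Field E] [Algebra A E] [IsFractionRing A E] [Algebra k A] [Algebra k E]
    [IsScalarTower k A E] {q : ℕ} (hq : 0 < q) (hF : F.IsHomogeneous (2 * q)) {x : σ ⊕ J → A}
    (C : SquareCurve F fun a => algebraMap A E (x a)) : Nonempty (SquareCurve F x) := by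
  have hinj : Function.Injective (algebraMap A E) := IsFractionRing.injective A E
  obtain ⟨b, hb, f, hf⟩ := exists_common_denominator_polynomial (nonZeroDivisors A)
    (Sum.elim C.coord ![C.sqrt, Polynomial.C C.start, Polynomial.C C.scale])
  have hb₀ : algebraMap A E b ≠ 0 := (map_ne_zero_iff _ hinj).2 (nonZeroDivisors.ne_zero hb)
  have hcoord : ∀ a, (f (Sum.inl a)).map (algebraMap A E) =
      Polynomial.C (algebraMap A E b) * C.coord a := fun a => hf (Sum.inl a)
  have hcoeff : ∀ a j, algebraMap A E ((f (Sum.inl a)).coeff j) =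
      algebraMap A E b * (C.coord a).coeff j := fun a j => by
    rw [← Polynomial.coeff_map, hcoord, Polynomial.coeff_C_mul]
  have hstart : algebraMap A E ((f (Sum.inr 1)).coeff 0) = algebraMap A E b * C.start := by
    rw [← Polynomial.coeff_map, hf, Polynomial.coeff_C_mul]
    exact congrArg _ Polynomial.coeff_C_zero
  have hscale : algebraMap A E ((f (Sum.inr 2)).coeff 0) = algebraMap A E b * C.scale := by
    rw [← Polynomial.coeff_map, hf, Polynomial.coeff_C_mul]
    exact congrArg _ Polynomial.coeff_C_zero
  refine ⟨{
    coord := fun a => f (Sum.inl a)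
    sqrt := Polynomial.C b ^ (q - 1) * f (Sum.inr 0)
    sqrt_sq := ?_
    degree := C.degree
    natDegree_le := fun i => ?_
    start := (f (Sum.inr 1)).coeff 0
    start_ne_zero := fun h => mul_ne_zero hb₀ C.start_ne_zero (by rw [← hstart, h, map_zero])
    coeff_zero := fun i => hinj ?_
    scale := (f (Sum.inr 2)).coeff 0
    scale_ne_zero := fun h => mul_ne_zero hb₀ C.scale_ne_zero (by rw [← hscale, h, map_zero])
    direction := C.direction
    exists_direction_ne_zero := C.exists_direction_ne_zero
    coeff_degree := fun i => hinj ?_ }⟩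
  · obtain ⟨q, rfl⟩ := Nat.exists_eq_add_one.2 hq
    exact sq_C_pow_mul_eq_aeval hF hinj C.sqrt_sq hcoord (hf (Sum.inr 0))
  · rw [← Polynomial.natDegree_map_eq_of_injective hinj, hcoord]
    exact (Polynomial.natDegree_C_mul_le _ _).trans (C.natDegree_le i)
  · rw [hcoeff, C.coeff_zero, map_mul, hstart, mul_assoc]
  · rw [hcoeff, C.coeff_degree, map_mul, hscale, mul_assoc, ← IsScalarTower.algebraMap_apply]

end SquareCurve

section ExistsSquareCurve
open MvPolynomial (aeval comp_aeval_apply)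

variable {k σ J : Type*} [Field k] [Infinite k] [Finite σ] [Finite J] {F : MvPolynomial (σ ⊕ J) k}
  {q : ℕ}

/-- The curve is a general line in the affine space of which `E` is the function field. -/
theorem exists_squareCurve_of_algEquiv {E τ : Type*} [Field E] [Algebra k E]
    (hF : F.IsHomogeneous (2 * q)) {x : σ ⊕ J → E} {s : E} (hs : s ^ 2 = aeval x F)
    (hx : ∃ i, x (Sum.inl i) ≠ 0) (Ψ : E ≃ₐ[k] FractionRing (MvPolynomial τ k)) :
    Nonempty (SquareCurve F x) := by
  obtain ⟨b, p, r, hb, hr, hp⟩ := exists_sq_eq_aeval_of_isFractionRing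
    (A := MvPolynomial τ k) (x := fun a => Ψ (x a)) (s := Ψ s) hF <| by
      rw [← map_pow, hs]
      exact comp_aeval_apply x (Ψ : E →ₐ[k] FractionRing (MvPolynomial τ k)) F
  let ψ : MvPolynomial τ k →ₐ[k] E :=
    (Ψ.symm : FractionRing (MvPolynomial τ k) →ₐ[k] E).comp (IsScalarTower.toAlgHom k _ _)
  have hψ : Function.Injective ψ := Ψ.symm.injective.comp (IsFractionRing.injective _ _)
  have hψp : ∀ a, ψ (p a) = ψ b * x a := fun a => by
    change Ψ.symm (algebraMap _ _ (p a)) = Ψ.symm (algebraMap _ _ b) * x a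
    rw [hp, map_mul, Ψ.symm_apply_apply]
  have hψb : ψ b ≠ 0 := (map_ne_zero_iff ψ hψ).2 hb
  obtain ⟨M, c, hM, hc⟩ := exists_eval_homogeneousComponent_ne_zero
    (p := fun i => p (Sum.inl i)) <| hx.imp fun i hi h => mul_ne_zero hψb hi <| by
      rw [← hψp, h, map_zero]
  refine ⟨{
    coord := fun a => restrictLine (fun l => ψ (MvPolynomial.X l)) c (p a)
    sqrt := restrictLine (fun l => ψ (MvPolynomial.X l)) c r
    sqrt_sq := by rw [← map_pow, hr, comp_aeval_apply]
    degree := M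
    natDegree_le := fun i => natDegree_restrictLine_le _ _ (hM i)
    start := ψ b
    start_ne_zero := hψb
    coeff_zero := fun i => by
      rw [coeff_zero_restrictLine, ← hψp]
      exact (DFunLike.congr_fun (MvPolynomial.aeval_unique ψ) _).symm
    scale := 1
    scale_ne_zero := one_ne_zero
    direction := _
    exists_direction_ne_zero := hc
    coeff_degree := fun i => by rw [one_mul, coeff_restrictLine _ _ (hM i)] }⟩

/-- The auxiliary variables are specialised to elements of `R` at which no scalar vanishes. -/
theorem exists_squareCurve {R ι τ : Type*} [CommRing R] [IsDomain R] [Algebra k R]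
    (hq : 0 < q) (hF : F.IsHomogeneous (2 * q)) {x : σ ⊕ J → R} {s : R} (hs : s ^ 2 = aeval x F)
    (hx : ∃ i, x (Sum.inl i) ≠ 0)
    (Ψ : FractionRing (MvPolynomial ι R) ≃ₐ[k] FractionRing (MvPolynomial τ k)) :
    Nonempty (SquareCurve F x) := by
  let φ : R →ₐ[k] FractionRing (MvPolynomial ι R) := IsScalarTower.toAlgHom k R _
  have hφ : Function.Injective φ :=
    (IsFractionRing.injective (MvPolynomial ι R) _).comp (MvPolynomial.C_injective ι R)
  obtain ⟨C₁⟩ := exists_squareCurve_of_algEquiv hF (x := fun a => φ (x a)) (s := φ s)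
    (by rw [← map_pow, hs, comp_aeval_apply])
    (hx.imp fun i hi => (map_ne_zero_iff φ hφ).2 hi) Ψ
  obtain ⟨C₂⟩ := SquareCurve.exists_of_isFractionRing (A := MvPolynomial ι R)
    (x := fun a => MvPolynomial.C (x a)) hq hF C₁
  have : Infinite R := Infinite.of_injective _ (FaithfulSMul.algebraMap_injective k R)
  obtain ⟨z, hz⟩ : ∃ z, MvPolynomial.eval z (C₂.start * C₂.scale) ≠ 0 := by
    by_contra! h
    exact mul_ne_zero C₂.start_ne_zero C₂.scale_ne_zero
      (MvPolynomial.funext fun v => by rw [h, map_zero])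
  rw [map_mul] at hz
  exact ⟨C₂.map ((aeval (R := R) z).restrictScalars k) (left_ne_zero_of_mul hz)
    (right_ne_zero_of_mul hz) fun a => MvPolynomial.eval_C _⟩

end ExistsSquareCurve

/-! ### The cone over the double cover -/

section DoubleCover
open MvPolynomial

section Equiv

variable {σ A : Type*} [CommRing A] (F : MvPolynomial σ A)

theorem aeval_algebraMap_X_doubleCoverRing :
    aeval (fun a => algebraMap (MvPolynomial σ A) (DoubleCoverRing F) (X a)) =
      IsScalarTower.toAlgHom A (MvPolynomial σ A) (DoubleCoverRing F) :=
  algHom_ext fun a => aeval_X _ a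

theorem omega_sq : (QuadraticAlgebra.omega : DoubleCoverRing F) ^ 2 =
    aeval (fun a => algebraMap (MvPolynomial σ A) (DoubleCoverRing F) (X a)) F := by
  rw [aeval_algebraMap_X_doubleCoverRing, pow_two, QuadraticAlgebra.omega_mul_omega_eq_mk]
  rfl

/-- The comparison map `A[x, s] / (s² - F) → A[x] ⊕ A[x] √F`. -/
noncomputable def toDoubleCoverRing :
    (MvPolynomial (σ ⊕ Fin 1) A ⧸ Ideal.span {X (Sum.inr 0) ^ 2 - rename Sum.inl F}) →ₐ[A]
      DoubleCoverRing F :=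
  Ideal.Quotient.liftₐ _
    (aeval (Sum.elim (fun a => algebraMap (MvPolynomial σ A) _ (X a))
      fun _ => QuadraticAlgebra.omega)) fun _ hp => RingHom.mem_ker.1 <|
    (Ideal.span_singleton_le_iff_mem _).2 (RingHom.mem_ker.2 <| by
      rw [map_sub, map_pow, aeval_X, aeval_rename, sub_eq_zero]
      exact omega_sq F) hp

theorem toDoubleCoverRing_mk (p : MvPolynomial (σ ⊕ Fin 1) A) :
    toDoubleCoverRing F (Ideal.Quotient.mk _ p) =
      aeval (Sum.elim (fun a => algebraMap (MvPolynomial σ A) (DoubleCoverRing F) (X a))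
        fun _ => QuadraticAlgebra.omega) p :=
  rfl

theorem toDoubleCoverRing_mk_rename (p : MvPolynomial σ A) :
    toDoubleCoverRing F (Ideal.Quotient.mk _ (rename Sum.inl p)) = algebraMap _ _ p := by
  rw [toDoubleCoverRing_mk, aeval_rename]
  exact DFunLike.congr_fun (aeval_algebraMap_X_doubleCoverRing F) p

theorem toDoubleCoverRing_surjective : Function.Surjective (toDoubleCoverRing F) := fun z => by
  refine ⟨Ideal.Quotient.mk _ (rename Sum.inl z.re) +
    Ideal.Quotient.mk _ (rename Sum.inl z.im) * Ideal.Quotient.mk _ (X (Sum.inr 0)), ?_⟩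
  rw [map_add, map_mul, toDoubleCoverRing_mk_rename, toDoubleCoverRing_mk_rename,
    toDoubleCoverRing_mk, aeval_X]
  ext <;> simp

/-- The homomorphism `A[x] ⊕ A[x] √F → S` with given values of `x` and `√F`. -/
noncomputable def doubleCoverLift {S : Type*} [CommRing S] [Algebra A S] (x : σ → S) (s : S)
    (hs : s ^ 2 = aeval x F) : DoubleCoverRing F →ₐ[A] S :=
  let := (aeval (R := A) x).toRingHom.toAlgebra
  have : IsScalarTower A (MvPolynomial σ A) S :=
    .of_algebraMap_eq fun a => (aeval_C x a).symm
  (QuadraticAlgebra.lift ⟨s, by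
    rw [zero_smul, add_zero, Algebra.smul_def, mul_one, ← pow_two, hs]
    rfl⟩ : DoubleCoverRing F →ₐ[MvPolynomial σ A] S).restrictScalars A

theorem doubleCoverLift_apply {S : Type*} [CommRing S] [Algebra A S] {x : σ → S} {s : S}
    (hs : s ^ 2 = aeval x F) (z : DoubleCoverRing F) :
    doubleCoverLift F x s hs z = aeval x z.re + aeval x z.im * s := by
  let := (aeval (R := A) x).toRingHom.toAlgebra
  change z.re • 1 + z.im • s = _
  rw [Algebra.smul_def, Algebra.smul_def, mul_one]
  rfl

theorem toDoubleCoverRing_injective : Function.Injective (toDoubleCoverRing F) := by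
  let π : MvPolynomial (σ ⊕ Fin 1) A →ₐ[A] _ :=
    Ideal.Quotient.mkₐ A (Ideal.span {X (Sum.inr 0) ^ 2 - rename Sum.inl F})
  have hs : π (X (Sum.inr 0)) ^ 2 = aeval (fun a => π (X (Sum.inl a))) F := by
    rw [← comp_aeval_apply, ← map_pow]
    exact Ideal.Quotient.eq.2 (Ideal.subset_span (by rw [rename_eq_aeval]; rfl))
  have hinv : (doubleCoverLift F _ _ hs).comp (toDoubleCoverRing F) = AlgHom.id A _ := by
    refine Ideal.Quotient.algHom_ext _ (algHom_ext fun a => ?_)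
    change doubleCoverLift F _ _ hs (toDoubleCoverRing F (Ideal.Quotient.mk _ (X a))) = π (X a)
    rw [toDoubleCoverRing_mk, aeval_X, doubleCoverLift_apply]
    rcases a with a | a
    · simp
    · rw [Subsingleton.elim a 0]
      simp
  exact Function.LeftInverse.injective (g := doubleCoverLift F _ _ hs) (DFunLike.congr_fun hinv)

/-- The normal form `A[x, s] / (s² - F) ≃ A[x] ⊕ A[x] √F`. -/
noncomputable def doubleCoverEquiv :
    (MvPolynomial (σ ⊕ Fin 1) A ⧸ Ideal.span {X (Sum.inr 0) ^ 2 - rename Sum.inl F}) ≃ₐ[A]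
      DoubleCoverRing F :=
  .ofBijective (toDoubleCoverRing F) ⟨toDoubleCoverRing_injective F, toDoubleCoverRing_surjective F⟩

end Equiv

section Degeneration

variable {n : ℕ} {J : Type*} [Fintype J] {P : SpecialForm n J}
  {K : Type*} [Field K] {V : ValuationSubring K}

namespace Degeneration

theorem isHomogeneous_map_poly (G : Degeneration P V) {R : Type*} [CommRing R] (φ : V →+* R) :
    (map φ G.poly).IsHomogeneous (2 * G.halfDegree) := fun m hm => by
  have hm' : coeff m G.poly ≠ 0 := fun h => hm (by rw [coeff_map, h, map_zero])
  rw [← (G.degree_eq m hm').1, Finsupp.weight_apply, Finsupp.sum_fintype _ _ (by simp),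
    Fintype.sum_sum_type]
  simp

variable [CharP (IsLocalRing.ResidueField V) 2]

theorem halfDegree_pos (G : Degeneration P V) : 0 < G.halfDegree := by
  by_contra! h
  have hP := G.isHomogeneous_map_poly (IsLocalRing.residue V)
  rw [G.map_residue, Nat.le_zero.1 h, mul_zero] at hP
  refine P.mixedCoeff_X_ne_zero (IsLocalRing.ResidueField V) ?_
  rw [← P.pderiv_pivot_poly, totalDegree_eq_zero_iff_eq_C.1 (hP.totalDegree_le.antisymm zero_le),
    pderiv_C]

variable [IsAlgClosed K]

theorem isEmpty_squareCurve (G : Degeneration P V) (hn : 0 < n) :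
    IsEmpty (SquareCurve (map V.subtype G.poly) fun a =>
      algebraMap (MvPolynomial (Fin (n + 1) ⊕ J) K) (DoubleCoverRing (map V.subtype G.poly))
        (X a)) := by
  refine ⟨fun C => ?_⟩
  have := G.isDomain_doubleCoverRing
  refine G.coeff_ne_mul_const hn (x := fun i => C.coord (Sum.inl i))
    (y := fun o => o.elim 1 fun j => C.coord (Sum.inr j)) ⟨none, one_ne_zero⟩ (s := C.sqrt) ?_
    C.natDegree_le ?_ C.start_ne_zero C.coeff_zero C.scale C.direction C.coeff_degree
  · rw [C.sqrt_sq, form, homogEval₂_of_eq_one _ _ _ _ rfl, aeval_def, eval₂_map]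
    congr 1
    exact (Sum.elim_comp_inl_inr C.coord).symm
  · obtain ⟨i, hi⟩ := C.exists_direction_ne_zero
    refine ⟨i, ?_⟩
    rw [C.coeff_degree]
    exact mul_ne_zero C.scale_ne_zero <|
      (map_ne_zero_iff _ (FaithfulSMul.algebraMap_injective _ _)).2 hi

theorem isEmpty_algEquiv_fractionRing (G : Degeneration P V) (hn : 0 < n) (ι τ : Type*) :
    IsEmpty (FractionRing (MvPolynomial ι (DoubleCoverRing (map V.subtype G.poly))) ≃ₐ[K]
      FractionRing (MvPolynomial τ K)) := by
  refine ⟨fun Ψ => ?_⟩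
  have := G.isDomain_doubleCoverRing
  have : Infinite K := IsAlgClosed.instInfinite
  have hX : algebraMap (MvPolynomial (Fin (n + 1) ⊕ J) K)
      (DoubleCoverRing (map V.subtype G.poly)) (X (Sum.inl 0)) ≠ 0 :=
    (map_ne_zero_iff _ (algebraMap_doubleCoverRing_injective _)).2 (X_ne_zero _)
  obtain ⟨C⟩ := exists_squareCurve G.halfDegree_pos (G.isHomogeneous_map_poly V.subtype)
    (omega_sq _) ⟨0, hX⟩ Ψ
  exact (G.isEmpty_squareCurve hn).false C

end Degeneration

end Degeneration

theorem IsStablyRationalSpec.of_algEquiv {R S : Type*} [CommRing R] [Algebra ℂ R] [CommRing S]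
    [Algebra ℂ S] (h : IsStablyRationalSpec R) (e : R ≃ₐ[ℂ] S) : IsStablyRationalSpec S := by
  obtain ⟨m, d, ⟨Ψ⟩⟩ := h
  exact ⟨m, d, ⟨(IsFractionRing.algEquivOfAlgEquiv (mapAlgEquiv (Fin m) e.symm)).trans Ψ⟩⟩

theorem Degeneration.isDomain_and_not_isStablyRationalSpec {n r d : ℕ} {P : SpecialForm n (Fin r)}
    {V : ValuationSubring ℂ} [CharP (IsLocalRing.ResidueField V) 2] (G : Degeneration P V)
    (hn : 0 < n) {F : BranchSpace n r d} (hF : map V.subtype G.poly = F.1) :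
    IsDomain (DoubleCoverConeRing F) ∧ ¬ IsStablyRationalSpec (DoubleCoverConeRing F) := by
  let e : DoubleCoverConeRing F ≃ₐ[ℂ] DoubleCoverRing (map V.subtype G.poly) :=
    hF ▸ doubleCoverEquiv F.1
  have := G.isDomain_doubleCoverRing
  refine ⟨e.toMulEquiv.isDomain, fun h => ?_⟩
  obtain ⟨m, l, ⟨Ψ⟩⟩ := h.of_algEquiv e
  exact (G.isEmpty_algEquiv_fractionRing hn (Fin m) (Fin l)).false Ψ

end DoubleCover

theorem very_general_double_cover_not_stably_rational_general
    (n r : ℕ) (hr : 0 < r) (hr2 : r ≤ 2 ^ n - 2)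
    (d : ℕ) (hdeven : Even d) (hd : 3 * n + 4 ≤ d) :
    VeryGenerallyOn (branchCoords n r d) fun F =>
      IsDomain (DoubleCoverConeRing F) ∧ ¬ IsStablyRationalSpec (DoubleCoverConeRing F) := by
  obtain ⟨q, rfl⟩ := hdeven.exists_two_nsmul
  have hn : 0 < n := Nat.pos_of_ne_zero <| by
    rintro rfl
    omega
  obtain ⟨P, hnone, hsome⟩ := SpecialForm.exists_halfDegree_eq (n := n) (⟨0, hr⟩ : Fin r)
    (by rw [Fintype.card_fin]; omega) (q := q) hd
  refine veryGenerallyOn_of_injective_evalCoeff fun F hF => ?_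
  obtain ⟨V, G, _, hG⟩ := exists_degeneration hF rfl hnone hsome
  exact G.isDomain_and_not_isStablyRationalSpec hn hG

/-- **Corollary 7.4 (Schreieder).**  Let `n ≥ 2` and `r` be integers with
`2^{n-1} - 1 ≤ r ≤ 2ⁿ - 2`, and set `N = r + n`.  Then a double cover of `ℙᴺ` branched
along a very general complex hypersurface of even degree `d ≥ 2^{n+1} + 2n - 2` with
multiplicity `d - 2` along a fixed `(r-1)`-plane is not stably rational. -/
theorem very_general_double_cover_not_stably_rational
    (n r : ℕ) (hn : 2 ≤ n)
    (hr1 : 2^(n-1) - 1 ≤ r) (hr2 : r ≤ 2^n - 2)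
    (d : ℕ) (hdeven : Even d) (hd : 2^(n+1) + 2*n - 2 ≤ d) :
    VeryGenerallyOn (branchCoords n r d) fun F =>
      IsDomain (DoubleCoverConeRing F) ∧ ¬ IsStablyRationalSpec (DoubleCoverConeRing F) := by
  have hpow : n + 6 ≤ 2 ^ (n + 1) :=
    Nat.le_induction (by norm_num) (fun m _ hm => by rw [pow_succ]; lia) n hn
  have hr : 1 < 2 ^ (n - 1) := Nat.one_lt_two_pow (by lia)
  exact very_general_double_cover_not_stably_rational_general n r (by lia) hr2 d hdeven (by lia)
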